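/- arXiv:1311.4905 — 4 statements merged into one kernel-verified Lean document; each statement's English description precedes it below -/
import Mathlib

section
/- Fix integers j ≥ 1, k ≥ 1 and n ≥ 1. For every ε > 0 there exists Q such that for every prime power q ≥ Q and every finite field F_q with q elements, | q^{-n} · Σ_{f ∈ M_n} Λ_j(f)·Λ_k(f) − Σ_{d=1}^{n} (d^j − (d−1)^j)(d^k − (d−1)^k) | < ε. (That is, lim_{q→∞} q^{-n} Σ_{f ∈ M_n} Λ_j(f)Λ_k(f) = Σ_{d=1}^{n} (d^j−(d−1)^j)(d^k−(d−1)^k).) -/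
open Polynomial

/-- The von Mangoldt function on `F_q[T]`: `Λ(f) = deg P` if `f = c·P^k` with `c ≠ 0`,
`P` monic irreducible and `k ≥ 1`, and `Λ(f) = 0` otherwise. -/
noncomputable def polyVM {F : Type*} [Field F] (f : F[X]) : ℕ :=
  sSup {m : ℕ | ∃ (c : F) (P : F[X]) (k : ℕ),
    c ≠ 0 ∧ P.Monic ∧ Irreducible P ∧ 1 ≤ k ∧ f = C c * P ^ k ∧ m = P.natDegree}

/- The higher-order von Mangoldt functions: `Λ_0(f) = 1` iff `f` is a nonzero constant,
`Λ_1 = Λ`, and `Λ_j(f) = Σ'_{d ∣ f} Λ_{j-1}(d) Λ(f/d) + Λ_{j-1}(f)·deg f` for `j ≥ 2`,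
the sum being over monic divisors `d` of `f`. -/
open Classical in
noncomputable def polyVMJ {F : Type*} [Field F] : ℕ → F[X] → ℕ
  | 0 => fun f => if f ≠ 0 ∧ f.natDegree = 0 then 1 else 0
  | 1 => fun f => polyVM f
  | (j + 2) => fun f =>
      (∑ᶠ d ∈ {d : F[X] | d.Monic ∧ d ∣ f}, polyVMJ (j + 1) d * polyVM (f / d))
        + polyVMJ (j + 1) f * f.natDegree

namespace PVM

open UniqueFactorizationMonoid Finset

open scoped Classical

set_option linter.unusedSectionVars false

section

variable {F : Type} [Field F] [Fintype F]

lemma finite_monic (F : Type) [Field F] [Fintype F] (r : ℕ) :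
    {f : F[X] | f.Monic ∧ f.natDegree = r}.Finite := by
  have e : {f : F[X] // f.Monic ∧ f.natDegree = r} ≃ (Fin r → F) :=
    (monicEquivDegreeLT r).trans (degreeLTEquiv F r).toEquiv
  have : Finite {f : F[X] // f.Monic ∧ f.natDegree = r} := Finite.of_equiv _ e.symm
  exact Set.finite_coe_iff.1 this

/-- monic polynomials of degree `r` -/
noncomputable def M (F : Type) [Field F] [Fintype F] (r : ℕ) : Finset F[X] :=
  (finite_monic F r).toFinset

lemma mem_M {r : ℕ} {f : F[X]} : f ∈ M F r ↔ f.Monic ∧ f.natDegree = r := by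
  simp [M]

lemma card_M (r : ℕ) : (M F r).card = Fintype.card F ^ r := by
  have e : {f : F[X] // f.Monic ∧ f.natDegree = r} ≃ (Fin r → F) :=
    (monicEquivDegreeLT r).trans (degreeLTEquiv F r).toEquiv
  have e2 : (M F r) ≃ (Fin r → F) :=
    (Equiv.subtypeEquivRight (fun f => mem_M)).trans e
  have := Fintype.card_congr e2
  simpa using this

/-- pairs of monic polynomials with product `f` -/
noncomputable def dp (f : F[X]) : Finset (F[X] × F[X]) :=
  (((range (f.natDegree + 1)).biUnion (M F)) ×ˢ
    ((range (f.natDegree + 1)).biUnion (M F))).filter (fun p => p.1 * p.2 = f)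

lemma mem_dp {f : F[X]} {p : F[X] × F[X]} :
    p ∈ dp f ↔ p.1.Monic ∧ p.2.Monic ∧ p.1 * p.2 = f := by
  simp only [dp, mem_filter, mem_product, mem_biUnion, mem_range, mem_M]
  constructor
  · rintro ⟨⟨⟨_, _, h1, _⟩, ⟨_, _, h2, _⟩⟩, h⟩
    exact ⟨h1, h2, h⟩
  · rintro ⟨h1, h2, h⟩
    have := h1.natDegree_mul h2
    rw [h] at this
    exact ⟨⟨⟨_, by omega, h1, rfl⟩, ⟨_, by omega, h2, rfl⟩⟩, h⟩

lemma nf_prod {f : F[X]} (hf : f.Monic) : (normalizedFactors f).prod = f := by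
  rw [prod_normalizedFactors_eq hf.ne_zero, hf.normalize_eq_self]

lemma nf_monic {f P : F[X]} (hP : P ∈ normalizedFactors f) : P.Monic := by
  have h := irreducible_of_normalized_factor P hP
  rw [← normalize_eq_self_iff_monic h.ne_zero]
  exact normalize_normalized_factor P hP

lemma card_nf {f : F[X]} (hf : f.Monic) : (normalizedFactors f).card ≤ f.natDegree := by
  conv_rhs => rw [← nf_prod hf]
  rw [natDegree_multiset_prod_of_monic _ (fun P hP => nf_monic hP)]
  have := Multiset.card_nsmul_le_sum (s := (normalizedFactors f).map natDegree) (a := 1) (by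
    intro x hx
    obtain ⟨P, hP, rfl⟩ := Multiset.mem_map.1 hx
    exact (irreducible_of_normalized_factor P hP).natDegree_pos)
  simpa using this

lemma card_dp {f : F[X]} (hf : f.Monic) : (dp f).card ≤ 2 ^ f.natDegree := by
  have h : dp f ⊆ (normalizedFactors f).powerset.toFinset.image
      (fun s => (s.prod, (normalizedFactors f - s).prod)) := by
    rintro ⟨a, b⟩ hp
    obtain ⟨ha, hb, hab⟩ := mem_dp.1 hp
    simp only at ha hb hab
    rw [mem_image]
    have e : normalizedFactors f = normalizedFactors a + normalizedFactors b := by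
      rw [← hab, normalizedFactors_mul ha.ne_zero hb.ne_zero]
    refine ⟨normalizedFactors a, ?_, ?_⟩
    · rw [Multiset.mem_toFinset, Multiset.mem_powerset, e]
      exact Multiset.le_add_right _ _
    · rw [e, add_tsub_cancel_left, nf_prod ha, nf_prod hb]
  calc (dp f).card ≤ _ := card_le_card h
    _ ≤ _ := card_image_le
    _ ≤ _ := Multiset.toFinset_card_le _
    _ = 2 ^ (normalizedFactors f).card := Multiset.card_powerset _
    _ ≤ _ := Nat.pow_le_pow_right (by norm_num) (card_nf hf)

lemma sum_dp (n : ℕ) (g : F[X] → F[X] → ℤ) :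
    ∑ f ∈ M F n, ∑ p ∈ dp f, g p.1 p.2 =
      ∑ x ∈ antidiagonal n, ∑ a ∈ M F x.1, ∑ b ∈ M F x.2, g a b := by
  simp_rw [← sum_product', sum_sigma']
  refine sum_bij' (fun y _ => ⟨(y.2.1.natDegree, y.2.2.natDegree), y.2⟩)
    (fun y _ => ⟨y.2.1 * y.2.2, y.2⟩) ?_ ?_ ?_ ?_ ?_
  · rintro ⟨f, a, b⟩ h
    simp only [mem_sigma, mem_M, mem_dp, HasAntidiagonal.mem_antidiagonal, mem_product] at h ⊢
    obtain ⟨⟨hf, hn⟩, ha, hb, rfl⟩ := h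
    rw [ha.natDegree_mul hb] at hn
    exact ⟨hn, ⟨ha, by trivial⟩, hb, by trivial⟩
  · rintro ⟨⟨c, d⟩, a, b⟩ h
    simp only [mem_sigma, mem_M, mem_dp, HasAntidiagonal.mem_antidiagonal, mem_product] at h ⊢
    obtain ⟨hn, ⟨ha, rfl⟩, hb, rfl⟩ := h
    exact ⟨⟨ha.mul hb, by rw [ha.natDegree_mul hb, hn]⟩, ha, hb, by trivial⟩
  · rintro ⟨f, a, b⟩ h
    simp only [mem_sigma, mem_M, mem_dp] at h ⊢
    obtain ⟨⟨hf, hn⟩, ha, hb, rfl⟩ := h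
    rfl
  · rintro ⟨⟨c, d⟩, a, b⟩ h
    simp only [mem_sigma, mem_M, HasAntidiagonal.mem_antidiagonal, mem_product] at h ⊢
    obtain ⟨hn, ⟨ha, rfl⟩, hb, rfl⟩ := h
    rfl
  · intros; rfl

lemma dp_assoc (f : F[X]) (g : F[X] → F[X] → F[X] → ℤ) :
    ∑ p ∈ dp f, ∑ r ∈ dp p.1, g r.1 r.2 p.2 = ∑ p ∈ dp f, ∑ r ∈ dp p.2, g p.1 r.1 r.2 := by
  simp_rw [sum_sigma']
  refine sum_bij' (fun y _ => ⟨(y.2.1, y.2.2 * y.1.2), (y.2.2, y.1.2)⟩)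
    (fun y _ => ⟨(y.1.1 * y.2.1, y.2.2), (y.1.1, y.2.1)⟩) ?_ ?_ ?_ ?_ ?_
  · rintro ⟨⟨a, b⟩, c, d⟩ h
    simp only [mem_sigma, mem_dp] at h ⊢
    obtain ⟨⟨ha, hb, rfl⟩, hc, hd, rfl⟩ := h
    exact ⟨⟨hc, hd.mul hb, by ring⟩, hd, hb, by trivial⟩
  · rintro ⟨⟨a, b⟩, c, d⟩ h
    simp only [mem_sigma, mem_dp] at h ⊢
    obtain ⟨⟨ha, hb, rfl⟩, hc, hd, rfl⟩ := h
    exact ⟨⟨ha.mul hc, hd, by ring⟩, ha, hc, by trivial⟩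
  · rintro ⟨⟨a, b⟩, c, d⟩ h
    simp only [mem_sigma, mem_dp] at h ⊢
    obtain ⟨⟨ha, hb, rfl⟩, hc, hd, rfl⟩ := h
    rfl
  · rintro ⟨⟨a, b⟩, c, d⟩ h
    simp only [mem_sigma, mem_dp] at h ⊢
    obtain ⟨⟨ha, hb, rfl⟩, hc, hd, rfl⟩ := h
    rfl
  · intros; rfl

lemma dp_swap (f : F[X]) (g : F[X] → F[X] → ℤ) :
    ∑ p ∈ dp f, g p.1 p.2 = ∑ p ∈ dp f, g p.2 p.1 := by
  refine sum_bij' (fun y _ => y.swap) (fun y _ => y.swap) ?_ ?_ ?_ ?_ ?_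
  · rintro ⟨a, b⟩ h
    simp only [mem_dp, Prod.swap] at h ⊢
    exact ⟨h.2.1, h.1, by rw [mul_comm, h.2.2]⟩
  · rintro ⟨a, b⟩ h
    simp only [mem_dp, Prod.swap] at h ⊢
    exact ⟨h.2.1, h.1, by rw [mul_comm, h.2.2]⟩
  · intros; rfl
  · intros; rfl
  · intros; rfl

lemma monic_factor {f a : F[X]} (hf : f.Monic) (h : a ∣ f) :
    ∃ b, b.Monic ∧ Associated b a := by
  have ha : a ≠ 0 := fun h0 => hf.ne_zero (by rw [h0] at h; exact zero_dvd_iff.1 h)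
  exact ⟨normalize a, monic_normalize ha, normalize_associated a⟩

lemma exists_dp {f a : F[X]} (hf : f.Monic) (ha : a.Monic) (h : a ∣ f) :
    ∃ b, (a, b) ∈ dp f := by
  obtain ⟨b, rfl⟩ := h
  exact ⟨b, mem_dp.2 ⟨ha, ha.of_mul_monic_left hf, rfl⟩⟩

lemma dp_coprime {D E : F[X]} (hD : D.Monic) (hE : E.Monic) (h : IsRelPrime D E)
    (g : F[X] → F[X] → ℤ) :
    ∑ p ∈ dp (D * E), g p.1 p.2 =
      ∑ x ∈ dp D, ∑ y ∈ dp E, g (x.1 * y.1) (x.2 * y.2) := by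
  rw [← sum_product']
  symm
  refine sum_bij (fun z _ => (z.1.1 * z.2.1, z.1.2 * z.2.2)) ?_ ?_ ?_ ?_
  · rintro ⟨⟨a, b⟩, c, d⟩ h
    simp only [mem_product, mem_dp] at h ⊢
    obtain ⟨⟨ha, hb, rfl⟩, hc, hd, rfl⟩ := h
    exact ⟨ha.mul hc, hb.mul hd, by ring⟩
  · rintro ⟨⟨a, b⟩, c, d⟩ h1 ⟨⟨a', b'⟩, c', d'⟩ h2 he
    simp only [mem_product, mem_dp, Prod.mk.injEq] at h1 h2 he ⊢
    obtain ⟨⟨ha, hb, hab⟩, hc, hd, hcd⟩ := h1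
    obtain ⟨⟨ha', hb', hab'⟩, hc', hd', hcd'⟩ := h2
    have key : ∀ x y x' y' : F[X], x ∣ D → x' ∣ D → y ∣ E → y' ∣ E → x.Monic → x'.Monic →
        x * y = x' * y' → x = x' := by
      intro x y x' y' hx hx' hy hy' hm hm' e
      apply eq_of_monic_of_associated hm hm'
      apply associated_of_dvd_dvd
      · have : IsRelPrime x y' := (h.of_dvd_left hx).of_dvd_right hy'
        exact this.dvd_of_dvd_mul_right (e ▸ dvd_mul_right x y)
      · have : IsRelPrime x' y := (h.of_dvd_left hx').of_dvd_right hy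
        exact this.dvd_of_dvd_mul_right (e ▸ dvd_mul_right x' y')
    have e1 := key a c a' c' ⟨b, hab.symm⟩ ⟨b', hab'.symm⟩ ⟨d, hcd.symm⟩ ⟨d', hcd'.symm⟩ ha ha' he.1
    subst e1
    have e2 := mul_left_cancel₀ ha.ne_zero he.1
    subst e2
    exact ⟨⟨rfl, mul_left_cancel₀ ha.ne_zero (hab.trans hab'.symm)⟩, rfl,
      mul_left_cancel₀ hc.ne_zero (hcd.trans hcd'.symm)⟩
  · rintro ⟨a, b⟩ hp
    simp only [mem_dp] at hp
    obtain ⟨ha, hb, hab⟩ := hp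
    obtain ⟨u, v, hu, hv, huv⟩ := exists_dvd_and_dvd_of_dvd_mul (Dvd.intro _ hab)
    obtain ⟨u', hu', au⟩ := monic_factor hD hu
    obtain ⟨v', hv', av⟩ := monic_factor hE hv
    obtain ⟨s, hs⟩ := exists_dp hD hu' (au.dvd.trans hu)
    obtain ⟨t, ht⟩ := exists_dp hE hv' (av.dvd.trans hv)
    have e : u' * v' = a :=
      eq_of_monic_of_associated (hu'.mul hv') ha (huv ▸ au.mul_mul av)
    refine ⟨((u', s), (v', t)), mem_product.2 ⟨hs, ht⟩, ?_⟩
    simp only [Prod.mk.injEq]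
    refine ⟨e, mul_left_cancel₀ ha.ne_zero ?_⟩
    rw [hab, ← e, ← (mem_dp.1 hs).2.2, ← (mem_dp.1 ht).2.2]
    ring
  · intros; rfl

/-- Moebius function -/
noncomputable def mu (f : F[X]) : ℤ :=
  if Squarefree f then (-1) ^ (normalizedFactors f).card else 0

lemma mu_abs (f : F[X]) : |mu f| ≤ 1 := by
  unfold mu; split_ifs <;> simp

lemma mu_sq {f : F[X]} (h : Squarefree f) : mu f * mu f = 1 := by
  unfold mu; rw [if_pos h, ← mul_pow]; simp

lemma mu_mul {a b : F[X]} (h : Squarefree (a * b)) : mu (a * b) = mu a * mu b := by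
  have h0 := h.ne_zero
  have ha := h.squarefree_of_dvd (dvd_mul_right a b)
  have hb := h.squarefree_of_dvd (dvd_mul_left b a)
  unfold mu
  rw [if_pos h, if_pos ha, if_pos hb, normalizedFactors_mul ha.ne_zero hb.ne_zero,
    Multiset.card_add, pow_add]

lemma mu_irr {P : F[X]} (h : Irreducible P) : mu P = -1 := by
  unfold mu
  rw [if_pos h.squarefree, normalizedFactors_irreducible h]
  simp

lemma nf_finset_prod {T : Finset F[X]} (h : ∀ P ∈ T, P.Monic ∧ Irreducible P) :
    normalizedFactors (∏ P ∈ T, P) = T.val := by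
  induction T using Finset.induction_on with
  | empty => simp
  | insert P T hP ih =>
    have h1 := h P (mem_insert_self _ _)
    have h2 : ∀ Q ∈ T, Q.Monic ∧ Irreducible Q := fun Q hQ => h Q (mem_insert_of_mem hQ)
    rw [prod_insert hP, normalizedFactors_mul h1.2.ne_zero
      (prod_ne_zero_iff.2 fun Q hQ => (h2 Q hQ).2.ne_zero), ih h2,
      normalizedFactors_irreducible h1.2, h1.1.normalize_eq_self, insert_val_of_notMem hP]
    rfl

lemma mu_sum {f : F[X]} (hf : f.Monic) :
    ∑ p ∈ dp f, mu p.1 = if f = 1 then 1 else 0 := by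
  have hpf : ∀ P ∈ (normalizedFactors f).toFinset, P.Monic ∧ Irreducible P := fun P hP =>
    ⟨nf_monic (Multiset.mem_toFinset.1 hP),
      irreducible_of_normalized_factor P (Multiset.mem_toFinset.1 hP)⟩
  have h1 : ∑ p ∈ dp f, mu p.1 =
      ∑ T ∈ (normalizedFactors f).toFinset.powerset, (-1 : ℤ) ^ T.card := by
    have : ∑ p ∈ dp f, mu p.1 = ∑ p ∈ dp f with Squarefree p.1, mu p.1 := by
      rw [sum_filter]
      refine sum_congr rfl fun p _ => ?_
      unfold mu; split_ifs <;> rfl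
    rw [this]
    symm
    have hT : ∀ T ∈ (normalizedFactors f).toFinset.powerset,
        normalizedFactors (∏ P ∈ T, P) = T.val := fun T hT =>
      nf_finset_prod fun P hP => hpf P (mem_powerset.1 hT hP)
    have hd : ∀ T ∈ (normalizedFactors f).toFinset.powerset, (∏ P ∈ T, P) ∣ f := by
      intro T h
      conv_rhs => rw [← nf_prod hf]
      rw [prod_eq_multiset_prod, Multiset.map_id']
      apply Multiset.prod_dvd_prod_of_le
      exact (Multiset.le_iff_subset T.nodup).2 fun P hP =>
        Multiset.mem_toFinset.1 (mem_powerset.1 h hP)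
    have hm : ∀ T ∈ (normalizedFactors f).toFinset.powerset, (∏ P ∈ T, P).Monic := fun T hT =>
      monic_prod_of_monic _ _ fun P hP => (hpf P (mem_powerset.1 hT hP)).1
    refine sum_bij (fun T _ => (∏ P ∈ T, P, f / ∏ P ∈ T, P)) ?_ ?_ ?_ ?_
    · intro T h
      rw [mem_filter]
      obtain ⟨b, hb⟩ := exists_dp hf (hm T h) (hd T h)
      have hb' := (mem_dp.1 hb).2.2
      have : f / ∏ P ∈ T, P = b := by
        rw [← hb']; exact mul_div_cancel_left₀ _ (hm T h).ne_zero
      rw [this]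
      refine ⟨hb, ?_⟩
      rw [squarefree_iff_nodup_normalizedFactors (hm T h).ne_zero, hT T h]
      exact T.nodup
    · intro T h T' h' e
      have := congrArg (fun p : F[X] × F[X] => normalizedFactors p.1) e
      simp only [hT T h, hT T' h'] at this
      exact val_inj.1 this
    · rintro ⟨a, b⟩ h
      simp only [mem_filter, mem_dp] at h
      obtain ⟨⟨ha, hb, rfl⟩, hs⟩ := h
      have hn := (squarefree_iff_nodup_normalizedFactors ha.ne_zero).1 hs
      have e : ∏ P ∈ (normalizedFactors a).toFinset, P = a := by
        rw [prod_eq_multiset_prod, Multiset.map_id', Multiset.toFinset_val, hn.dedup, nf_prod ha]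
      refine ⟨(normalizedFactors a).toFinset, ?_, ?_⟩
      · rw [mem_powerset, normalizedFactors_mul ha.ne_zero hb.ne_zero]
        intro P hP
        simp only [Multiset.mem_toFinset, Multiset.mem_add] at hP ⊢
        exact Or.inl hP
      · simp only [e]
        rw [mul_div_cancel_left₀ _ ha.ne_zero]
    · intro T h
      have hs : Squarefree (∏ P ∈ T, P) := by
        rw [squarefree_iff_nodup_normalizedFactors (hm T h).ne_zero, hT T h]
        exact T.nodup
      simp only [mu, if_pos hs, hT T h]
      rfl
  rw [h1, sum_powerset_neg_one_pow_card]
  refine if_congr ?_ rfl rfl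
  constructor
  · intro h
    rw [← nf_prod hf, Multiset.toFinset_eq_empty.1 h, Multiset.prod_zero]
  · rintro rfl; simp

lemma vm_pow {P : F[X]} {k : ℕ} (hP : P.Monic) (hi : Irreducible P) (hk : 1 ≤ k) {c : F}
    (hc : c ≠ 0) : polyVM (C c * P ^ k) = P.natDegree := by
  have : {m : ℕ | ∃ (c' : F) (Q : F[X]) (l : ℕ),
      c' ≠ 0 ∧ Q.Monic ∧ Irreducible Q ∧ 1 ≤ l ∧ C c * P ^ k = C c' * Q ^ l ∧ m = Q.natDegree}
      = {P.natDegree} := by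
    ext m
    simp only [Set.mem_ofPred_eq, Set.mem_singleton_iff]
    constructor
    · rintro ⟨c', Q, l, hc', hQ, hQi, hl, he, rfl⟩
      have h1 : P ∣ C c' * Q ^ l := by
        rw [← he]; exact dvd_mul_of_dvd_right (dvd_pow_self P (by omega)) _
      have h2 : P ∣ Q := by
        rcases hi.prime.dvd_or_dvd h1 with h | h
        · exact absurd (isUnit_of_dvd_unit h (isUnit_C.2 (isUnit_iff_ne_zero.2 hc'))) hi.not_isUnit
        · exact hi.prime.dvd_of_dvd_pow h
      rw [eq_of_monic_of_associated hP hQ (hi.associated_of_dvd hQi h2)]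
    · rintro rfl
      exact ⟨c, P, k, hc, hP, hi, hk, rfl, rfl⟩
  unfold polyVM
  rw [this, csSup_singleton]

lemma vm_cases (f : F[X]) : polyVM f = 0 ∨ ∃ (c : F) (P : F[X]) (k : ℕ),
    c ≠ 0 ∧ P.Monic ∧ Irreducible P ∧ 1 ≤ k ∧ f = C c * P ^ k ∧ polyVM f = P.natDegree := by
  by_cases h : ∃ (c : F) (P : F[X]) (k : ℕ),
    c ≠ 0 ∧ P.Monic ∧ Irreducible P ∧ 1 ≤ k ∧ f = C c * P ^ k
  · obtain ⟨c, P, k, hc, hP, hi, hk, rfl⟩ := h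
    exact Or.inr ⟨c, P, k, hc, hP, hi, hk, rfl, vm_pow hP hi hk hc⟩
  · left
    have : {m : ℕ | ∃ (c : F) (P : F[X]) (k : ℕ),
      c ≠ 0 ∧ P.Monic ∧ Irreducible P ∧ 1 ≤ k ∧ f = C c * P ^ k ∧ m = P.natDegree} = ∅ := by
      ext m
      simp only [Set.mem_ofPred_eq, Set.mem_empty_iff_false, iff_false]
      rintro ⟨c, P, k, hc, hP, hi, hk, he, _⟩
      exact h ⟨c, P, k, hc, hP, hi, hk, he⟩
    unfold polyVM
    rw [this]; simp

lemma vm_le (f : F[X]) : polyVM f ≤ f.natDegree := by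
  rcases vm_cases f with h | ⟨c, P, k, hc, hP, hi, hk, hf, h⟩
  · omega
  · rw [h, hf, natDegree_C_mul hc, hP.natDegree_pow]
    exact Nat.le_mul_of_pos_left _ hk

lemma vm_irr {f : F[X]} (hf : f.Monic) (hi : Irreducible f) : polyVM f = f.natDegree := by
  have := vm_pow hf hi le_rfl (one_ne_zero (α := F))
  simpa using this

lemma vm_sqf {f : F[X]} (hf : f.Monic) (hs : Squarefree f) :
    polyVM f = if Irreducible f then f.natDegree else 0 := by
  split_ifs with hi
  · exact vm_irr hf hi
  · rcases vm_cases f with h | ⟨c, P, k, hc, hP, hPi, hk, he, h⟩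
    · exact h
    · exfalso
      have hk1 : k = 1 := by
        by_contra hne
        have : P * P ∣ f := by
          rw [he, ← sq]
          exact dvd_mul_of_dvd_right (pow_dvd_pow P (by omega)) _
        exact hPi.not_isUnit (hs P this)
      subst hk1
      apply hi
      rw [he, pow_one]
      exact (irreducible_isUnit_mul (isUnit_C.2 (isUnit_iff_ne_zero.2 hc))).2 hPi

lemma vm_sum {g : F[X]} (hg : g.Monic) (hs : Squarefree g) :
    ∑ p ∈ dp g, (polyVM p.1 : ℤ) = g.natDegree := by
  have h1 : ∑ p ∈ dp g, (polyVM p.1 : ℤ) =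
      ∑ p ∈ dp g with Irreducible p.1, (p.1.natDegree : ℤ) := by
    rw [sum_filter]
    refine sum_congr rfl fun p hp => ?_
    obtain ⟨h1, h2, h3⟩ := mem_dp.1 hp
    rw [vm_sqf h1 (hs.squarefree_of_dvd (Dvd.intro _ h3))]
    split_ifs <;> simp
  have h2 : ∑ p ∈ dp g with Irreducible p.1, (p.1.natDegree : ℤ) =
      ∑ P ∈ (normalizedFactors g).toFinset, (P.natDegree : ℤ) := by
    refine sum_bij (fun p _ => p.1) ?_ ?_ ?_ ?_
    · intro p hp
      obtain ⟨hp, hi⟩ := mem_filter.1 hp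
      obtain ⟨h1, h2, h3⟩ := mem_dp.1 hp
      rw [Multiset.mem_toFinset]
      obtain ⟨Q, hQ, hQa⟩ := exists_mem_normalizedFactors_of_dvd hg.ne_zero hi (Dvd.intro _ h3)
      rwa [eq_of_monic_of_associated h1 (nf_monic hQ) hQa]
    · rintro ⟨a, b⟩ h ⟨a', b'⟩ h' e
      obtain ⟨h1, h2, h3⟩ := mem_dp.1 (mem_filter.1 h).1
      obtain ⟨h1', h2', h3'⟩ := mem_dp.1 (mem_filter.1 h').1
      simp only at e h1 h2 h3 h3'
      subst e
      rw [mul_left_cancel₀ h1.ne_zero (h3.trans h3'.symm)]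
    · intro P hP
      rw [Multiset.mem_toFinset] at hP
      obtain ⟨b, hb⟩ := exists_dp hg (nf_monic hP) (dvd_of_mem_normalizedFactors hP)
      exact ⟨(P, b), mem_filter.2 ⟨hb, irreducible_of_normalized_factor P hP⟩, rfl⟩
    · intros; rfl
  rw [h1, h2]
  conv_rhs => rw [← nf_prod hg]
  rw [natDegree_multiset_prod_of_monic _ (fun P hP => nf_monic hP)]
  have hn := (squarefree_iff_nodup_normalizedFactors hg.ne_zero).1 hs
  rw [← Nat.cast_sum, sum_eq_multiset_sum, Multiset.toFinset_val, hn.dedup]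

lemma vmj_zero {f : F[X]} (hf : f.Monic) : polyVMJ 0 f = if f = 1 then 1 else 0 := by
  simp only [polyVMJ]
  refine if_congr ?_ rfl rfl
  constructor
  · rintro ⟨_, h⟩
    exact hf.natDegree_eq_zero.1 h
  · rintro rfl; simp

lemma vmj_succ (j : ℕ) {f : F[X]} (hf : f.Monic) :
    polyVMJ (j + 1) f = ∑ p ∈ dp f, polyVMJ j p.1 * polyVM p.2 + polyVMJ j f * f.natDegree := by
  cases j with
  | zero =>
    have h1 : ∑ p ∈ dp f, polyVMJ 0 p.1 * polyVM p.2 = polyVM f := by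
      rw [sum_eq_single (1, f)]
      · rw [vmj_zero monic_one]; simp
      · rintro ⟨a, b⟩ hp hne
        obtain ⟨h1, h2, h3⟩ := mem_dp.1 hp
        rw [vmj_zero h1, if_neg, zero_mul]
        rintro rfl
        simp only [one_mul] at h3
        exact hne (by rw [h3])
      · intro h
        have h1 : ((1 : F[X]), f) ∈ dp f := mem_dp.2 ⟨monic_one, hf, one_mul f⟩
        exact absurd h1 h
    rw [h1, vmj_zero hf]
    simp only [polyVMJ]
    split_ifs with h
    · subst h; simp
    · simp
  | succ j =>
    rw [polyVMJ]
    beta_reduce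
    congr 1
    have hfin : {d : F[X] | d.Monic ∧ d ∣ f} = ((dp f).image Prod.fst : Finset F[X]) := by
      ext d
      simp only [Set.mem_ofPred_eq, coe_image, Set.mem_image, mem_coe]
      constructor
      · rintro ⟨h1, h2⟩
        obtain ⟨b, hb⟩ := exists_dp hf h1 h2
        exact ⟨_, hb, rfl⟩
      · rintro ⟨p, hp, rfl⟩
        obtain ⟨h1, h2, h3⟩ := mem_dp.1 hp
        exact ⟨h1, Dvd.intro _ h3⟩
    rw [hfin, finsum_mem_coe_finset, sum_image]
    · refine sum_congr rfl fun p hp => ?_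
      obtain ⟨h1, h2, h3⟩ := mem_dp.1 hp
      have : f / p.1 = p.2 := by
        rw [← h3]; exact mul_div_cancel_left₀ _ h1.ne_zero
      rw [this]
    · rintro ⟨a, b⟩ h ⟨a', b'⟩ h' e
      obtain ⟨h1, h2, h3⟩ := mem_dp.1 h
      obtain ⟨h1', h2', h3'⟩ := mem_dp.1 h'
      simp only at e h1 h2 h3 h3'
      subst e
      rw [mul_left_cancel₀ h1.ne_zero (h3.trans h3'.symm)]

/-- Moebius transform of `deg ^ j` -/
noncomputable def h (j : ℕ) (f : F[X]) : ℤ := ∑ p ∈ dp f, mu p.1 * (p.2.natDegree : ℤ) ^ j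

lemma mu_vm {g : F[X]} (hg : g.Monic) (hs : Squarefree g) :
    ∑ p ∈ dp g, mu p.1 * (polyVM p.2 : ℤ) = - mu g * g.natDegree := by
  rw [dp_swap g (fun a b => mu a * (polyVM b : ℤ)), ← vm_sum hg hs, mul_sum]
  refine sum_congr rfl fun p hp => ?_
  obtain ⟨h1, h2, h3⟩ := mem_dp.1 hp
  have hs1 := hs.squarefree_of_dvd (Dvd.intro _ h3)
  rw [vm_sqf h1 hs1]
  split_ifs with hi
  · have := mu_mul (h3.symm ▸ hs)
    rw [h3, mu_irr hi] at this
    rw [this]; ring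
  · simp

lemma vmj_eq (j : ℕ) : ∀ {f : F[X]}, f.Monic → Squarefree f → (polyVMJ j f : ℤ) = h j f := by
  induction j with
  | zero =>
    intro f hf hs
    rw [vmj_zero hf]
    simp only [h, pow_zero, mul_one, mu_sum hf]
    push_cast; rfl
  | succ j ih =>
    intro f hf hs
    rw [vmj_succ j hf]
    push_cast
    have h1 : ∑ p ∈ dp f, (polyVMJ j p.1 : ℤ) * (polyVM p.2 : ℤ) =
        ∑ p ∈ dp f, (p.1.natDegree : ℤ) ^ j * (- mu p.2 * p.2.natDegree) := by
      calc _ = ∑ p ∈ dp f, ∑ r ∈ dp p.1,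
            ((r.1.natDegree : ℤ) ^ j * (mu r.2 * (polyVM p.2 : ℤ))) := by
            refine sum_congr rfl fun p hp => ?_
            obtain ⟨h1, h2, h3⟩ := mem_dp.1 hp
            rw [ih h1 (hs.squarefree_of_dvd (Dvd.intro _ h3)), h,
              dp_swap p.1 (fun a b => mu a * (b.natDegree : ℤ) ^ j), sum_mul]
            exact sum_congr rfl fun r _ => by ring
        _ = _ := dp_assoc f (fun a b c => (a.natDegree : ℤ) ^ j * (mu b * (polyVM c : ℤ)))
        _ = _ := by
            refine sum_congr rfl fun p hp => ?_
            obtain ⟨h1, h2, h3⟩ := mem_dp.1 hp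
            rw [← mul_sum, mu_vm h2 (hs.squarefree_of_dvd (Dvd.intro_left _ h3))]
    rw [h1, ih hf hs, h, h, dp_swap f (fun a b => mu a * (b.natDegree : ℤ) ^ j),
      dp_swap f (fun a b => mu a * (b.natDegree : ℤ) ^ (j + 1)), sum_mul, ← sum_add_distrib]
    refine sum_congr rfl fun p hp => ?_
    obtain ⟨h1, h2, h3⟩ := mem_dp.1 hp
    have : f.natDegree = p.1.natDegree + p.2.natDegree := by rw [← h3, h1.natDegree_mul h2]
    rw [this]; push_cast; ring

/-- the function summed in the main term -/
noncomputable def y (j k : ℕ) (f : F[X]) : ℤ :=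
  ∑ p ∈ dp f, (p.2.natDegree : ℤ) ^ j * ∑ x ∈ dp p.1, ∑ z ∈ dp p.2,
    mu z.1 * mu x.2 * ((x.2.natDegree : ℤ) + z.2.natDegree) ^ k

lemma h_mul_eq_y (j k : ℕ) {f : F[X]} (hs : Squarefree f) :
    h j f * h k f = y j k f := by
  unfold y
  conv_lhs => rw [h, sum_mul]
  refine sum_congr rfl fun p hp => ?_
  obtain ⟨h1, h2, h3⟩ := mem_dp.1 hp
  subst h3
  have hc := (squarefree_mul_iff.1 hs).1
  rw [h, dp_coprime h1 h2 hc (fun a b => mu a * (b.natDegree : ℤ) ^ k), mul_sum, mul_sum]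
  refine sum_congr rfl fun x hx => ?_
  rw [mul_sum, mul_sum]
  refine sum_congr rfl fun z hz => ?_
  obtain ⟨a1, a2, a3⟩ := mem_dp.1 hx
  obtain ⟨b1, b2, b3⟩ := mem_dp.1 hz
  have s1 : Squarefree p.1 := hs.squarefree_of_dvd (dvd_mul_right _ _)
  have s2 : Squarefree (x.1 * z.1) := hs.squarefree_of_dvd
    (mul_dvd_mul (Dvd.intro _ a3) (Dvd.intro _ b3))
  have s3 : Squarefree x.1 := s2.squarefree_of_dvd (dvd_mul_right _ _)
  have e1 : mu p.1 = mu x.1 * mu x.2 := by rw [← a3]; exact mu_mul (a3.symm ▸ s1)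
  rw [e1, mu_mul s2, a2.natDegree_mul b2]
  have := mu_sq s3
  push_cast
  linear_combination (mu x.2 * (p.2.natDegree : ℤ) ^ j * mu z.1 *
    ((x.2.natDegree : ℤ) + z.2.natDegree) ^ k) * this

/-- normalized sums of the Moebius function -/
def s (r : ℕ) : ℤ := if r = 0 then 1 else if r = 1 then -1 else 0

lemma mu_M_conv (r : ℕ) :
    ∑ x ∈ HasAntidiagonal.antidiagonal r, (∑ a ∈ M F x.1, mu a) * (Fintype.card F : ℤ) ^ x.2 =
      if r = 0 then 1 else 0 := by
  have h1 := sum_dp (F := F) r (fun a _ => mu a)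
  have h2 : ∑ f ∈ M F r, ∑ p ∈ dp f, mu p.1 = if r = 0 then 1 else 0 := by
    rw [sum_congr rfl (fun f hf => mu_sum (mem_M.1 hf).1), sum_ite_eq']
    refine if_congr ?_ rfl rfl
    rw [mem_M]
    simp [monic_one, eq_comm]
  rw [← h2, h1]
  refine sum_congr rfl fun x _ => ?_
  rw [sum_mul]
  refine sum_congr rfl fun a _ => ?_
  rw [sum_const, card_M, nsmul_eq_mul]
  push_cast; ring

lemma mu_M (r : ℕ) : ∑ a ∈ M F r, mu a = s r * (Fintype.card F : ℤ) ^ r := by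
  cases r with
  | zero =>
    have := mu_M_conv (F := F) 0
    simpa [s] using this
  | succ r =>
    have h1 := mu_M_conv (F := F) (r + 1)
    have h2 := mu_M_conv (F := F) r
    rw [Finset.Nat.sum_antidiagonal_succ'] at h1
    have h3 : ∑ p ∈ HasAntidiagonal.antidiagonal r,
        (∑ a ∈ M F p.1, mu a) * (Fintype.card F : ℤ) ^ (p.2 + 1) =
        (Fintype.card F : ℤ) * if r = 0 then 1 else 0 := by
      rw [← h2, mul_sum]
      exact sum_congr rfl fun p _ => by ring
    simp only [h3] at h1
    rw [if_neg (Nat.succ_ne_zero r)] at h1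
    simp only [pow_zero, mul_one] at h1
    by_cases hr : r = 0
    · subst hr
      simp [s] at h1 ⊢
      linarith
    · simp [s, hr] at h1 ⊢
      exact h1

/-- the main term -/
def R (j k n : ℕ) : ℤ :=
  ∑ x ∈ HasAntidiagonal.antidiagonal n, (x.2 : ℤ) ^ j *
    ∑ u ∈ HasAntidiagonal.antidiagonal x.1, ∑ v ∈ HasAntidiagonal.antidiagonal x.2,
      s v.1 * s u.2 * ((u.2 : ℤ) + v.2) ^ k

lemma sum_y (j k n : ℕ) :
    ∑ f ∈ M F n, y j k f = (Fintype.card F : ℤ) ^ n * R j k n := by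
  unfold y R
  rw [sum_dp n (fun a b => (b.natDegree : ℤ) ^ j * ∑ x ∈ dp a, ∑ z ∈ dp b,
    mu z.1 * mu x.2 * ((x.2.natDegree : ℤ) + z.2.natDegree) ^ k), mul_sum]
  refine sum_congr rfl fun x hx => ?_
  rw [HasAntidiagonal.mem_antidiagonal] at hx
  have e1 : ∀ a : F[X], ∑ b ∈ M F x.2, (b.natDegree : ℤ) ^ j * ∑ x ∈ dp a, ∑ z ∈ dp b,
      mu z.1 * mu x.2 * ((x.2.natDegree : ℤ) + z.2.natDegree) ^ k =
      ∑ p ∈ dp a, (x.2 : ℤ) ^ j * ∑ v ∈ HasAntidiagonal.antidiagonal x.2, ∑ c ∈ M F v.1, ∑ d ∈ M F v.2,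
        mu c * mu p.2 * ((p.2.natDegree : ℤ) + d.natDegree) ^ k := by
    intro a
    rw [← mul_sum]
    have e0 : ∑ p ∈ dp a, ∑ v ∈ HasAntidiagonal.antidiagonal x.2, ∑ c ∈ M F v.1, ∑ d ∈ M F v.2,
        mu c * mu p.2 * ((p.2.natDegree : ℤ) + d.natDegree) ^ k =
        ∑ b ∈ M F x.2, ∑ p ∈ dp a, ∑ z ∈ dp b,
          mu z.1 * mu p.2 * ((p.2.natDegree : ℤ) + z.2.natDegree) ^ k := by
      rw [sum_comm (s := M F x.2)]
      exact sum_congr rfl fun p _ => (sum_dp x.2 (fun c d =>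
        mu c * mu p.2 * ((p.2.natDegree : ℤ) + d.natDegree) ^ k)).symm
    rw [e0, mul_sum]
    exact sum_congr rfl fun b hb => by rw [(mem_M.1 hb).2]
  rw [sum_congr rfl (fun a _ => e1 a), sum_dp x.1 (fun _ p2 => (x.2 : ℤ) ^ j *
    ∑ v ∈ HasAntidiagonal.antidiagonal x.2, ∑ c ∈ M F v.1, ∑ d ∈ M F v.2,
        mu c * mu p2 * ((p2.natDegree : ℤ) + d.natDegree) ^ k)]
  simp only [mul_sum]
  refine sum_congr rfl fun u hu => ?_
  rw [HasAntidiagonal.mem_antidiagonal] at hu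
  have e2 : ∀ v ∈ HasAntidiagonal.antidiagonal x.2, ∀ b ∈ M F u.2,
      ∑ c ∈ M F v.1, ∑ d ∈ M F v.2,
        (x.2 : ℤ) ^ j * (mu c * mu b * ((b.natDegree : ℤ) + d.natDegree) ^ k) =
      (x.2 : ℤ) ^ j * (s v.1 * (Fintype.card F : ℤ) ^ v.1 * mu b * ((u.2 : ℤ) + v.2) ^ k *
        (Fintype.card F : ℤ) ^ v.2) := by
    intro v hv b hb
    rw [← mu_M, sum_mul, sum_mul, sum_mul, mul_sum]
    refine sum_congr rfl fun c _ => ?_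
    have : ∀ d ∈ M F v.2, (x.2 : ℤ) ^ j * (mu c * mu b * ((b.natDegree : ℤ) + d.natDegree) ^ k) =
      (x.2 : ℤ) ^ j * (mu c * mu b * ((u.2 : ℤ) + v.2) ^ k) := by
      intro d hd
      rw [(mem_M.1 hd).2, (mem_M.1 hb).2]
    rw [sum_congr rfl this, sum_const, card_M, nsmul_eq_mul]
    push_cast; ring
  rw [sum_const, card_M, nsmul_eq_mul, sum_comm, mul_sum]
  refine sum_congr rfl fun v hv => ?_
  rw [sum_congr rfl (fun b hb => e2 v hv b hb)]
  rw [HasAntidiagonal.mem_antidiagonal] at hv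
  have e3 : ∑ b ∈ M F u.2, (x.2 : ℤ) ^ j * (s v.1 * (Fintype.card F : ℤ) ^ v.1 * mu b *
      ((u.2 : ℤ) + v.2) ^ k * (Fintype.card F : ℤ) ^ v.2) =
      (x.2 : ℤ) ^ j * (s v.1 * (Fintype.card F : ℤ) ^ v.1 * (∑ b ∈ M F u.2, mu b) *
      ((u.2 : ℤ) + v.2) ^ k * (Fintype.card F : ℤ) ^ v.2) := by
    simp only [mul_sum, sum_mul]
  rw [e3, mu_M, ← hx, ← hu, ← hv]
  push_cast
  ring

lemma s_conv (m : ℕ) (φ : ℕ → ℕ → ℤ) :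
    ∑ v ∈ HasAntidiagonal.antidiagonal (m + 1), s v.1 * φ v.1 v.2 = φ 0 (m + 1) - φ 1 m := by
  rw [Finset.Nat.sum_antidiagonal_succ]
  cases m with
  | zero => simp [s]; ring
  | succ m =>
    rw [Finset.Nat.sum_antidiagonal_succ]
    simp [s]
    ring

lemma s_conv' (m : ℕ) (φ : ℕ → ℕ → ℤ) :
    ∑ v ∈ HasAntidiagonal.antidiagonal (m + 1), s v.2 * φ v.1 v.2 = φ (m + 1) 0 - φ m 1 := by
  rw [← Finset.Nat.sum_antidiagonal_swap]
  exact s_conv m (fun a b => φ b a)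

lemma abel (j : ℕ) (hj : 1 ≤ j) (w : ℤ → ℤ) (n : ℕ) :
    (n : ℤ) ^ j * w n + ∑ d ∈ range n, (d : ℤ) ^ j * (w d - w (d + 1)) =
      ∑ d ∈ range n, (((d : ℤ) + 1) ^ j - (d : ℤ) ^ j) * w (d + 1) := by
  induction n with
  | zero => simp; left; omega
  | succ n ih =>
    rw [sum_range_succ, sum_range_succ, ← ih]
    push_cast
    ring

lemma R_eq (j k n : ℕ) (hj : 1 ≤ j) (hn : 1 ≤ n) :
    R j k n = ∑ d ∈ range n, (((d : ℤ) + 1) ^ j - (d : ℤ) ^ j) *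
      (((d : ℤ) + 1) ^ k - (d : ℤ) ^ k) := by
  obtain ⟨m, rfl⟩ : ∃ m, n = m + 1 := ⟨n - 1, by omega⟩
  have key := abel j hj (fun d => d ^ k - (d - 1) ^ k) (m + 1)
  simp only [add_sub_cancel_right] at key
  rw [← key]
  unfold R
  rw [Finset.Nat.sum_antidiagonal_succ]
  congr 1
  · simp only [Finset.Nat.antidiagonal_zero, sum_singleton]
    have : ∀ v ∈ HasAntidiagonal.antidiagonal (m + 1),
      s v.1 * s 0 * (((0 : ℕ) : ℤ) + v.2) ^ k = s v.1 * (v.2 : ℤ) ^ k := by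
      intro v _; simp [s]
    rw [sum_congr rfl this, s_conv m (fun _ b => (b : ℤ) ^ k)]
    push_cast
    simp
  · have : ∀ x ∈ HasAntidiagonal.antidiagonal m, ((x.2 : ℤ) ^ j *
      ∑ u ∈ HasAntidiagonal.antidiagonal (x.1 + 1), ∑ v ∈ HasAntidiagonal.antidiagonal x.2,
        s v.1 * s u.2 * ((u.2 : ℤ) + v.2) ^ k) =
        (x.2 : ℤ) ^ j * ((x.2 : ℤ) ^ k - ((x.2 : ℤ) - 1) ^ k - (((x.2 : ℤ) + 1) ^ k - (x.2 : ℤ) ^ k)) := by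
      rintro ⟨e, d⟩ _
      simp only
      cases d with
      | zero =>
        have : ((0 : ℕ) : ℤ) ^ j = 0 := by simp; omega
        rw [this]; simp
      | succ d =>
        congr 1
        have e1 : ∀ u : ℕ × ℕ, ∑ v ∈ HasAntidiagonal.antidiagonal (d + 1),
          s v.1 * s u.2 * ((u.2 : ℤ) + v.2) ^ k =
            s u.2 * (((u.2 : ℤ) + (d + 1)) ^ k - ((u.2 : ℤ) + d) ^ k) := by
          intro u
          have := s_conv d (fun _ b => s u.2 * ((u.2 : ℤ) + b) ^ k)
          simp only [← mul_assoc] at this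
          rw [this]; push_cast; ring
        rw [sum_congr rfl (fun u _ => e1 u), s_conv' e (fun _ b =>
          (((b : ℤ) + (d + 1)) ^ k - ((b : ℤ) + d) ^ k))]
        push_cast
        ring
    rw [sum_congr rfl this, ← Finset.Nat.sum_antidiagonal_swap,
      Finset.Nat.sum_antidiagonal_eq_sum_range_succ_mk]
    simp

lemma card_nsqf (n : ℕ) :
    Fintype.card F * ((M F n).filter (fun f => ¬ Squarefree f)).card ≤
      n * Fintype.card F ^ n := by
  have hq : 1 ≤ Fintype.card F := Fintype.card_pos
  have hsub : (M F n).filter (fun f => ¬ Squarefree f) ⊆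
      ((Icc 1 n).filter (fun i => 2 * i ≤ n)).biUnion (fun i =>
        (M F i ×ˢ M F (n - 2 * i)).image (fun p => p.1 * p.1 * p.2)) := by
    intro f hf
    obtain ⟨hf, hs⟩ := mem_filter.1 hf
    obtain ⟨hm, hd⟩ := mem_M.1 hf
    unfold Squarefree at hs
    push Not at hs
    obtain ⟨x, hx, hu⟩ := hs
    obtain ⟨b, hb, hba⟩ := monic_factor hm ((dvd_mul_right x x).trans hx)
    have hbu : ¬ IsUnit b := fun h' => hu (hba.isUnit h')
    obtain ⟨c, hc⟩ := (mul_dvd_mul hba.dvd hba.dvd).trans hx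
    have hcm : c.Monic := (hb.mul hb).of_mul_monic_left (hc ▸ hm)
    have hdeg : n = b.natDegree + b.natDegree + c.natDegree := by
      rw [← hd, hc, (hb.mul hb).natDegree_mul hcm, hb.natDegree_mul hb]
    have hpos : b.natDegree ≠ 0 := fun h0 => hbu (by rw [hb.natDegree_eq_zero.1 h0]; exact isUnit_one)
    rw [mem_biUnion]
    refine ⟨b.natDegree, ?_, ?_⟩
    · rw [mem_filter, mem_Icc]; omega
    · rw [mem_image]
      refine ⟨(b, c), ?_, hc.symm⟩
      rw [mem_product, mem_M, mem_M]
      exact ⟨⟨hb, rfl⟩, hcm, by simp only; omega⟩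
  calc _ ≤ Fintype.card F * ∑ i ∈ (Icc 1 n).filter (fun i => 2 * i ≤ n),
        Fintype.card F ^ i * Fintype.card F ^ (n - 2 * i) := by
        apply Nat.mul_le_mul_left
        refine (card_le_card hsub).trans (card_biUnion_le.trans (sum_le_sum fun i _ => ?_))
        refine card_image_le.trans ?_
        rw [card_product, card_M, card_M]
    _ = ∑ i ∈ (Icc 1 n).filter (fun i => 2 * i ≤ n),
        Fintype.card F ^ (1 + i + (n - 2 * i)) := by
        rw [mul_sum]
        exact sum_congr rfl fun i _ => by rw [pow_add, pow_add]; ring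
    _ ≤ ∑ i ∈ (Icc 1 n).filter (fun i => 2 * i ≤ n), Fintype.card F ^ n := by
        refine sum_le_sum fun i hi => Nat.pow_le_pow_right hq ?_
        rw [mem_filter, mem_Icc] at hi
        omega
    _ ≤ _ := by
        rw [sum_const, smul_eq_mul]
        apply Nat.mul_le_mul_right
        refine (card_filter_le _ _).trans ?_
        simp

lemma dp_bound {f : F[X]} {n : ℕ} (hf : f.Monic) (hn : f.natDegree ≤ n) (B : ℤ) (hB : 0 ≤ B)
    (g : F[X] × F[X] → ℤ) (hg : ∀ p ∈ dp f, |g p| ≤ B) : |∑ p ∈ dp f, g p| ≤ 2 ^ n * B := by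
  refine (abs_sum_le_sum_abs _ _).trans ((sum_le_card_nsmul _ _ _ hg).trans ?_)
  rw [nsmul_eq_mul]
  refine mul_le_mul_of_nonneg_right ?_ hB
  exact_mod_cast (card_dp hf).trans (Nat.pow_le_pow_right (by norm_num) hn)

lemma dp_deg {f : F[X]} {n : ℕ} (hn : f.natDegree ≤ n) {p : F[X] × F[X]}
    (hp : p ∈ dp f) : p.1.natDegree ≤ n ∧ p.2.natDegree ≤ n := by
  obtain ⟨h1, h2, h3⟩ := mem_dp.1 hp
  have := h1.natDegree_mul h2
  rw [h3] at this
  omega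

lemma y_bound (j k n : ℕ) {f : F[X]} (hf : f.Monic) (hn : f.natDegree ≤ n) :
    |y j k f| ≤ 2 ^ n * ((n : ℤ) ^ j * (2 ^ n * (2 ^ n * ((n : ℤ) + n) ^ k))) := by
  refine dp_bound hf hn _ (by positivity) _ fun p hp => ?_
  obtain ⟨d1, d2⟩ := dp_deg hn hp
  obtain ⟨h1, h2, h3⟩ := mem_dp.1 hp
  rw [abs_mul, abs_of_nonneg (by positivity : (0 : ℤ) ≤ (p.2.natDegree : ℤ) ^ j)]
  refine mul_le_mul (by gcongr) ?_ (abs_nonneg _) (by positivity)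
  refine dp_bound h1 d1 _ (by positivity) _ fun x hx => ?_
  refine dp_bound h2 d2 _ (by positivity) _ fun z hz => ?_
  have dx := (dp_deg d1 hx).2
  have dz := (dp_deg d2 hz).2
  rw [abs_mul, abs_mul, abs_of_nonneg (by positivity :
    (0 : ℤ) ≤ ((x.2.natDegree : ℤ) + z.2.natDegree) ^ k)]
  calc _ ≤ 1 * 1 * ((x.2.natDegree : ℤ) + z.2.natDegree) ^ k := by
        gcongr <;> exact mu_abs _
    _ ≤ _ := by rw [one_mul, one_mul]; gcongr

end

lemma vmj_bound (n j : ℕ) : ∃ B : ℕ, ∀ (F : Type) [Field F] [Fintype F] (f : F[X]),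
    f.Monic → f.natDegree ≤ n → polyVMJ j f ≤ B := by
  induction j with
  | zero =>
    refine ⟨1, fun F _ _ f hf _ => ?_⟩
    rw [vmj_zero hf]; split_ifs <;> simp
  | succ j ih =>
    obtain ⟨B, hB⟩ := ih
    refine ⟨2 ^ n * (B * n) + B * n, fun F _ _ f hf hn => ?_⟩
    rw [vmj_succ j hf]
    refine add_le_add ?_ (Nat.mul_le_mul (hB F f hf hn) hn)
    have : ∀ p ∈ dp f, polyVMJ j p.1 * polyVM p.2 ≤ B * n := by
      intro p hp
      obtain ⟨d1, d2⟩ := dp_deg hn hp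
      exact Nat.mul_le_mul (hB F p.1 (mem_dp.1 hp).1 d1) ((vm_le p.2).trans d2)
    refine (sum_le_card_nsmul _ _ _ this).trans ?_
    rw [smul_eq_mul]
    exact Nat.mul_le_mul_right _ ((card_dp hf).trans (Nat.pow_le_pow_right (by norm_num) hn))

lemma main_bound (j k n : ℕ) : ∃ K : ℕ, ∀ (F : Type) [Field F] [Fintype F],
    (Fintype.card F : ℤ) * |∑ f ∈ M F n, (polyVMJ j f : ℤ) * polyVMJ k f -
      (Fintype.card F : ℤ) ^ n * R j k n| ≤ K * (Fintype.card F : ℤ) ^ n := by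
  obtain ⟨A, hA⟩ := vmj_bound n j
  obtain ⟨B, hB⟩ := vmj_bound n k
  let Y : ℕ := 2 ^ n * (n ^ j * (2 ^ n * (2 ^ n * (n + n) ^ k)))
  refine ⟨(A * B + Y) * n, fun F _ _ => ?_⟩
  rw [← sum_y, ← sum_sub_distrib]
  have h1 : ∑ f ∈ M F n, ((polyVMJ j f : ℤ) * polyVMJ k f - y j k f) =
      ∑ f ∈ (M F n).filter (fun f => ¬ Squarefree f),
        ((polyVMJ j f : ℤ) * polyVMJ k f - y j k f) := by
    rw [sum_filter]
    refine sum_congr rfl fun f hf => ?_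
    split_ifs with hs
    · have hm := (mem_M.1 hf).1
      rw [vmj_eq j hm hs, vmj_eq k hm hs, h_mul_eq_y j k hs, sub_self]
    · rfl
  have h2 : ∀ f ∈ (M F n).filter (fun f => ¬ Squarefree f),
      |(polyVMJ j f : ℤ) * polyVMJ k f - y j k f| ≤ ((A * B + Y : ℕ) : ℤ) := by
    intro f hf
    obtain ⟨hm, hd⟩ := mem_M.1 (mem_filter.1 hf).1
    refine (abs_sub _ _).trans ?_
    push_cast
    refine add_le_add ?_ ?_
    · rw [abs_of_nonneg (by positivity)]
      exact_mod_cast Nat.mul_le_mul (hA F f hm hd.le) (hB F f hm hd.le)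
    · have := y_bound j k n hm hd.le
      simpa [Y] using this
  rw [h1]
  have h3 := (abs_sum_le_sum_abs _ _).trans (sum_le_card_nsmul _ _ _ h2)
  have h4 := card_nsqf (F := F) n
  calc _ ≤ (Fintype.card F : ℤ) * _ := mul_le_mul_of_nonneg_left h3 (by positivity)
    _ = ((A * B + Y : ℕ) : ℤ) * ((Fintype.card F *
        ((M F n).filter (fun f => ¬ Squarefree f)).card : ℕ) : ℤ) := by
        rw [nsmul_eq_mul]; push_cast; ring
    _ ≤ ((A * B + Y : ℕ) : ℤ) * ((n * Fintype.card F ^ n : ℕ) : ℤ) := by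
        refine mul_le_mul_of_nonneg_left ?_ (by positivity)
        exact_mod_cast h4
    _ = _ := by push_cast; ring

end PVM

/-- Equation (1.12) of Rodgers, "The covariance of almost-primes in F_q[T]":
`lim_{q→∞} q^{-n} Σ_{f ∈ M_n} Λ_j(f) Λ_k(f) = Σ_{d=1}^{n} (d^j−(d−1)^j)(d^k−(d−1)^k)`,
the limit being over finite fields `F` of cardinality `q → ∞`. -/
theorem covariance_of_vonMangoldt (j k n : ℕ) (hj : 1 ≤ j) (hk : 1 ≤ k) (hn : 1 ≤ n) :
    ∀ ε : ℝ, 0 < ε → ∃ Q : ℕ, ∀ (F : Type) [Field F] [Fintype F],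
      Q ≤ Fintype.card F →
      |((Fintype.card F : ℝ) ^ n)⁻¹ *
          (∑ᶠ f ∈ {f : F[X] | f.Monic ∧ f.natDegree = n},
            ((polyVMJ j f : ℝ) * (polyVMJ k f : ℝ)))
        - ∑ d ∈ Finset.Icc 1 n,
            ((d : ℝ) ^ j - ((d : ℝ) - 1) ^ j) * ((d : ℝ) ^ k - ((d : ℝ) - 1) ^ k)| < ε := by
  intro ε hε
  obtain ⟨K, hK⟩ := PVM.main_bound j k n
  obtain ⟨Q, hQ⟩ := exists_nat_gt (K / ε : ℝ)
  refine ⟨Q + 1, fun F _ _ hF => ?_⟩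
  have hq : (0 : ℝ) < Fintype.card F := by exact_mod_cast Fintype.card_pos
  have hqQ : (Q : ℝ) < Fintype.card F := by exact_mod_cast hF
  have hR : (∑ d ∈ Finset.Icc 1 n,
      ((d : ℝ) ^ j - ((d : ℝ) - 1) ^ j) * ((d : ℝ) ^ k - ((d : ℝ) - 1) ^ k)) =
      (PVM.R j k n : ℝ) := by
    rw [PVM.R_eq j k n hj hn, Finset.range_eq_Ico,
      ← Finset.Ico_add_one_right_eq_Icc, ← Finset.sum_Ico_add' _ 0 n 1]
    push_cast
    refine Finset.sum_congr rfl fun d _ => ?_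
    simp
  have hS : (∑ᶠ f ∈ {f : F[X] | f.Monic ∧ f.natDegree = n},
      ((polyVMJ j f : ℝ) * (polyVMJ k f : ℝ))) =
      ((∑ f ∈ PVM.M F n, (polyVMJ j f : ℤ) * polyVMJ k f : ℤ) : ℝ) := by
    rw [finsum_mem_eq_finite_toFinset_sum _ (PVM.finite_monic F n)]
    push_cast
    rfl
  rw [hR, hS]
  have h1 : (Fintype.card F : ℝ) *
      |((∑ f ∈ PVM.M F n, (polyVMJ j f : ℤ) * polyVMJ k f : ℤ) : ℝ) -
        (Fintype.card F : ℝ) ^ n * (PVM.R j k n : ℝ)| ≤ K * (Fintype.card F : ℝ) ^ n := by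
    exact_mod_cast hK F
  generalize ((∑ f ∈ PVM.M F n, (polyVMJ j f : ℤ) * polyVMJ k f : ℤ) : ℝ) = S at h1 ⊢
  generalize (PVM.R j k n : ℝ) = R at h1 ⊢
  have hqn : (0 : ℝ) < (Fintype.card F : ℝ) ^ n := by positivity
  generalize (Fintype.card F : ℝ) = q at *
  have e : (q ^ n)⁻¹ * S - R = (q ^ n)⁻¹ * (S - q ^ n * R) := by
    field_simp
  rw [e, abs_mul, abs_of_pos (inv_pos.2 hqn), inv_mul_lt_iff₀ hqn]
  have h2 : (K : ℝ) < ε * q := by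
    have := (div_lt_iff₀ hε).1 (hQ.trans hqQ)
    linarith
  have h3 : q * |S - q ^ n * R| < q * (q ^ n * ε) := by
    calc _ ≤ _ := h1
      _ < ε * q * q ^ n := mul_lt_mul_of_pos_right h2 hqn
      _ = _ := by ring
  exact lt_of_mul_lt_mul_left h3 hq.le
end

section
/- Fix integers j ≥ 1, k ≥ 1 and n ≥ 1. For every ε > 0 there exists Q such that for every prime power q ≥ Q and every finite field F_q with q elements, | q^{-n} · Σ_{f ∈ M_n} Λ̃_j(f)·Λ̃_k(f) − Σ_{d=1}^{n−1} (d^j − (d−1)^j)(d^k − (d−1)^k) | < ε. (That is, lim_{q→∞} q^{-n} Σ_{f ∈ M_n} Λ̃_j(f)Λ̃_k(f) = Σ_{d=1}^{n−1} (d^j−(d−1)^j)(d^k−(d−1)^k).) -/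
open Polynomial

/-- The centered higher von Mangoldt function
`Λ̃_j(f) = Λ_j(f) − (n^j − (n−1)^j)` where `n = deg f`. -/
noncomputable def polyVMT {F : Type*} [Field F] (j : ℕ) (f : F[X]) : ℝ :=
  (polyVMJ j f : ℝ) - ((f.natDegree : ℝ) ^ j - ((f.natDegree : ℝ) - 1) ^ j)

namespace CovVM
set_option linter.unusedSectionVars false
open Classical in
/-- monic polynomials of degree `n` -/
noncomputable def M (F : Type) [Field F] [Fintype F] (n : ℕ) : Finset F[X] :=
  Finset.univ.map (((monicEquivDegreeLT (R := F) n).trans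
    (degreeLTEquiv F n).toEquiv).symm.toEmbedding.trans (Function.Embedding.subtype _))

variable {F : Type} [Field F] [Fintype F]

lemma mem_M {n : ℕ} {f : F[X]} : f ∈ M F n ↔ f.Monic ∧ f.natDegree = n := by
  unfold M
  simp only [Finset.mem_map, Finset.mem_univ, true_and]
  constructor
  · rintro ⟨a, rfl⟩
    exact (((monicEquivDegreeLT (R := F) n).trans (degreeLTEquiv F n).toEquiv).symm a).2
  · intro h
    refine ⟨((monicEquivDegreeLT (R := F) n).trans (degreeLTEquiv F n).toEquiv) ⟨f, h⟩, ?_⟩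
    simp only [Function.Embedding.trans_apply, Equiv.coe_toEmbedding, Equiv.symm_apply_apply]
    rfl

lemma card_M (n : ℕ) : (M F n).card = Fintype.card F ^ n := by
  unfold M
  simp

open Classical in
/-- factorizations of `f` into two monic polynomials -/
noncomputable def A (f : F[X]) : Finset (F[X] × F[X]) :=
  (((Finset.range (f.natDegree + 1)).biUnion (M F)) ×ˢ
    ((Finset.range (f.natDegree + 1)).biUnion (M F))).filter (fun p => p.1 * p.2 = f)

lemma mem_A {f : F[X]} {p : F[X] × F[X]} :
    p ∈ A f ↔ p.1.Monic ∧ p.2.Monic ∧ p.1 * p.2 = f := by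
  unfold A
  simp only [Finset.mem_filter, Finset.mem_product, Finset.mem_biUnion, Finset.mem_range, mem_M]
  constructor
  · rintro ⟨⟨⟨i, -, h, -⟩, ⟨j, -, h', -⟩⟩, e⟩
    exact ⟨h, h', e⟩
  · rintro ⟨h, h', e⟩
    have := h.natDegree_mul h'
    rw [e] at this
    exact ⟨⟨⟨_, by omega, h, rfl⟩, ⟨_, by omega, h', rfl⟩⟩, e⟩

lemma A_comm (f : F[X]) {R : Type*} [AddCommMonoid R] (φ : F[X] → F[X] → R) :
    ∑ p ∈ A f, φ p.1 p.2 = ∑ p ∈ A f, φ p.2 p.1 := by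
  refine Finset.sum_nbij' Prod.swap Prod.swap ?_ ?_ ?_ ?_ ?_
  · intro p; simp only [mem_A, Prod.fst_swap, Prod.snd_swap]
    rintro ⟨h, h', e⟩; exact ⟨h', h, by rw [mul_comm, e]⟩
  · intro p; simp only [mem_A, Prod.fst_swap, Prod.snd_swap]
    rintro ⟨h, h', e⟩; exact ⟨h', h, by rw [mul_comm, e]⟩
  · intro p _; simp
  · intro p _; simp
  · intro p _; simp

lemma A_assoc (f : F[X]) {R : Type*} [AddCommMonoid R] (φ : F[X] → F[X] → F[X] → R) :
    ∑ p ∈ A f, ∑ q ∈ A p.1, φ q.1 q.2 p.2 = ∑ p ∈ A f, ∑ q ∈ A p.2, φ p.1 q.1 q.2 := by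
  rw [Finset.sum_sigma', Finset.sum_sigma']
  refine Finset.sum_nbij' (fun x => ⟨(x.2.1, x.2.2 * x.1.2), (x.2.2, x.1.2)⟩)
    (fun x => ⟨(x.1.1 * x.2.1, x.2.2), (x.1.1, x.2.1)⟩) ?_ ?_ ?_ ?_ ?_
  · rintro ⟨⟨a, b⟩, ⟨c, d⟩⟩
    simp only [Finset.mem_sigma, mem_A]
    rintro ⟨⟨h1, h2, h3⟩, h4, h5, h6⟩
    exact ⟨⟨h4, h5.mul h2, by rw [← h3, ← h6, mul_assoc]⟩, h5, h2, trivial⟩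
  · rintro ⟨⟨a, b⟩, ⟨c, d⟩⟩
    simp only [Finset.mem_sigma, mem_A]
    rintro ⟨⟨h1, h2, h3⟩, h4, h5, h6⟩
    exact ⟨⟨h1.mul h4, h5, by rw [← h3, ← h6, mul_assoc]⟩, h1, h4, trivial⟩
  · rintro ⟨⟨a, b⟩, ⟨c, d⟩⟩
    simp only [Finset.mem_sigma, mem_A]
    rintro ⟨⟨h1, h2, h3⟩, h4, h5, h6⟩
    rw [h6]
  · rintro ⟨⟨a, b⟩, ⟨c, d⟩⟩
    simp only [Finset.mem_sigma, mem_A]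
    rintro ⟨⟨h1, h2, h3⟩, h4, h5, h6⟩
    rw [h6]
  · rintro ⟨⟨a, b⟩, ⟨c, d⟩⟩ _
    rfl

lemma sum_M_A (n : ℕ) {R : Type*} [AddCommMonoid R] (φ : F[X] → F[X] → R) :
    ∑ f ∈ M F n, ∑ p ∈ A f, φ p.1 p.2 =
      ∑ x ∈ Finset.HasAntidiagonal.antidiagonal n, ∑ a ∈ M F x.1, ∑ b ∈ M F x.2, φ a b := by
  have : ∀ x ∈ Finset.HasAntidiagonal.antidiagonal n, ∑ a ∈ M F x.1, ∑ b ∈ M F x.2, φ a b =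
      ∑ p ∈ M F x.1 ×ˢ M F x.2, φ p.1 p.2 := fun x _ => (Finset.sum_product' _ _ _).symm
  rw [Finset.sum_congr rfl this, Finset.sum_sigma', Finset.sum_sigma']
  refine Finset.sum_nbij' (fun x => ⟨(x.2.1.natDegree, x.2.2.natDegree), x.2⟩)
    (fun x => ⟨x.2.1 * x.2.2, x.2⟩) ?_ ?_ ?_ ?_ ?_
  · rintro ⟨f, a, b⟩
    simp only [Finset.mem_sigma, mem_A, mem_M, Finset.HasAntidiagonal.mem_antidiagonal, Finset.mem_product]
    rintro ⟨⟨h1, h2⟩, h3, h4, h5⟩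
    refine ⟨?_, ⟨h3, trivial⟩, h4, trivial⟩
    rw [← h3.natDegree_mul h4, h5, h2]
  · rintro ⟨⟨i, j⟩, a, b⟩
    simp only [Finset.mem_sigma, mem_A, mem_M, Finset.HasAntidiagonal.mem_antidiagonal, Finset.mem_product]
    rintro ⟨h1, ⟨h2, h3⟩, h4, h5⟩
    refine ⟨⟨h2.mul h4, ?_⟩, h2, h4, trivial⟩
    rw [h2.natDegree_mul h4, h3, h5, h1]
  · rintro ⟨f, a, b⟩
    simp only [Finset.mem_sigma, mem_A]
    rintro ⟨-, h3, h4, h5⟩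
    rw [h5]
  · rintro ⟨⟨i, j⟩, a, b⟩
    simp only [Finset.mem_sigma, mem_M, Finset.mem_product]
    rintro ⟨-, ⟨h2, h3⟩, h4, h5⟩
    rw [h3, h5]
  · rintro ⟨f, a, b⟩ _
    rfl

lemma monic_induction {Q : F[X] → Prop} (h1 : Q 1)
    (h2 : ∀ P u : F[X], P.Monic → Irreducible P → u.Monic → Q u → Q (P * u)) :
    ∀ f : F[X], f.Monic → Q f := by
  intro f
  induction hn : f.natDegree using Nat.strong_induction_on generalizing f with
  | _ n ih =>
    intro hf
    by_cases h0 : n = 0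
    · rw [hf.natDegree_eq_zero.mp (hn.trans h0)]; exact h1
    · obtain ⟨P, hM, hI, u, rfl⟩ := exists_monic_irreducible_factor f
        (not_isUnit_of_natDegree_pos f (by omega))
      have hu : u.Monic := hM.of_mul_monic_left hf
      refine h2 P u hM hI hu (ih u.natDegree ?_ u rfl hu)
      have := hM.natDegree_mul hu
      have := hI.natDegree_pos
      omega

lemma exists_factor {f : F[X]} (hf : f.Monic) (h : f ≠ 1) :
    ∃ P u : F[X], P.Monic ∧ Irreducible P ∧ u.Monic ∧ f = P * u := by
  obtain ⟨P, hM, hI, u, rfl⟩ := exists_monic_irreducible_factor f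
    (fun hu => h (hf.eq_one_of_isUnit hu))
  exact ⟨P, u, hM, hI, hM.of_mul_monic_left hf, rfl⟩

open Classical in
lemma A_split_dvd {P u : F[X]} (hP : P.Monic) {R : Type*} [AddCommMonoid R]
    (φ : F[X] → F[X] → R) :
    ∑ p ∈ (A (P * u)).filter (fun p => P ∣ p.1), φ p.1 p.2 = ∑ p ∈ A u, φ (P * p.1) p.2 := by
  symm
  refine Finset.sum_bij (fun p _ => (P * p.1, p.2)) ?_ ?_ ?_ ?_
  · rintro ⟨a, b⟩
    simp only [Finset.mem_filter, mem_A]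
    rintro ⟨h1, h2, h3⟩
    exact ⟨⟨hP.mul h1, h2, by rw [← h3, mul_assoc]⟩, dvd_mul_right _ _⟩
  · rintro ⟨a, b⟩ _ ⟨c, d⟩ _ h
    simp only [Prod.mk.injEq] at h
    rw [mul_left_cancel₀ hP.ne_zero h.1, h.2]
  · rintro ⟨a, b⟩
    simp only [Finset.mem_filter, mem_A]
    rintro ⟨⟨h1, h2, h3⟩, c, rfl⟩
    have hc : c.Monic := hP.of_mul_monic_left h1
    refine ⟨(c, b), ⟨hc, h2, ?_⟩, rfl⟩
    have h5 : P * (c * b) = P * u := by rw [← h3, mul_assoc P c b]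
    exact mul_left_cancel₀ hP.ne_zero h5
  · intro p _; rfl

open Classical in
lemma A_split_not_dvd {P u : F[X]} (hP : P.Monic) (hI : Irreducible P) {R : Type*}
    [AddCommMonoid R] (φ : F[X] → F[X] → R) :
    ∑ p ∈ (A (P * u)).filter (fun p => ¬ P ∣ p.1), φ p.1 p.2 =
      ∑ p ∈ (A u).filter (fun p => ¬ P ∣ p.1), φ p.1 (P * p.2) := by
  symm
  refine Finset.sum_bij (fun p _ => (p.1, P * p.2)) ?_ ?_ ?_ ?_
  · rintro ⟨a, b⟩
    simp only [Finset.mem_filter, mem_A]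
    rintro ⟨⟨h1, h2, h3⟩, h4⟩
    exact ⟨⟨h1, hP.mul h2, by rw [← h3]; ring⟩, h4⟩
  · rintro ⟨a, b⟩ _ ⟨c, d⟩ _ h
    simp only [Prod.mk.injEq] at h
    rw [mul_left_cancel₀ hP.ne_zero h.2, h.1]
  · rintro ⟨a, b⟩
    simp only [Finset.mem_filter, mem_A]
    rintro ⟨⟨h1, h2, h3⟩, h4⟩
    have : P ∣ a * b := h3 ▸ dvd_mul_right _ _
    obtain ⟨c, rfl⟩ := (hI.prime.dvd_or_dvd this).resolve_left h4
    have hc : c.Monic := hP.of_mul_monic_left h2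
    refine ⟨(a, c), ⟨⟨h1, hc, ?_⟩, h4⟩, rfl⟩
    have h5 : P * (a * c) = P * u := by rw [← h3, mul_left_comm P a c]
    exact mul_left_cancel₀ hP.ne_zero h5
  · intro p _; rfl

lemma A_one : A (1 : F[X]) = {(1, 1)} := by
  ext ⟨a, b⟩
  simp only [mem_A, Finset.mem_singleton, Prod.mk.injEq]
  constructor
  · rintro ⟨h1, h2, h3⟩
    exact ⟨h1.eq_one_of_isUnit (IsUnit.of_mul_eq_one _ h3),
      h2.eq_one_of_isUnit (IsUnit.of_mul_eq_one _ (by rw [mul_comm]; exact h3))⟩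
  · rintro ⟨rfl, rfl⟩
    simp

lemma card_A (f : F[X]) (hf : f.Monic) : (A f).card ≤ 2 ^ f.natDegree := by
  classical
  revert f
  apply monic_induction
  · simp [A_one]
  · intro P u hP hI hu ih
    rw [hP.natDegree_mul hu, Finset.card_eq_sum_ones,
      ← Finset.sum_filter_add_sum_filter_not _ (fun p => P ∣ p.1),
      A_split_dvd hP (fun _ _ => 1), A_split_not_dvd hP hI (fun _ _ => 1)]
    simp only [← Finset.card_eq_sum_ones]
    have h1 := Finset.card_filter_le (A u) (fun p => ¬ P ∣ p.1)
    have h2 : 2 ^ 1 ≤ 2 ^ P.natDegree := Nat.pow_le_pow_right (by norm_num) hI.natDegree_pos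
    rw [pow_add]
    nlinarith

/-! ### Möbius -/
open Classical in
noncomputable def mu (f : F[X]) : ℝ :=
  if Squarefree f then (-1) ^ (UniqueFactorizationMonoid.normalizedFactors f).card else 0

lemma abs_mu_le (f : F[X]) : |mu f| ≤ 1 := by
  unfold mu; split_ifs <;> simp

lemma mu_one : mu (1 : F[X]) = 1 := by
  simp [mu]

lemma mu_sq {f : F[X]} (h : Squarefree f) : mu f * mu f = 1 := by
  simp [mu, h, ← mul_pow]

lemma mu_mul {f g : F[X]} (h : Squarefree (f * g)) : mu (f * g) = mu f * mu g := by
  classical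
  have hf := h.of_mul_left
  have hg := h.of_mul_right
  simp only [mu, h, hf, hg, if_true]
  rw [UniqueFactorizationMonoid.normalizedFactors_mul hf.ne_zero hg.ne_zero, Multiset.card_add,
    pow_add]

lemma mu_irr {P : F[X]} (h : Irreducible P) : mu P = -1 := by
  classical
  simp [mu, h.squarefree, UniqueFactorizationMonoid.normalizedFactors_irreducible h]

open Classical in
lemma mu_irr_mul {P d : F[X]} (h : Irreducible P) :
    mu (P * d) = if P ∣ d then 0 else - mu d := by
  split_ifs with hd
  · have : ¬ Squarefree (P * d) := fun hs => h.not_isUnit (hs P (mul_dvd_mul_left P hd))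
    simp [mu, this]
  · by_cases hs : Squarefree d
    · rw [mu_mul, mu_irr h, neg_one_mul]
      exact squarefree_mul_iff.mpr ⟨h.isRelPrime_iff_not_dvd.mpr hd, h.squarefree, hs⟩
    · have : ¬ Squarefree (P * d) := fun h => hs h.of_mul_right
      simp [mu, this, hs]

open Classical in
lemma sum_mu {f : F[X]} (hf : f.Monic) : ∑ p ∈ A f, mu p.1 = if f = 1 then 1 else 0 := by
  split_ifs with h
  · subst h; simp [A_one, mu_one]
  · obtain ⟨P, u, hP, hI, hu, rfl⟩ := exists_factor hf h
    rw [← Finset.sum_filter_add_sum_filter_not _ (fun p => P ∣ p.1),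
      A_split_dvd hP (fun a _ => mu a), A_split_not_dvd hP hI (fun a _ => mu a)]
    simp only [mu_irr_mul hI]
    rw [Finset.sum_filter, ← Finset.sum_add_distrib]
    apply Finset.sum_eq_zero
    intro p _
    split_ifs <;> simp_all

/-- normalized Möbius sums -/
def c : ℕ → ℝ
  | 0 => 1
  | 1 => -1
  | _ => 0

lemma sum_c (m : ℕ) (φ : ℕ → ℝ) :
    ∑ x ∈ Finset.HasAntidiagonal.antidiagonal (m + 1), c x.1 * φ x.2 = φ (m + 1) - φ m := by
  rw [Finset.Nat.sum_antidiagonal_eq_sum_range_succ_mk, Finset.sum_range_succ',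
    Finset.sum_range_succ', Finset.sum_eq_zero]
  · simp [c]; ring
  · intro i _; simp [c]

lemma M_zero : M F 0 = {1} := by
  ext f
  simp only [mem_M, Finset.mem_singleton]
  constructor
  · rintro ⟨h, h'⟩; exact h.natDegree_eq_zero.mp h'
  · rintro rfl; simp

lemma sum_mu_M (m : ℕ) : ∑ f ∈ M F m, mu f = c m * (Fintype.card F : ℝ) ^ m := by
  induction m using Nat.strong_induction_on with
  | _ m ih =>
    rcases m with _ | m
    · simp [M_zero, mu_one, c]
    · have h := sum_M_A (F := F) (m + 1) (fun a _ => mu a)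
      have h0 : ∑ f ∈ M F (m + 1), ∑ p ∈ A f, mu p.1 = 0 := by
        apply Finset.sum_eq_zero
        intro f hf
        rw [mem_M] at hf
        rw [sum_mu hf.1, if_neg]
        rintro rfl
        simp at hf
      rw [h0] at h
      have h3 := sum_c m (fun i => (Fintype.card F : ℝ) ^ (m + 1))
      simp only [sub_self] at h3
      rw [← h3] at h
      rw [Finset.Nat.sum_antidiagonal_eq_sum_range_succ_mk,
        Finset.Nat.sum_antidiagonal_eq_sum_range_succ_mk, Finset.sum_range_succ,
        Finset.sum_range_succ _ (m + 1)] at h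
      simp only [Finset.sum_const, card_M, nsmul_eq_mul, ← Finset.mul_sum, Nat.sub_self,
        pow_zero, Nat.cast_one, one_mul] at h
      have h4 : ∑ x ∈ Finset.range (m + 1), c x * (Fintype.card F : ℝ) ^ (m + 1) =
          ∑ x ∈ Finset.range (m + 1),
            ((Fintype.card F ^ (m + 1 - x) : ℕ) : ℝ) * ∑ f ∈ M F x, mu f := by
        apply Finset.sum_congr rfl
        intro i hi
        rw [Finset.mem_range] at hi
        rw [ih i hi]
        have : m + 1 = (m + 1 - i) + i := by omega
        push_cast
        conv_lhs => rw [this, pow_add]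
        ring
      rw [h4] at h
      linarith

lemma A_coprime {d e : F[X]} (hd : d.Monic) (he : e.Monic) (hc : IsRelPrime d e) {R : Type*}
    [AddCommMonoid R] (φ : F[X] → F[X] → R) :
    ∑ p ∈ A (d * e), φ p.1 p.2 =
      ∑ u ∈ A d, ∑ v ∈ A e, φ (u.1 * v.1) (u.2 * v.2) := by
  rw [← Finset.sum_product']
  symm
  refine Finset.sum_bij (fun x _ => (x.1.1 * x.2.1, x.1.2 * x.2.2)) ?_ ?_ ?_ ?_
  · rintro ⟨⟨a, b⟩, ⟨a', b'⟩⟩ h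
    simp only [Finset.mem_product, mem_A] at h ⊢
    obtain ⟨⟨h1, h2, h3⟩, h4, h5, h6⟩ := h
    exact ⟨h1.mul h4, h2.mul h5, by rw [← h3, ← h6]; ring⟩
  · rintro ⟨⟨a, b⟩, ⟨a', b'⟩⟩ h ⟨⟨x, y⟩, ⟨x', y'⟩⟩ h' heq
    simp only [Finset.mem_product, mem_A] at h h'
    simp only [Prod.mk.injEq] at heq
    obtain ⟨⟨h1, h2, h3⟩, h4, h5, h6⟩ := h
    obtain ⟨⟨k1, k2, k3⟩, k4, k5, k6⟩ := h'
    have had : a ∣ d := ⟨b, h3.symm⟩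
    have hae : a' ∣ e := ⟨b', h6.symm⟩
    have hxd : x ∣ d := ⟨y, k3.symm⟩
    have hxe : x' ∣ e := ⟨y', k6.symm⟩
    have e1 : a = x := by
      apply eq_of_monic_of_associated h1 k1
      apply associated_of_dvd_dvd
      · exact ((IsRelPrime.of_dvd_left hc had).of_dvd_right hxe).dvd_of_dvd_mul_right (heq.1 ▸ dvd_mul_right a a')
      · exact ((IsRelPrime.of_dvd_left hc hxd).of_dvd_right hae).dvd_of_dvd_mul_right (heq.1 ▸ dvd_mul_right x x')
    subst e1
    have e2 : a' = x' := mul_left_cancel₀ h1.ne_zero heq.1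
    subst e2
    have e3 : b = y := mul_left_cancel₀ h1.ne_zero (h3.trans k3.symm)
    have e4 : b' = y' := mul_left_cancel₀ h4.ne_zero (h6.trans k6.symm)
    rw [e3, e4]
  · rintro ⟨a, b⟩ h
    rw [mem_A] at h
    obtain ⟨h1, h2, h3⟩ := h
    simp only at h1 h2 h3
    obtain ⟨x, x', ⟨y, hy⟩, ⟨y', hy'⟩, hx⟩ :=
      exists_dvd_and_dvd_of_dvd_mul (⟨b, h3.symm⟩ : a ∣ d * e)
    have hx0 : x ≠ 0 := by rintro rfl; exact h1.ne_zero (by rw [hx, zero_mul])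
    have hl : x.leadingCoeff ≠ 0 := leadingCoeff_ne_zero.mpr hx0
    have hxx : x.leadingCoeff * x'.leadingCoeff = 1 := by
      rw [← leadingCoeff_mul, ← hx]; exact h1
    set l := x.leadingCoeff with hldef
    set l' := x'.leadingCoeff with hldef'
    have hC : (C l' : F[X]) * C l = 1 := by rw [← C_mul, mul_comm, hxx, C_1]
    have m1 : (C l' * x).Monic := by
      rw [Monic, leadingCoeff_mul, leadingCoeff_C, ← hldef, mul_comm, hxx]
    have m2 : (C l * x').Monic := by
      rw [Monic, leadingCoeff_mul, leadingCoeff_C, ← hldef', hxx]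
    have p1 : (C l' * x) * (C l * y) = d := by
      rw [hy]; linear_combination (x * y) * hC
    have p2 : (C l * x') * (C l' * y') = e := by
      rw [hy']; linear_combination (x' * y') * hC
    have m3 : (C l * y).Monic := m1.of_mul_monic_left (p1 ▸ hd)
    have m4 : (C l' * y').Monic := m2.of_mul_monic_left (p2 ▸ he)
    refine ⟨((C l' * x, C l * y), (C l * x', C l' * y')), ?_, ?_⟩
    · simp only [Finset.mem_product, mem_A]
      exact ⟨⟨m1, m3, p1⟩, m2, m4, p2⟩
    · have q1 : (C l' * x) * (C l * x') = a := by
        rw [hx]; linear_combination (x * x') * hC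
      have q2 : (C l * y) * (C l' * y') = b := by
        apply mul_left_cancel₀ h1.ne_zero
        rw [h3, ← q1, ← p1, ← p2]; ring
      simp only [q1, q2]
  · intro x _; rfl

/-! ### von Mangoldt -/

lemma vm_prime_pow {P : F[X]} (hP : P.Monic) (hI : Irreducible P) {k : ℕ} (hk : 1 ≤ k) :
    polyVM (P ^ k) = P.natDegree := by
  have : {m : ℕ | ∃ (c : F) (Q : F[X]) (i : ℕ),
    c ≠ 0 ∧ Q.Monic ∧ Irreducible Q ∧ 1 ≤ i ∧ P ^ k = C c * Q ^ i ∧ m = Q.natDegree} =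
      {P.natDegree} := by
    ext m
    simp only [Set.mem_ofPred_eq, Set.mem_singleton_iff]
    constructor
    · rintro ⟨c, Q, i, hc, hQ, hQI, hi, h, rfl⟩
      have : P ∣ C c * Q ^ i := h ▸ dvd_pow_self P (by omega)
      have h2 : P ∣ Q ^ i := by
        rcases hI.prime.dvd_or_dvd this with h3 | h3
        · exact absurd (isUnit_of_dvd_unit h3 (isUnit_C.mpr hc.isUnit)) hI.not_isUnit
        · exact h3
      have h3 := hI.prime.dvd_of_dvd_pow h2
      rw [eq_of_monic_of_associated hP hQ (hI.associated_of_dvd hQI h3)]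
    · rintro rfl
      exact ⟨1, P, k, one_ne_zero, hP, hI, hk, by simp, rfl⟩
  unfold polyVM
  rw [this, csSup_singleton]

lemma vm_ne_zero {f : F[X]} (hf : f.Monic) (h : polyVM f ≠ 0) :
    ∃ (P : F[X]) (k : ℕ), P.Monic ∧ Irreducible P ∧ 1 ≤ k ∧ f = P ^ k := by
  unfold polyVM at h
  have : {m : ℕ | ∃ (c : F) (P : F[X]) (k : ℕ),
    c ≠ 0 ∧ P.Monic ∧ Irreducible P ∧ 1 ≤ k ∧ f = C c * P ^ k ∧ m = P.natDegree}.Nonempty := by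
    rw [Set.nonempty_iff_ne_empty]
    intro h0
    rw [h0] at h
    simp at h
  obtain ⟨m, c, P, k, hc, hP, hI, hk, e, -⟩ := this
  refine ⟨P, k, hP, hI, hk, ?_⟩
  have h1 : (C c * P ^ k).leadingCoeff = 1 := e ▸ hf
  rw [leadingCoeff_mul, leadingCoeff_C, (hP.pow k).leadingCoeff, mul_one] at h1
  rw [e, h1, C_1, one_mul]

lemma sum_vm (f : F[X]) (hf : f.Monic) : ∑ p ∈ A f, polyVM p.2 = f.natDegree := by
  classical
  revert f
  apply monic_induction
  · rw [A_one, Finset.sum_singleton, natDegree_one]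
    by_contra h
    obtain ⟨P, k, hP, hI, hk, e⟩ := vm_ne_zero monic_one h
    exact hI.not_isUnit (isUnit_of_dvd_one (e ▸ dvd_pow_self P (by omega)))
  · intro P u hP hI hu ih
    rw [hP.natDegree_mul hu, ← Finset.sum_filter_add_sum_filter_not _ (fun p => P ∣ p.1),
      A_split_dvd hP (fun _ b => polyVM b), ih, add_comm]
    congr 1
    have hfin : FiniteMultiplicity P (P * u) :=
      FiniteMultiplicity.of_not_isUnit hI.not_isUnit (hP.mul hu).ne_zero
    obtain ⟨w, hw, hw'⟩ := hfin.exists_eq_pow_mul_and_not_dvd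
    set v := multiplicity P (P * u) with hv
    have hv1 : 1 ≤ v := by
      by_contra h0
      have : v = 0 := by omega
      rw [this, pow_zero, one_mul] at hw
      exact hw' (hw ▸ dvd_mul_right P u)
    have hwM : w.Monic := (hP.pow v).of_mul_monic_left (hw ▸ hP.mul hu)
    rw [Finset.sum_eq_single (w, P ^ v)]
    · exact vm_prime_pow hP hI hv1
    · rintro ⟨a, b⟩ hab hne
      simp only [Finset.mem_filter, mem_A] at hab
      obtain ⟨⟨h1, h2, h3⟩, h4⟩ := hab
      by_contra h5
      obtain ⟨Q, k, hQ, hQI, hk, e⟩ := vm_ne_zero h2 h5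
      have hPb : P ∣ b :=
        (hI.prime.dvd_or_dvd (h3 ▸ dvd_mul_right P u : P ∣ a * b)).resolve_left h4
      have hPQ : P = Q := eq_of_monic_of_associated hP hQ
        (hI.associated_of_dvd hQI (hI.prime.dvd_of_dvd_pow (e ▸ hPb)))
      subst hPQ
      subst e
      have h6 : a * P ^ k = P ^ v * w := h3.trans hw
      have hkv : k ≤ v := by
        have : P ^ k ∣ P ^ v := hI.prime.pow_dvd_of_dvd_mul_right k hw'
          (h6 ▸ dvd_mul_left _ _)
        exact (pow_dvd_pow_iff hP.ne_zero hI.not_isUnit).mp this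
      have hvk : v ≤ k := by
        have : P ^ v ∣ P ^ k := hI.prime.pow_dvd_of_dvd_mul_left v h4
          (h6 ▸ dvd_mul_right _ _)
        exact (pow_dvd_pow_iff hP.ne_zero hI.not_isUnit).mp this
      have hkv' : k = v := le_antisymm hkv hvk
      apply hne
      rw [hkv', mul_comm] at h6
      have h7 : a = w := mul_left_cancel₀ (hP.pow v).ne_zero h6
      rw [h7, hkv']
    · intro h
      exfalso; apply h
      simp only [Finset.mem_filter, mem_A]
      exact ⟨⟨hwM, hP.pow v, by rw [hw, mul_comm]⟩, hw'⟩

lemma vmj_succ (j : ℕ) {f : F[X]} (hf : f.Monic) :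
    polyVMJ (j + 2) f = ∑ p ∈ A f, polyVMJ (j + 1) p.1 * polyVM p.2
      + polyVMJ (j + 1) f * f.natDegree := by
  classical
  show (∑ᶠ d ∈ {d : F[X] | d.Monic ∧ d ∣ f}, polyVMJ (j + 1) d * polyVM (f / d))
        + polyVMJ (j + 1) f * f.natDegree = _
  congr 1
  have hset : {d : F[X] | d.Monic ∧ d ∣ f} = ((A f).image Prod.fst : Finset F[X]) := by
    ext d
    simp only [Set.mem_ofPred_eq, Finset.coe_image, Set.mem_image, Finset.mem_coe, mem_A]
    constructor
    · rintro ⟨h, e, rfl⟩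
      exact ⟨(d, e), ⟨h, h.of_mul_monic_left hf, rfl⟩, rfl⟩
    · rintro ⟨⟨a, b⟩, ⟨h1, h2, h3⟩, rfl⟩
      exact ⟨h1, b, h3.symm⟩
  rw [hset, finsum_mem_coe_finset, Finset.sum_image]
  · apply Finset.sum_congr rfl
    intro p hp
    rw [mem_A] at hp
    rw [← hp.2.2, mul_div_cancel_left₀ _ hp.1.ne_zero]
  · rintro ⟨a, b⟩ h ⟨a', b'⟩ h' e
    simp only [Finset.mem_coe, mem_A] at h h' e
    subst e
    rw [mul_left_cancel₀ h.1.ne_zero (h.2.2.trans h'.2.2.symm)]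

lemma natDegree_A {f : F[X]} {p : F[X] × F[X]} (h : p ∈ A f) :
    p.1.natDegree + p.2.natDegree = f.natDegree := by
  rw [mem_A] at h
  rw [← h.2.2, h.1.natDegree_mul h.2.1]

lemma sum_vmj (j : ℕ) (f : F[X]) (hf : f.Monic) :
    ∑ p ∈ A f, polyVMJ (j + 1) p.1 = f.natDegree ^ (j + 1) := by
  induction j generalizing f with
  | zero =>
    rw [A_comm f (fun a _ => polyVMJ (0 + 1) a), zero_add, pow_one]
    exact sum_vm f hf
  | succ j ih =>
    have h1 : ∑ p ∈ A f, polyVMJ (j + 1 + 1) p.1 = ∑ p ∈ A f,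
        (∑ q ∈ A p.1, polyVMJ (j + 1) q.1 * polyVM q.2 +
          polyVMJ (j + 1) p.1 * p.1.natDegree) :=
      Finset.sum_congr rfl fun p hp => vmj_succ j (mem_A.mp hp).1
    rw [h1, Finset.sum_add_distrib,
      A_assoc f (fun a b _ => polyVMJ (j + 1) a * polyVM b), ← Finset.sum_add_distrib,
      pow_succ, ← ih f hf, Finset.sum_mul]
    apply Finset.sum_congr rfl
    intro p hp
    rw [← Finset.mul_sum, A_comm p.2 (fun a _ => polyVM a), sum_vm p.2 (mem_A.mp hp).2.1,
      ← mul_add, ← natDegree_A hp, add_comm p.2.natDegree]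

lemma vmj_le (j : ℕ) (f : F[X]) (hf : f.Monic) : polyVMJ (j + 1) f ≤ f.natDegree ^ (j + 1) := by
  rw [← sum_vmj j f hf]
  exact Finset.single_le_sum (f := fun p : F[X] × F[X] => polyVMJ (j + 1) p.1)
    (fun _ _ => Nat.zero_le _) (mem_A.mpr ⟨hf, monic_one, mul_one f⟩ : (f, 1) ∈ A f)

lemma vmj_eq (j : ℕ) (f : F[X]) (hf : f.Monic) :
    (polyVMJ (j + 1) f : ℝ) = ∑ p ∈ A f, mu p.1 * (p.2.natDegree : ℝ) ^ (j + 1) := by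
  classical
  have h1 : ∀ p ∈ A f, mu p.1 * (p.2.natDegree : ℝ) ^ (j + 1) =
      ∑ q ∈ A p.2, mu p.1 * (polyVMJ (j + 1) q.2 : ℝ) := by
    intro p hp
    rw [← Finset.mul_sum, A_comm p.2 (fun _ b => (polyVMJ (j + 1) b : ℝ))]
    have := sum_vmj j p.2 (mem_A.mp hp).2.1
    rw [← Nat.cast_pow, ← this, Nat.cast_sum]
  rw [Finset.sum_congr rfl h1, ← A_assoc f (fun a _ b => mu a * (polyVMJ (j + 1) b : ℝ))]
  have h2 : ∀ p ∈ A f, ∑ q ∈ A p.1, mu q.1 * (polyVMJ (j + 1) p.2 : ℝ) =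
      if p = (1, f) then (polyVMJ (j + 1) f : ℝ) else 0 := by
    rintro ⟨a, b⟩ hp
    rw [mem_A] at hp
    rw [← Finset.sum_mul, sum_mu hp.1]
    simp only [Prod.mk.injEq] at hp ⊢
    by_cases ha : a = 1
    · subst ha
      have : b = f := by rw [← hp.2.2, one_mul]
      simp [this]
    · simp [ha]
  rw [Finset.sum_congr rfl h2, Finset.sum_ite_eq', if_pos]
  exact mem_A.mpr ⟨monic_one, hf, one_mul f⟩

/-! ### Counting and the correlation function -/

open Classical in
lemma card_not_squarefree (n : ℕ) :
    ((M F n).filter (fun f => ¬ Squarefree f)).card ≤ n * Fintype.card F ^ (n - 1) := by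
  have hsub : (M F n).filter (fun f => ¬ Squarefree f) ⊆
      ((Finset.Icc 1 n).filter (fun i => 2 * i ≤ n)).biUnion
        (fun i => (M F i ×ˢ M F (n - 2 * i)).image (fun p => p.1 * p.1 * p.2)) := by
    intro f hf
    rw [Finset.mem_filter, mem_M] at hf
    obtain ⟨⟨hM, hn⟩, hs⟩ := hf
    unfold Squarefree at hs
    push Not at hs
    obtain ⟨x, hx, hxu⟩ := hs
    obtain ⟨P, hP, hI, hPx⟩ := exists_monic_irreducible_factor x hxu
    obtain ⟨e, he⟩ := (mul_dvd_mul hPx hPx).trans hx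
    have heM : e.Monic := (hP.mul hP).of_mul_monic_left (he ▸ hM)
    have hdeg : f.natDegree = P.natDegree + P.natDegree + e.natDegree := by
      rw [he, (hP.mul hP).natDegree_mul heM, hP.natDegree_mul hP]
    have hpos := hI.natDegree_pos
    simp only [Finset.mem_biUnion, Finset.mem_filter, Finset.mem_Icc, Finset.mem_image,
      Finset.mem_product, mem_M]
    have hed : e.natDegree = n - 2 * P.natDegree := by omega
    exact ⟨P.natDegree, ⟨⟨by omega, by omega⟩, by omega⟩, (P, e),
      ⟨⟨hP, rfl⟩, heM, hed⟩, he.symm⟩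
  have hq : 0 < Fintype.card F := Fintype.card_pos
  calc _ ≤ _ := Finset.card_le_card hsub
    _ ≤ ∑ i ∈ (Finset.Icc 1 n).filter (fun i => 2 * i ≤ n),
        ((M F i ×ˢ M F (n - 2 * i)).image (fun p => p.1 * p.1 * p.2)).card :=
      Finset.card_biUnion_le
    _ ≤ ∑ i ∈ (Finset.Icc 1 n).filter (fun i => 2 * i ≤ n), Fintype.card F ^ (n - 1) := by
      apply Finset.sum_le_sum
      intro i hi
      rw [Finset.mem_filter, Finset.mem_Icc] at hi
      refine Finset.card_image_le.trans ?_
      rw [Finset.card_product, card_M, card_M, ← pow_add]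
      exact Nat.pow_le_pow_right hq (by omega)
    _ ≤ n * Fintype.card F ^ (n - 1) := by
      rw [Finset.sum_const, smul_eq_mul]
      apply Nat.mul_le_mul_right
      refine (Finset.card_filter_le _ _).trans ?_
      simp

noncomputable def H (j k : ℕ) (f : F[X]) : ℝ :=
  ∑ p ∈ A f, ∑ u ∈ A p.1, ∑ v ∈ A p.2, mu u.2 * (mu v.1 *
    ((p.2.natDegree : ℝ) ^ j * ((u.2.natDegree : ℝ) + v.2.natDegree) ^ k))

lemma H_eq (j k : ℕ) {f : F[X]} (hf : f.Monic) (hs : Squarefree f) :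
    (polyVMJ (j + 1) f : ℝ) * polyVMJ (k + 1) f = H (j + 1) (k + 1) f := by
  rw [vmj_eq j f hf, Finset.sum_mul, H]
  apply Finset.sum_congr rfl
  intro p hp
  obtain ⟨h1, h2, h3⟩ := mem_A.mp hp
  have hrel : IsRelPrime p.1 p.2 := IsRelPrime.of_squarefree_mul (h3.symm ▸ hs)
  have hk : (polyVMJ (k + 1) f : ℝ) = ∑ u ∈ A p.1, ∑ v ∈ A p.2,
      mu (u.1 * v.1) * ((u.2 * v.2).natDegree : ℝ) ^ (k + 1) := by
    rw [vmj_eq k f hf, ← A_coprime h1 h2 hrel (fun a b => mu a * (b.natDegree : ℝ) ^ (k + 1)), h3]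
  rw [hk, Finset.mul_sum]
  apply Finset.sum_congr rfl
  intro u hu
  rw [Finset.mul_sum]
  apply Finset.sum_congr rfl
  intro v hv
  obtain ⟨u1, u2, u3⟩ := mem_A.mp hu
  obtain ⟨v1, v2, v3⟩ := mem_A.mp hv
  have s1 : Squarefree p.1 := hs.squarefree_of_dvd ⟨_, h3.symm⟩
  have s2 : Squarefree (u.1 * v.1) := by
    apply hs.squarefree_of_dvd
    rw [← h3, ← u3, ← v3]
    exact mul_dvd_mul (dvd_mul_right _ _) (dvd_mul_right _ _)
  rw [mu_mul s2, ← u3, mu_mul (u3.symm ▸ s1), u2.natDegree_mul v2]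
  have := mu_sq s2.of_mul_left
  push_cast
  linear_combination (mu u.2 * mu v.1 * (p.2.natDegree : ℝ) ^ (j + 1) *
    ((u.2.natDegree : ℝ) + v.2.natDegree) ^ (k + 1)) * this

lemma abs_sum_le' {ι : Type*} (s : Finset ι) (g : ι → ℝ) (N B : ℝ) (hB : 0 ≤ B)
    (hN : (s.card : ℝ) ≤ N) (h : ∀ x ∈ s, |g x| ≤ B) : |∑ x ∈ s, g x| ≤ N * B := by
  refine (Finset.abs_sum_le_sum_abs _ _).trans ((Finset.sum_le_card_nsmul _ _ _ h).trans ?_)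
  rw [nsmul_eq_mul]
  exact mul_le_mul_of_nonneg_right hN hB

lemma card_A_le {f : F[X]} (hf : f.Monic) {n : ℕ} (h : f.natDegree ≤ n) :
    ((A f).card : ℝ) ≤ 2 ^ n := by
  have := (card_A f hf).trans (Nat.pow_le_pow_right (by norm_num) h)
  exact_mod_cast this

lemma abs_H_le (j k n : ℕ) {f : F[X]} (hf : f.Monic) (hn : f.natDegree = n) :
    |H j k f| ≤ 2 ^ n * (2 ^ n * (2 ^ n * ((n : ℝ) ^ j * (n : ℝ) ^ k))) := by
  unfold H
  refine abs_sum_le' _ _ _ _ (by positivity) (card_A_le hf hn.le) ?_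
  intro p hp
  obtain ⟨h1, h2, h3⟩ := mem_A.mp hp
  have hpd := natDegree_A hp
  refine abs_sum_le' _ _ _ _ (by positivity) (card_A_le h1 (by omega)) ?_
  intro u hu
  have hud := natDegree_A hu
  refine abs_sum_le' _ _ _ _ (by positivity) (card_A_le h2 (by omega)) ?_
  intro v hv
  have hvd := natDegree_A hv
  have e1 : (p.2.natDegree : ℝ) ≤ n := by exact_mod_cast (by omega : p.2.natDegree ≤ n)
  have e2 : (u.2.natDegree : ℝ) + v.2.natDegree ≤ n := by
    exact_mod_cast (by omega : u.2.natDegree + v.2.natDegree ≤ n)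
  have e3 : (p.2.natDegree : ℝ) ^ j * ((u.2.natDegree : ℝ) + v.2.natDegree) ^ k ≤
      (n : ℝ) ^ j * (n : ℝ) ^ k := by gcongr
  have e4 : 0 ≤ (p.2.natDegree : ℝ) ^ j * ((u.2.natDegree : ℝ) + v.2.natDegree) ^ k := by
    positivity
  rw [abs_mul, abs_mul, abs_of_nonneg e4]
  have m1 := abs_mu_le u.2
  have m2 := abs_mu_le v.1
  have m3 : |mu v.1| * ((p.2.natDegree : ℝ) ^ j * ((u.2.natDegree : ℝ) + v.2.natDegree) ^ k) ≤
      1 * ((p.2.natDegree : ℝ) ^ j * ((u.2.natDegree : ℝ) + v.2.natDegree) ^ k) :=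
    mul_le_mul_of_nonneg_right m2 e4
  have m4 := mul_le_mul_of_nonneg_right m1
    (mul_nonneg (abs_nonneg (mu v.1)) e4)
  linarith

lemma sum_mu_deg (m : ℕ) (θ : ℕ → ℕ → ℝ) :
    ∑ f ∈ M F m, ∑ p ∈ A f, mu p.1 * θ p.1.natDegree p.2.natDegree =
      (Fintype.card F : ℝ) ^ m *
        ∑ z ∈ Finset.HasAntidiagonal.antidiagonal m, c z.1 * θ z.1 z.2 := by
  rw [sum_M_A m (fun a b => mu a * θ a.natDegree b.natDegree), Finset.mul_sum]
  apply Finset.sum_congr rfl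
  intro z hz
  rw [Finset.HasAntidiagonal.mem_antidiagonal] at hz
  have : ∀ a ∈ M F z.1, ∑ b ∈ M F z.2, mu a * θ a.natDegree b.natDegree =
      mu a * ((Fintype.card F : ℝ) ^ z.2 * θ z.1 z.2) := by
    intro a ha
    rw [← Finset.mul_sum]
    have : ∀ b ∈ M F z.2, θ a.natDegree b.natDegree = θ z.1 z.2 := by
      intro b hb
      rw [(mem_M.mp ha).2, (mem_M.mp hb).2]
    rw [Finset.sum_congr rfl this, Finset.sum_const, card_M, nsmul_eq_mul]
    push_cast; rfl
  rw [Finset.sum_congr rfl this, ← Finset.sum_mul, sum_mu_M, ← hz, pow_add]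
  ring

lemma sum_H (j k n : ℕ) :
    ∑ f ∈ M F n, H j k f = (Fintype.card F : ℝ) ^ n *
      ∑ x ∈ Finset.HasAntidiagonal.antidiagonal n,
        ∑ y ∈ Finset.HasAntidiagonal.antidiagonal x.1, c y.1 *
        ∑ z ∈ Finset.HasAntidiagonal.antidiagonal x.2, c z.1 *
          ((x.2 : ℝ) ^ j * ((y.1 : ℝ) + z.2) ^ k) := by
  unfold H
  rw [sum_M_A n (fun a b => ∑ u ∈ A a, ∑ v ∈ A b, mu u.2 * (mu v.1 *
    ((b.natDegree : ℝ) ^ j * ((u.2.natDegree : ℝ) + v.2.natDegree) ^ k))), Finset.mul_sum]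
  apply Finset.sum_congr rfl
  intro x hx
  rw [Finset.HasAntidiagonal.mem_antidiagonal] at hx
  have h1 : ∀ a ∈ M F x.1, ∑ b ∈ M F x.2, ∑ u ∈ A a, ∑ v ∈ A b, mu u.2 * (mu v.1 *
      ((b.natDegree : ℝ) ^ j * ((u.2.natDegree : ℝ) + v.2.natDegree) ^ k)) =
      ∑ u ∈ A a, mu u.1 * ((Fintype.card F : ℝ) ^ x.2 *
        ∑ z ∈ Finset.HasAntidiagonal.antidiagonal x.2, c z.1 *
          ((x.2 : ℝ) ^ j * ((u.1.natDegree : ℝ) + z.2) ^ k)) := by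
    intro a _
    rw [Finset.sum_comm, A_comm a (fun w u => mu w * ((Fintype.card F : ℝ) ^ x.2 *
        ∑ z ∈ Finset.HasAntidiagonal.antidiagonal x.2, c z.1 *
          ((x.2 : ℝ) ^ j * ((w.natDegree : ℝ) + z.2) ^ k)))]
    apply Finset.sum_congr rfl
    intro u _
    rw [← sum_mu_deg x.2 (fun _ t => (x.2 : ℝ) ^ j * ((u.2.natDegree : ℝ) + t) ^ k),
      Finset.mul_sum]
    apply Finset.sum_congr rfl
    intro b hb
    rw [Finset.mul_sum, (mem_M.mp hb).2]
  rw [Finset.sum_congr rfl h1, sum_mu_deg x.1 (fun α _ => (Fintype.card F : ℝ) ^ x.2 *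
        ∑ z ∈ Finset.HasAntidiagonal.antidiagonal x.2, c z.1 *
          ((x.2 : ℝ) ^ j * ((α : ℝ) + z.2) ^ k)), ← hx, pow_add, mul_assoc]
  congr 1
  rw [Finset.mul_sum]
  apply Finset.sum_congr rfl
  intro y _
  ring

/-- `m ^ j - (m - 1) ^ j`, and `0` for `m = 0`. -/
noncomputable def W (j m : ℕ) : ℝ := if m = 0 then 0 else (m : ℝ) ^ j - ((m : ℝ) - 1) ^ j

lemma sum_c_pow (j m : ℕ) :
    ∑ z ∈ Finset.HasAntidiagonal.antidiagonal m, c z.1 * (z.2 : ℝ) ^ (j + 1) = W (j + 1) m := by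
  rcases m with _ | m
  · simp [W]
  · rw [sum_c m (fun t => (t : ℝ) ^ (j + 1))]
    simp [W]

lemma antidiag_assoc (n : ℕ) (φ : ℕ → ℕ → ℕ → ℝ) :
    ∑ x ∈ Finset.HasAntidiagonal.antidiagonal n,
      ∑ y ∈ Finset.HasAntidiagonal.antidiagonal x.1, φ y.1 y.2 x.2 =
    ∑ x ∈ Finset.HasAntidiagonal.antidiagonal n,
      ∑ y ∈ Finset.HasAntidiagonal.antidiagonal x.1, φ y.1 x.2 y.2 := by
  rw [Finset.sum_sigma', Finset.sum_sigma']
  refine Finset.sum_nbij' (fun x => ⟨(x.2.1 + x.1.2, x.2.2), (x.2.1, x.1.2)⟩)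
    (fun x => ⟨(x.2.1 + x.1.2, x.2.2), (x.2.1, x.1.2)⟩) ?_ ?_ ?_ ?_ ?_
  · rintro ⟨⟨a, b⟩, ⟨d, e⟩⟩
    simp only [Finset.mem_sigma, Finset.HasAntidiagonal.mem_antidiagonal]
    rintro ⟨h1, h2⟩
    refine ⟨?_, trivial⟩
    change d + b + e = n
    omega
  · rintro ⟨⟨a, b⟩, ⟨d, e⟩⟩
    simp only [Finset.mem_sigma, Finset.HasAntidiagonal.mem_antidiagonal]
    rintro ⟨h1, h2⟩
    refine ⟨?_, trivial⟩
    change d + b + e = n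
    omega
  · rintro ⟨⟨a, b⟩, ⟨d, e⟩⟩
    simp only [Finset.mem_sigma, Finset.HasAntidiagonal.mem_antidiagonal]
    rintro ⟨-, rfl⟩; rfl
  · rintro ⟨⟨a, b⟩, ⟨d, e⟩⟩
    simp only [Finset.mem_sigma, Finset.HasAntidiagonal.mem_antidiagonal]
    rintro ⟨-, rfl⟩; rfl
  · rintro ⟨⟨a, b⟩, ⟨d, e⟩⟩ _
    rfl

lemma main_sum (j k n : ℕ) :
    ∑ x ∈ Finset.HasAntidiagonal.antidiagonal n,
        ∑ y ∈ Finset.HasAntidiagonal.antidiagonal x.1, c y.1 *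
        ∑ z ∈ Finset.HasAntidiagonal.antidiagonal x.2, c z.1 *
          ((x.2 : ℝ) ^ (j + 1) * ((y.1 : ℝ) + z.2) ^ (k + 1)) =
      ∑ d ∈ Finset.range (n + 1), W (j + 1) d * W (k + 1) d := by
  have h1 : ∀ α m : ℕ, ∑ z ∈ Finset.HasAntidiagonal.antidiagonal m, c z.1 *
          ((m : ℝ) ^ (j + 1) * ((α : ℝ) + z.2) ^ (k + 1)) =
          (m : ℝ) ^ (j + 1) * W (k + 1) (α + m) := by
    intro α m
    rcases m with _ | m
    · simp
    · rw [sum_c m (fun t => ((m + 1 : ℕ) : ℝ) ^ (j + 1) * ((α : ℝ) + t) ^ (k + 1)), ← mul_sub]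
      congr 1
      rw [W, if_neg (by omega)]
      push_cast
      congr 2
      ring
  simp only [h1]
  rw [antidiag_assoc n (fun a _ m => c a * ((m : ℝ) ^ (j + 1) * W (k + 1) (a + m)))]
  rw [Finset.Nat.sum_antidiagonal_eq_sum_range_succ_mk]
  apply Finset.sum_congr rfl
  intro d _
  rw [← sum_c_pow j d, Finset.sum_mul]
  apply Finset.sum_congr rfl
  intro y hy
  rw [Finset.HasAntidiagonal.mem_antidiagonal] at hy
  simp only at hy
  rw [hy, mul_assoc]

lemma sum_vmj_M (j n : ℕ) :
    ∑ f ∈ M F n, (polyVMJ (j + 1) f : ℝ) = (Fintype.card F : ℝ) ^ n * W (j + 1) n := by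
  rw [← sum_c_pow j n, ← sum_mu_deg n (fun _ t => (t : ℝ) ^ (j + 1))]
  exact Finset.sum_congr rfl fun f hf => vmj_eq j f (mem_M.mp hf).1

lemma approx (j k n : ℕ) :
    |∑ f ∈ M F n, (polyVMJ (j + 1) f : ℝ) * polyVMJ (k + 1) f -
      ∑ f ∈ M F n, H (j + 1) (k + 1) f| ≤ (n * (Fintype.card F : ℝ) ^ (n - 1)) *
        ((n : ℝ) ^ (j + 1) * (n : ℝ) ^ (k + 1) +
          2 ^ n * (2 ^ n * (2 ^ n * ((n : ℝ) ^ (j + 1) * (n : ℝ) ^ (k + 1))))) := by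
  classical
  rw [← Finset.sum_sub_distrib, ← Finset.sum_filter_add_sum_filter_not (M F n) Squarefree,
    Finset.sum_eq_zero, zero_add]
  · refine abs_sum_le' _ _ _ _ (by positivity) (by exact_mod_cast card_not_squarefree n) ?_
    intro f hf
    rw [Finset.mem_filter, mem_M] at hf
    obtain ⟨⟨hM, hn⟩, -⟩ := hf
    refine (abs_sub _ _).trans (add_le_add ?_ (abs_H_le _ _ n hM hn))
    rw [abs_of_nonneg (by positivity)]
    have h1 : (polyVMJ (j + 1) f : ℝ) ≤ (n : ℝ) ^ (j + 1) := by
      exact_mod_cast hn ▸ vmj_le j f hM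
    have h2 : (polyVMJ (k + 1) f : ℝ) ≤ (n : ℝ) ^ (k + 1) := by
      exact_mod_cast hn ▸ vmj_le k f hM
    gcongr
  · intro f hf
    rw [Finset.mem_filter, mem_M] at hf
    rw [H_eq j k hf.1.1 hf.2, sub_self]

end CovVM

/-- Equation (1.13) of Rodgers, The covariance of almost-primes in F_q[T]:
`lim_{q→∞} q^{-n} Σ_{f ∈ M_n} Λ̃_j(f) Λ̃_k(f) = Σ_{d=1}^{n-1} (d^j−(d−1)^j)(d^k−(d−1)^k)`. -/
theorem covariance_of_centered_vonMangoldt (j k n : ℕ) (hj : 1 ≤ j) (hk : 1 ≤ k) (hn : 1 ≤ n) :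
    ∀ ε : ℝ, 0 < ε → ∃ Q : ℕ, ∀ (F : Type) [Field F] [Fintype F],
      Q ≤ Fintype.card F →
      |((Fintype.card F : ℝ) ^ n)⁻¹ *
          (∑ᶠ f ∈ {f : F[X] | f.Monic ∧ f.natDegree = n}, polyVMT j f * polyVMT k f)
        - ∑ d ∈ Finset.Icc 1 (n - 1),
            ((d : ℝ) ^ j - ((d : ℝ) - 1) ^ j) * ((d : ℝ) ^ k - ((d : ℝ) - 1) ^ k)| < ε := by
  obtain ⟨j, rfl⟩ := Nat.exists_eq_add_of_le' hj
  obtain ⟨k, rfl⟩ := Nat.exists_eq_add_of_le' hk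
  obtain ⟨n, rfl⟩ := Nat.exists_eq_add_of_le' hn
  intro ε hε
  set B : ℝ := ((n + 1 : ℕ) : ℝ) ^ (j + 1) * ((n + 1 : ℕ) : ℝ) ^ (k + 1) +
    2 ^ (n + 1) * (2 ^ (n + 1) * (2 ^ (n + 1) *
      (((n + 1 : ℕ) : ℝ) ^ (j + 1) * ((n + 1 : ℕ) : ℝ) ^ (k + 1)))) with hB
  obtain ⟨Q, hQ⟩ := exists_nat_gt (((n + 1 : ℕ) : ℝ) * B / ε)
  refine ⟨Q, ?_⟩
  intro F _ _ hF
  have hq : (0 : ℝ) < Fintype.card F := by exact_mod_cast Fintype.card_pos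
  have hset : {f : F[X] | f.Monic ∧ f.natDegree = n + 1} = (CovVM.M F (n + 1) : Set F[X]) := by
    ext f
    simp [CovVM.mem_M]
  rw [hset, finsum_mem_coe_finset]
  have hW : ∀ i m : ℕ, CovVM.W (i + 1) (m + 1) =
      ((m + 1 : ℕ) : ℝ) ^ (i + 1) - (((m + 1 : ℕ) : ℝ) - 1) ^ (i + 1) := by
    intro i m
    rw [CovVM.W, if_neg (by omega)]
  have htarget : ∑ d ∈ Finset.Icc 1 (n + 1 - 1),
        ((d : ℝ) ^ (j + 1) - ((d : ℝ) - 1) ^ (j + 1)) *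
          ((d : ℝ) ^ (k + 1) - ((d : ℝ) - 1) ^ (k + 1)) =
      ∑ d ∈ Finset.range (n + 1), CovVM.W (j + 1) d * CovVM.W (k + 1) d := by
    rw [Finset.sum_range_succ', Nat.add_sub_cancel, ← Finset.Ico_succ_right_eq_Icc,
      Finset.sum_Ico_eq_sum_range]
    simp only [hW]
    simp [CovVM.W, add_comm]
  have hsum : ∑ f ∈ CovVM.M F (n + 1), polyVMT (j + 1) f * polyVMT (k + 1) f =
      ∑ f ∈ CovVM.M F (n + 1), (polyVMJ (j + 1) f : ℝ) * polyVMJ (k + 1) f -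
        (Fintype.card F : ℝ) ^ (n + 1) * (CovVM.W (j + 1) (n + 1) * CovVM.W (k + 1) (n + 1)) := by
    have h1 : ∀ f ∈ CovVM.M F (n + 1), polyVMT (j + 1) f * polyVMT (k + 1) f =
        (polyVMJ (j + 1) f : ℝ) * polyVMJ (k + 1) f
          - (polyVMJ (j + 1) f : ℝ) * CovVM.W (k + 1) (n + 1)
          - (polyVMJ (k + 1) f : ℝ) * CovVM.W (j + 1) (n + 1)
          + CovVM.W (j + 1) (n + 1) * CovVM.W (k + 1) (n + 1) := by
      intro f hf
      rw [polyVMT, polyVMT, (CovVM.mem_M.mp hf).2, ← hW, ← hW]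
      ring
    rw [Finset.sum_congr rfl h1, Finset.sum_add_distrib, Finset.sum_sub_distrib,
      Finset.sum_sub_distrib, ← Finset.sum_mul, ← Finset.sum_mul, CovVM.sum_vmj_M,
      CovVM.sum_vmj_M, Finset.sum_const, CovVM.card_M, nsmul_eq_mul]
    push_cast
    ring
  have hap := CovVM.approx (F := F) j k (n + 1)
  rw [CovVM.sum_H, CovVM.main_sum, Finset.sum_range_succ _ (n + 1), ← htarget, ← hB,
    Nat.add_sub_cancel] at hap
  rw [hsum]
  set S := ∑ f ∈ CovVM.M F (n + 1), (polyVMJ (j + 1) f : ℝ) * polyVMJ (k + 1) f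
  set q : ℝ := (Fintype.card F : ℝ)
  set T := ∑ d ∈ Finset.Icc 1 (n + 1 - 1),
        ((d : ℝ) ^ (j + 1) - ((d : ℝ) - 1) ^ (j + 1)) *
          ((d : ℝ) ^ (k + 1) - ((d : ℝ) - 1) ^ (k + 1))
  set w := CovVM.W (j + 1) (n + 1) * CovVM.W (k + 1) (n + 1)
  have hqn : 0 < q ^ (n + 1) := by positivity
  have e1 : (q ^ (n + 1))⁻¹ * (S - q ^ (n + 1) * w) - T =
      (q ^ (n + 1))⁻¹ * (S - q ^ (n + 1) * (T + w)) := by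
    field_simp
    ring
  rw [e1, abs_mul, abs_of_pos (inv_pos.mpr hqn), inv_mul_lt_iff₀ hqn]
  refine hap.trans_lt ?_
  have hQq : (Q : ℝ) ≤ q := Nat.cast_le.mpr hF
  have h2 : ((n + 1 : ℕ) : ℝ) * B < q * ε := by
    rw [div_lt_iff₀ hε] at hQ
    nlinarith
  have h3 : 0 < q ^ n := by positivity
  calc _ = q ^ n * (((n + 1 : ℕ) : ℝ) * B) := by ring
    _ < q ^ n * (q * ε) := mul_lt_mul_of_pos_left h2 h3
    _ = _ := by ring
end

section
/- For all integers N ≥ 1, j ≥ 1, k ≥ 1 and n ≥ 1: ∫_{U(N)} H_j^{(n)}(g) · conj(H_k^{(n)}(g)) dg = Σ_{d=1}^{min(n,N)} (d^j − (d−1)^j)(d^k − (d−1)^k), where the integral is with respect to Haar probability measure on U(N). -/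
open Matrix MeasureTheory

noncomputable instance (N : ℕ) : MeasurableSpace (Matrix.unitaryGroup (Fin N) ℂ) := borel _
instance (N : ℕ) : BorelSpace (Matrix.unitaryGroup (Fin N) ℂ) := ⟨rfl⟩

/- The quantities `H_j^{(n)}(g)`: `H_1^{(n)}(g) = −Tr(g^n)` and, for `j ≥ 2`,
`H_j^{(n)} = Σ_{ℓ+λ=n, ℓ,λ≥1} H_1^{(λ)} H_{j−1}^{(ℓ)} + n·H_{j−1}^{(n)}`
(here `H_1^{(λ)} = −Tr(g^λ)` is inlined in the recursion). -/
noncomputable def matH {N : ℕ} : ℕ → ℕ → Matrix (Fin N) (Fin N) ℂ → ℂ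
  | 0, _, _ => 0
  | 1, n, g => -((g ^ n).trace)
  | (j + 2), n, g =>
      (∑ ℓ ∈ Finset.Ico 1 n, (-((g ^ (n - ℓ)).trace)) * matH (j + 1) ℓ g)
        + (n : ℂ) * matH (j + 1) n g

set_option linter.unusedSectionVars false

section HaarCalculus

variable {N : ℕ}

instance compactSpace_unitaryGroup (N : ℕ) : CompactSpace (Matrix.unitaryGroup (Fin N) ℂ) := by
  have hcl : IsClosed ((Matrix.unitaryGroup (Fin N) ℂ : Set (Matrix (Fin N) (Fin N) ℂ))) := by
    have : ((Matrix.unitaryGroup (Fin N) ℂ : Set (Matrix (Fin N) (Fin N) ℂ)))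
        = {A | A * star A = 1} := by
      ext A
      simp [Matrix.mem_unitaryGroup_iff]
    rw [this]
    exact isClosed_eq (by fun_prop) continuous_const
  have hsub : ((Matrix.unitaryGroup (Fin N) ℂ : Set (Matrix (Fin N) (Fin N) ℂ))) ⊆
      Set.pi Set.univ (fun _ : Fin N => Set.pi Set.univ
        (fun _ : Fin N => Metric.closedBall (0 : ℂ) 1)) := by
    intro A hA i _ j _
    simpa using entry_norm_bound_of_unitary hA i j
  have hc : IsCompact (Set.pi Set.univ (fun _ : Fin N => Set.pi Set.univ
        (fun _ : Fin N => Metric.closedBall (0 : ℂ) 1))) :=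
    isCompact_univ_pi fun _ => isCompact_univ_pi fun _ => isCompact_closedBall _ _
  exact isCompact_iff_compactSpace.mp (hc.of_isClosed_subset hcl hsub)

theorem integrable_cont (μ : Measure (Matrix.unitaryGroup (Fin N) ℂ)) [IsProbabilityMeasure μ]
    {f : Matrix.unitaryGroup (Fin N) ℂ → ℂ} (hf : Continuous f) : Integrable f μ :=
  hf.integrable_of_hasCompactSupport (HasCompactSupport.of_compactSpace f)

section
attribute [local instance] Matrix.linftyOpNormedRing Matrix.linftyOpNormedAlgebra

/-- the one-parameter subgroup with generator `X` -/
noncomputable def expU (X : Matrix (Fin N) (Fin N) ℂ)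
    (hX : X ∈ skewAdjoint (Matrix (Fin N) (Fin N) ℂ)) (t : ℝ) :
    Matrix.unitaryGroup (Fin N) ℂ :=
  ⟨NormedSpace.exp (t • X), by
    have h : (t • X)ᴴ = -(t • X) := skewAdjoint.smul_mem t hX
    rw [Matrix.mem_unitaryGroup_iff, Matrix.star_eq_conjTranspose, ← Matrix.exp_conjTranspose, h,
      Matrix.exp_neg]
    exact Matrix.mul_nonsing_inv _ ((Matrix.isUnit_iff_isUnit_det _).mp (Matrix.isUnit_exp _))⟩

theorem expU_entry (X : Matrix (Fin N) (Fin N) ℂ)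
    (hX : X ∈ skewAdjoint (Matrix (Fin N) (Fin N) ℂ)) (t : ℝ) (i j : Fin N) :
    HasDerivAt (fun t : ℝ => (expU X hX t : Matrix (Fin N) (Fin N) ℂ) i j)
      ((X * (expU X hX t : Matrix (Fin N) (Fin N) ℂ)) i j) t := by
  let _ : NormedAlgebra ℚ (Matrix (Fin N) (Fin N) ℂ) := NormedAlgebra.restrictScalars ℚ ℂ _
  have h := hasDerivAt_exp_smul_const' (𝕂 := ℝ) X t
  have h2 := (LinearMap.toContinuousLinearMap
    (Matrix.entryLinearMap ℝ ℂ i j)).hasFDerivAt.comp_hasDerivAt t h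
  exact h2
end

/-- `G` is the left-invariant gradient of `f`. -/
def HasGrad (f : Matrix.unitaryGroup (Fin N) ℂ → ℂ)
    (G : Matrix.unitaryGroup (Fin N) ℂ → Matrix (Fin N) (Fin N) ℂ) : Prop :=
  Continuous f ∧ Continuous G ∧
    ∀ (X : Matrix (Fin N) (Fin N) ℂ) (hX : X ∈ skewAdjoint (Matrix (Fin N) (Fin N) ℂ))
      (g : Matrix.unitaryGroup (Fin N) ℂ) (t : ℝ),
      HasDerivAt (fun t : ℝ => f (expU X hX t * g)) ((X * G (expU X hX t * g)).trace) t

theorem HasGrad.const (c : ℂ) : HasGrad (N := N) (fun _ => c) (fun _ => 0) :=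
  ⟨continuous_const, continuous_const, fun X hX g t => by simpa using hasDerivAt_const t c⟩

theorem HasGrad.add {f f' : Matrix.unitaryGroup (Fin N) ℂ → ℂ}
    {G G' : Matrix.unitaryGroup (Fin N) ℂ → Matrix (Fin N) (Fin N) ℂ}
    (h : HasGrad f G) (h' : HasGrad f' G') :
    HasGrad (fun g => f g + f' g) (fun g => G g + G' g) :=
  ⟨h.1.add h'.1, h.2.1.add h'.2.1, fun X hX g t => by
    have := (h.2.2 X hX g t).add (h'.2.2 X hX g t)
    rw [Matrix.mul_add, Matrix.trace_add]; exact this⟩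

theorem HasGrad.mul {f f' : Matrix.unitaryGroup (Fin N) ℂ → ℂ}
    {G G' : Matrix.unitaryGroup (Fin N) ℂ → Matrix (Fin N) (Fin N) ℂ}
    (h : HasGrad f G) (h' : HasGrad f' G') :
    HasGrad (fun g => f g * f' g) (fun g => f g • G' g + f' g • G g) :=
  ⟨h.1.mul h'.1, (h.1.smul h'.2.1).add (h'.1.smul h.2.1), fun X hX g t => by
    have := (h.2.2 X hX g t).mul (h'.2.2 X hX g t)
    rw [Matrix.mul_add, Matrix.trace_add]
    refine this.congr_deriv ?_
    simp
    ring⟩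

theorem HasGrad.const_mul {f : Matrix.unitaryGroup (Fin N) ℂ → ℂ}
    {G : Matrix.unitaryGroup (Fin N) ℂ → Matrix (Fin N) (Fin N) ℂ}
    (c : ℂ) (h : HasGrad f G) :
    HasGrad (fun g => c * f g) (fun g => c • G g) := by
  simpa using (HasGrad.const c).mul h

theorem HasGrad.sum {ι : Type*} (s : Finset ι) {f : ι → Matrix.unitaryGroup (Fin N) ℂ → ℂ}
    {G : ι → Matrix.unitaryGroup (Fin N) ℂ → Matrix (Fin N) (Fin N) ℂ}
    (h : ∀ i ∈ s, HasGrad (f i) (G i)) :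
    HasGrad (fun g => ∑ i ∈ s, f i g) (fun g => ∑ i ∈ s, G i g) := by
  classical
  induction s using Finset.induction_on with
  | empty => simpa using HasGrad.const (N := N) 0
  | insert a s ha ih =>
    simp only [Finset.sum_insert ha]
    exact (h a (Finset.mem_insert_self _ _)).add
      (ih fun i hi => h i (Finset.mem_insert_of_mem hi))

theorem HasGrad.conj {f : Matrix.unitaryGroup (Fin N) ℂ → ℂ}
    {G : Matrix.unitaryGroup (Fin N) ℂ → Matrix (Fin N) (Fin N) ℂ} (h : HasGrad f G) :
    HasGrad (fun g => (starRingEnd ℂ) (f g)) (fun g => -(G g)ᴴ) := by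
  refine ⟨Complex.continuous_conj.comp h.1, h.2.1.matrix_conjTranspose.neg, fun X hX g t => ?_⟩
  have h1 := (h.2.2 X hX g t).star
  refine h1.congr_deriv ?_
  rw [← Matrix.trace_conjTranspose, Matrix.conjTranspose_mul]
  have hX' : Xᴴ = -X := hX
  rw [hX', Matrix.trace_mul_comm]
  simp

theorem HasGrad.congr {f : Matrix.unitaryGroup (Fin N) ℂ → ℂ}
    {G G' : Matrix.unitaryGroup (Fin N) ℂ → Matrix (Fin N) (Fin N) ℂ} (h : HasGrad f G)
    (hG : ∀ g, G g = G' g) : HasGrad f G' := by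
  have : G = G' := funext hG
  rwa [← this]

theorem HasGrad.congr' {f f' : Matrix.unitaryGroup (Fin N) ℂ → ℂ}
    {G G' : Matrix.unitaryGroup (Fin N) ℂ → Matrix (Fin N) (Fin N) ℂ} (h : HasGrad f G)
    (hf : ∀ g, f g = f' g) (hG : ∀ g, G g = G' g) : HasGrad f' G' := by
  have : G = G' := funext hG
  have h2 : f = f' := funext hf
  rwa [← this, ← h2]

theorem hasGrad_entry (i j : Fin N) :
    HasGrad (fun g : Matrix.unitaryGroup (Fin N) ℂ => (g : Matrix (Fin N) (Fin N) ℂ) i j)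
      (fun g => (g : Matrix (Fin N) (Fin N) ℂ) * Matrix.single j i 1) := by
  refine ⟨continuous_subtype_val.matrix_elem i j, by fun_prop, fun X hX g t => ?_⟩
  have h : HasDerivAt (fun t : ℝ => ∑ l, (expU X hX t : Matrix (Fin N) (Fin N) ℂ) i l *
      (g : Matrix (Fin N) (Fin N) ℂ) l j)
      (∑ l, (X * (expU X hX t : Matrix (Fin N) (Fin N) ℂ)) i l *
        (g : Matrix (Fin N) (Fin N) ℂ) l j) t :=
    HasDerivAt.fun_sum fun l _ => (expU_entry X hX t i l).mul_const _
  rw [← Matrix.mul_apply] at h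
  have e : (X * (((expU X hX t * g : Matrix.unitaryGroup (Fin N) ℂ) :
      Matrix (Fin N) (Fin N) ℂ) * Matrix.single j i 1)).trace
      = (X * (expU X hX t : Matrix (Fin N) (Fin N) ℂ) * (g : Matrix (Fin N) (Fin N) ℂ)) i j := by
    rw [← Matrix.mul_assoc, Matrix.trace_mul_single]
    simp [Matrix.mul_assoc]
  exact h.congr_deriv e.symm

theorem hasGrad_pow_entry (k : ℕ) (i j : Fin N) :
    HasGrad (fun g : Matrix.unitaryGroup (Fin N) ℂ => ((g : Matrix (Fin N) (Fin N) ℂ) ^ k) i j)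
      (fun g => ∑ a ∈ Finset.range k, (g : Matrix (Fin N) (Fin N) ℂ) ^ (k - a) *
        Matrix.single j i 1 * (g : Matrix (Fin N) (Fin N) ℂ) ^ a) := by
  induction k generalizing i j with
  | zero => simpa using HasGrad.const (N := N) ((1 : Matrix (Fin N) (Fin N) ℂ) i j)
  | succ k ih =>
    refine (HasGrad.sum Finset.univ fun l _ => (hasGrad_entry i l).mul (ih l j)).congr' ?_ ?_
    · intro g
      rw [pow_succ', Matrix.mul_apply]
    · intro g
      set A := (g : Matrix (Fin N) (Fin N) ℂ)
      rw [Finset.sum_range_succ', Finset.sum_add_distrib]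
      congr 1
      · simp only [Finset.smul_sum]
        rw [Finset.sum_comm]
        refine Finset.sum_congr rfl fun a _ => ?_
        rw [Nat.add_sub_add_right]
        have h1 : (Matrix.single j i 1 : Matrix (Fin N) (Fin N) ℂ) * A
            = ∑ l, A i l • Matrix.single j l 1 := by
          ext r s
          simp [Matrix.sum_apply, Matrix.single_apply, Matrix.mul_apply, ite_and]
        rw [pow_succ' A a, ← Matrix.mul_assoc, Matrix.mul_assoc _ _ A, h1]
        simp only [Matrix.mul_sum, Matrix.sum_mul, Matrix.mul_smul, Matrix.smul_mul]
      · have h1 : A ^ k * (Matrix.single j i 1 : Matrix (Fin N) (Fin N) ℂ)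
            = ∑ l, (A ^ k) l j • Matrix.single l i 1 := by
          ext r s
          simp [Matrix.sum_apply, Matrix.single_apply, Matrix.mul_apply, ite_and]
        simp only [Nat.sub_zero, pow_zero, Matrix.mul_one]
        rw [pow_succ' A k, Matrix.mul_assoc, h1, Matrix.mul_sum]
        simp only [Matrix.mul_smul]

theorem hasGrad_trace (k : ℕ) :
    HasGrad (fun g : Matrix.unitaryGroup (Fin N) ℂ => ((g : Matrix (Fin N) (Fin N) ℂ) ^ k).trace)
      (fun g => (k : ℂ) • (g : Matrix (Fin N) (Fin N) ℂ) ^ k) := by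
  refine (HasGrad.sum Finset.univ fun l _ => hasGrad_pow_entry k l l).congr' ?_ ?_
  · intro g; rfl
  · intro g
    set A := (g : Matrix (Fin N) (Fin N) ℂ)
    rw [Finset.sum_comm]
    have h1 : ∑ l, (Matrix.single l l 1 : Matrix (Fin N) (Fin N) ℂ) = 1 := by
      ext r s
      simp [Matrix.sum_apply, Matrix.single_apply, Matrix.one_apply, ite_and]
    have : ∀ a ∈ Finset.range k, ∑ l, A ^ (k - a) * Matrix.single l l 1 * A ^ a = A ^ k := by
      intro a ha
      rw [← Matrix.sum_mul, ← Matrix.mul_sum, h1, Matrix.mul_one, ← pow_add,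
        Nat.sub_add_cancel (Finset.mem_range.mp ha).le]
    rw [Finset.sum_congr rfl this, Finset.sum_const, Finset.card_range, Nat.cast_smul_eq_nsmul]

variable (μ : Measure (Matrix.unitaryGroup (Fin N) ℂ)) [μ.IsHaarMeasure] [IsProbabilityMeasure μ]

theorem HasGrad.integral_skew {f : Matrix.unitaryGroup (Fin N) ℂ → ℂ}
    {G : Matrix.unitaryGroup (Fin N) ℂ → Matrix (Fin N) (Fin N) ℂ} (h : HasGrad f G)
    (X : Matrix (Fin N) (Fin N) ℂ) (hX : X ∈ skewAdjoint (Matrix (Fin N) (Fin N) ℂ)) :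
    ∫ g, (X * G g).trace ∂μ = 0 := by
  have hc : Continuous fun g => (X * G g).trace :=
    (continuous_const.mul h.2.1).matrix_trace
  obtain ⟨C, hC⟩ := (isCompact_range hc).isBounded.exists_norm_le
  have key := hasDerivAt_integral_of_dominated_loc_of_deriv_le (μ := μ) (𝕜 := ℝ)
    (F := fun t g => f (expU X hX t * g)) (F' := fun t g => (X * G (expU X hX t * g)).trace)
    (x₀ := (0 : ℝ)) (s := Set.univ) (bound := fun _ => C) Filter.univ_mem
    (Filter.Eventually.of_forall fun t =>
      (h.1.comp (continuous_const.mul continuous_id)).aestronglyMeasurable)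
    (integrable_cont μ (h.1.comp (continuous_const.mul continuous_id)))
    ((hc.comp (continuous_const.mul continuous_id)).aestronglyMeasurable)
    (Filter.Eventually.of_forall fun g t _ => hC _ ⟨_, rfl⟩)
    (integrable_const C)
    (Filter.Eventually.of_forall fun g t _ => h.2.2 X hX g t)
  have h2 := key.2
  simp only [integral_mul_left_eq_self] at h2
  rw [integral_mul_left_eq_self (fun g => (X * G g).trace)] at h2
  exact h2.unique (hasDerivAt_const _ _)

theorem HasGrad.integral_entry {f : Matrix.unitaryGroup (Fin N) ℂ → ℂ}
    {G : Matrix.unitaryGroup (Fin N) ℂ → Matrix (Fin N) (Fin N) ℂ} (h : HasGrad f G)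
    (i j : Fin N) : ∫ g, G g i j ∂μ = 0 := by
  set X : Matrix (Fin N) (Fin N) ℂ := Matrix.single j i 1
  have hA : X - Xᴴ ∈ skewAdjoint (Matrix (Fin N) (Fin N) ℂ) := by
    simp [skewAdjoint.mem_iff, Matrix.star_eq_conjTranspose]
  have hB : Complex.I • (X + Xᴴ) ∈ skewAdjoint (Matrix (Fin N) (Fin N) ℂ) := by
    simp [skewAdjoint.mem_iff, Matrix.star_eq_conjTranspose, add_comm]
  have h1 := h.integral_skew μ _ hA
  have h2 := h.integral_skew μ _ hB
  have hc : ∀ Y : Matrix (Fin N) (Fin N) ℂ, Integrable (fun g => (Y * G g).trace) μ := fun Y =>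
    integrable_cont μ (continuous_const.mul h.2.1).matrix_trace
  have h3 : ∀ g, G g i j = (1/2 : ℂ) * ((X - Xᴴ) * G g).trace
      + (-Complex.I/2) * ((Complex.I • (X + Xᴴ)) * G g).trace := by
    intro g
    have : G g i j = (X * G g).trace := by simp [X, Matrix.trace_single_mul]
    rw [this]
    simp only [Matrix.sub_mul, Matrix.smul_mul, Matrix.add_mul, Matrix.trace_sub,
      Matrix.trace_smul, Matrix.trace_add, smul_eq_mul]
    linear_combination (((X * G g).trace + (Xᴴ * G g).trace) / 2) * Complex.I_mul_I
  simp_rw [h3]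
  rw [integral_add ((hc _).const_mul _) ((hc _).const_mul _), integral_const_mul,
    integral_const_mul, h1, h2]
  simp

/-- Schwinger-Dyson equation -/
theorem HasGrad.schwinger_dyson {f : Matrix.unitaryGroup (Fin N) ℂ → ℂ}
    {G : Matrix.unitaryGroup (Fin N) ℂ → Matrix (Fin N) (Fin N) ℂ} (h : HasGrad f G) (k : ℕ) :
    ∫ g : Matrix.unitaryGroup (Fin N) ℂ,
      ((∑ a ∈ Finset.range k, ((g : Matrix (Fin N) (Fin N) ℂ) ^ a).trace *
        ((g : Matrix (Fin N) (Fin N) ℂ) ^ (k - a)).trace) * f g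
        + ((g : Matrix (Fin N) (Fin N) ℂ) ^ k * G g).trace) ∂μ = 0 := by
  have h1 : ∀ i j : Fin N, _ := fun i j => (hasGrad_pow_entry k i j).mul h
  have h2 : ∀ g : Matrix.unitaryGroup (Fin N) ℂ,
      ((∑ a ∈ Finset.range k, ((g : Matrix (Fin N) (Fin N) ℂ) ^ a).trace *
        ((g : Matrix (Fin N) (Fin N) ℂ) ^ (k - a)).trace) * f g
        + ((g : Matrix (Fin N) (Fin N) ℂ) ^ k * G g).trace)
      = ∑ i, ∑ j, (((g : Matrix (Fin N) (Fin N) ℂ) ^ k) i j • G g + f g •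
        ∑ a ∈ Finset.range k, (g : Matrix (Fin N) (Fin N) ℂ) ^ (k - a) *
        Matrix.single j i 1 * (g : Matrix (Fin N) (Fin N) ℂ) ^ a) j i := by
    intro g
    set A := (g : Matrix (Fin N) (Fin N) ℂ)
    have e1 : ∀ (B C : Matrix (Fin N) (Fin N) ℂ) (i j : Fin N),
        (B * (Matrix.single j i 1 : Matrix (Fin N) (Fin N) ℂ) * C : Matrix (Fin N) (Fin N) ℂ) j i = B j j * C i i := by
      intro B C i j
      rw [Matrix.mul_apply]
      simp [Matrix.mul_apply, Matrix.single_apply, ite_and]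
    simp only [Matrix.add_apply, Matrix.smul_apply, smul_eq_mul, Finset.sum_add_distrib,
      Matrix.sum_apply, e1]
    rw [add_comm]
    congr 1
    · simp only [← Finset.mul_sum]
      rw [mul_comm]
      congr 1
      simp_rw [Finset.sum_comm (s := Finset.univ) (t := Finset.range k)]
      refine Finset.sum_congr rfl fun a _ => ?_
      simp only [Matrix.trace, Matrix.diag, Finset.sum_mul_sum]
      refine Finset.sum_congr rfl fun a _ => Finset.sum_congr rfl fun b _ => mul_comm _ _
  simp_rw [h2]
  rw [integral_finsetSum]
  · refine Finset.sum_eq_zero fun i _ => ?_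
    rw [integral_finsetSum]
    · exact Finset.sum_eq_zero fun j _ => (h1 i j).integral_entry μ j i
    · intro j _
      exact integrable_cont μ ((h1 i j).2.1.matrix_elem j i)
  · intro i _
    exact integrable_finsetSum _ fun j _ => integrable_cont μ ((h1 i j).2.1.matrix_elem j i)


/-- `f` has gradient `G` and Laplacian `L` (in the weak sense). -/
def Lap (f : Matrix.unitaryGroup (Fin N) ℂ → ℂ)
    (G : Matrix.unitaryGroup (Fin N) ℂ → Matrix (Fin N) (Fin N) ℂ)
    (L : Matrix.unitaryGroup (Fin N) ℂ → ℂ) : Prop :=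
  HasGrad f G ∧ Continuous L ∧ ∀ w W, HasGrad w W →
    ∫ g, L g * (starRingEnd ℂ) (w g) ∂μ = ∫ g, (G g * (W g)ᴴ).trace ∂μ

variable {μ}

theorem Lap.congr {f f' L L' : Matrix.unitaryGroup (Fin N) ℂ → ℂ}
    {G G' : Matrix.unitaryGroup (Fin N) ℂ → Matrix (Fin N) (Fin N) ℂ}
    (h : Lap μ f G L) (hf : ∀ g, f g = f' g) (hG : ∀ g, G g = G' g) (hL : ∀ g, L g = L' g) :
    Lap μ f' G' L' := by
  obtain rfl : f = f' := funext hf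
  obtain rfl : G = G' := funext hG
  obtain rfl : L = L' := funext hL
  exact h

theorem Lap.zero : Lap (N := N) μ (fun _ => 0) (fun _ => 0) (fun _ => 0) :=
  ⟨HasGrad.const 0, continuous_const, fun w W _ => by simp⟩

theorem Lap.add {f f' L L' : Matrix.unitaryGroup (Fin N) ℂ → ℂ}
    {G G' : Matrix.unitaryGroup (Fin N) ℂ → Matrix (Fin N) (Fin N) ℂ}
    (h : Lap μ f G L) (h' : Lap μ f' G' L') :
    Lap μ (fun g => f g + f' g) (fun g => G g + G' g) (fun g => L g + L' g) := by
  refine ⟨h.1.add h'.1, h.2.1.add h'.2.1, fun w W hw => ?_⟩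
  have hwc : Continuous fun g => (starRingEnd ℂ) (w g) := Complex.continuous_conj.comp hw.1
  have hWc : Continuous fun g => (W g)ᴴ := hw.2.1.matrix_conjTranspose
  simp only [add_mul, Matrix.trace_add]
  have a1 : Integrable (fun g => L g * (starRingEnd ℂ) (w g)) μ :=
    integrable_cont μ (h.2.1.mul hwc)
  have a2 : Integrable (fun g => L' g * (starRingEnd ℂ) (w g)) μ :=
    integrable_cont μ (h'.2.1.mul hwc)
  have b1 : Integrable (fun g => (G g * (W g)ᴴ).trace) μ :=
    integrable_cont μ (h.1.2.1.mul hWc).matrix_trace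
  have b2 : Integrable (fun g => (G' g * (W g)ᴴ).trace) μ :=
    integrable_cont μ (h'.1.2.1.mul hWc).matrix_trace
  rw [integral_add a1 a2, integral_add b1 b2, h.2.2 w W hw, h'.2.2 w W hw]

theorem Lap.mul {f f' L L' : Matrix.unitaryGroup (Fin N) ℂ → ℂ}
    {G G' : Matrix.unitaryGroup (Fin N) ℂ → Matrix (Fin N) (Fin N) ℂ}
    (h : Lap μ f G L) (h' : Lap μ f' G' L') :
    Lap μ (fun g => f g * f' g) (fun g => f g • G' g + f' g • G g)
      (fun g => f g * L' g + f' g * L g + 2 * (G g * G' g).trace) := by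
  refine ⟨h.1.mul h'.1, ((h.1.1.mul h'.2.1).add (h'.1.1.mul h.2.1)).add
    (continuous_const.mul (h.1.2.1.mul h'.1.2.1).matrix_trace), fun w W hw => ?_⟩
  have hwc : Continuous fun g => (starRingEnd ℂ) (w g) := Complex.continuous_conj.comp hw.1
  have hWc : Continuous fun g => (W g)ᴴ := hw.2.1.matrix_conjTranspose
  have e1 := h'.2.2 _ _ (h.1.conj.mul hw)
  have e2 := h.2.2 _ _ (h'.1.conj.mul hw)
  have c1 : Integrable (fun g => L' g * (starRingEnd ℂ) ((starRingEnd ℂ) (f g) * w g)) μ :=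
    integrable_cont μ (h'.2.1.mul (Complex.continuous_conj.comp
      ((Complex.continuous_conj.comp h.1.1).mul hw.1)))
  have c2 : Integrable (fun g => L g * (starRingEnd ℂ) ((starRingEnd ℂ) (f' g) * w g)) μ :=
    integrable_cont μ (h.2.1.mul (Complex.continuous_conj.comp
      ((Complex.continuous_conj.comp h'.1.1).mul hw.1)))
  have c3 : Integrable (fun g => 2 * (G g * G' g).trace * (starRingEnd ℂ) (w g)) μ :=
    integrable_cont μ ((continuous_const.mul (h.1.2.1.mul h'.1.2.1).matrix_trace).mul hwc)
  have d1 : Integrable (fun g => (G' g * ((starRingEnd ℂ) (f g) • W g + w g • -(G g)ᴴ)ᴴ).trace) μ :=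
    integrable_cont μ (h'.1.2.1.mul (h.1.conj.mul hw).2.1.matrix_conjTranspose).matrix_trace
  have d2 : Integrable (fun g => (G g * ((starRingEnd ℂ) (f' g) • W g + w g • -(G' g)ᴴ)ᴴ).trace) μ :=
    integrable_cont μ (h.1.2.1.mul (h'.1.conj.mul hw).2.1.matrix_conjTranspose).matrix_trace
  have l : ∫ g, (f g * L' g + f' g * L g + 2 * (G g * G' g).trace) * (starRingEnd ℂ) (w g) ∂μ
      = ∫ g, (L' g * (starRingEnd ℂ) ((starRingEnd ℂ) (f g) * w g)
        + L g * (starRingEnd ℂ) ((starRingEnd ℂ) (f' g) * w g)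
        + 2 * (G g * G' g).trace * (starRingEnd ℂ) (w g)) ∂μ := by
    congr 1; funext g; simp; ring
  have c12 : Integrable (fun g => L' g * (starRingEnd ℂ) ((starRingEnd ℂ) (f g) * w g)
      + L g * (starRingEnd ℂ) ((starRingEnd ℂ) (f' g) * w g)) μ := c1.add c2
  have d12 : Integrable (fun g => (G' g * ((starRingEnd ℂ) (f g) • W g + w g • -(G g)ᴴ)ᴴ).trace
      + (G g * ((starRingEnd ℂ) (f' g) • W g + w g • -(G' g)ᴴ)ᴴ).trace) μ := d1.add d2
  rw [l, integral_add c12 c3, integral_add c1 c2, e1, e2, ← integral_add d1 d2,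
    ← integral_add d12 c3]
  congr 1; funext g
  simp only [Matrix.conjTranspose_add, Matrix.conjTranspose_smul, Matrix.conjTranspose_neg,
    Matrix.conjTranspose_conjTranspose, Matrix.mul_add, Matrix.trace_add, Matrix.mul_smul,
    Matrix.mul_neg, Matrix.trace_smul, Matrix.trace_neg, Matrix.add_mul, Matrix.smul_mul,
    smul_eq_mul, starRingEnd_apply, star_star, Matrix.trace_mul_comm (G' g) (G g), smul_neg]
  ring

/-- the functions `h_n` (`σ = 1`) and `(-1)^n e_n` (`σ = -1`) of a matrix -/
noncomputable def uu (σ : ℂ) (A : Matrix (Fin N) (Fin N) ℂ) : ℕ → ℂ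
  | 0 => 1
  | n + 1 => σ * ((n : ℂ) + 1)⁻¹ * ∑ k : Fin (n + 1), (A ^ (k.1 + 1)).trace * uu σ A (n - k.1)
decreasing_by omega

theorem uu_zero (σ : ℂ) (A : Matrix (Fin N) (Fin N) ℂ) : uu σ A 0 = 1 := by rw [uu]

theorem uu_newton (σ : ℂ) (A : Matrix (Fin N) (Fin N) ℂ) (n : ℕ) :
    (n : ℂ) * uu σ A n = σ * ∑ k ∈ Finset.range n, (A ^ (k + 1)).trace * uu σ A (n - 1 - k) := by
  cases n with
  | zero => simp
  | succ n =>
    rw [uu, Finset.sum_range]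
    have : (n : ℂ) + 1 ≠ 0 := by exact_mod_cast Nat.succ_ne_zero n
    push_cast
    field_simp

theorem sum_antidiag_shift {M : Type*} [AddCommMonoid M] (F : ℕ → ℕ → M) (n : ℕ) :
    ∑ x ∈ Finset.HasAntidiagonal.antidiagonal n, (if x.1 = 0 then 0 else F x.1 x.2)
      = ∑ k ∈ Finset.range n, F (k + 1) (n - 1 - k) := by
  cases n with
  | zero => simp
  | succ n =>
    rw [Finset.Nat.sum_antidiagonal_succ, Finset.Nat.sum_antidiagonal_eq_sum_range_succ_mk]
    simp

/-- Euler operator on power series -/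
noncomputable def thetaOp (f : PowerSeries ℂ) : PowerSeries ℂ :=
  PowerSeries.mk fun n => (n : ℂ) * PowerSeries.coeff n f

theorem thetaOp_mul (f g : PowerSeries ℂ) :
    thetaOp (f * g) = thetaOp f * g + f * thetaOp g := by
  ext n
  simp only [thetaOp, PowerSeries.coeff_mk, PowerSeries.coeff_mul, map_add, Finset.mul_sum]
  rw [← Finset.sum_add_distrib]
  refine Finset.sum_congr rfl fun x hx => ?_
  rw [← Finset.HasAntidiagonal.mem_antidiagonal.mp hx]
  push_cast
  ring

theorem thetaOp_smul (c : ℂ) (f : PowerSeries ℂ) : thetaOp (c • f) = c • thetaOp f := by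
  ext n
  simp [thetaOp]
  ring

theorem thetaOp_C_mul (c : ℂ) (f : PowerSeries ℂ) :
    thetaOp (PowerSeries.C c * f) = PowerSeries.C c * thetaOp f := by
  rw [← PowerSeries.smul_eq_C_mul, ← PowerSeries.smul_eq_C_mul, thetaOp_smul]

noncomputable def serP (A : Matrix (Fin N) (Fin N) ℂ) : PowerSeries ℂ :=
  PowerSeries.mk fun k => if k = 0 then 0 else (A ^ k).trace

noncomputable def serU (σ : ℂ) (A : Matrix (Fin N) (Fin N) ℂ) : PowerSeries ℂ :=
  PowerSeries.mk (uu σ A)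

theorem theta_serU (σ : ℂ) (A : Matrix (Fin N) (Fin N) ℂ) :
    thetaOp (serU σ A) = PowerSeries.C σ * (serP A * serU σ A) := by
  ext n
  rw [PowerSeries.coeff_C_mul]
  simp only [thetaOp, serU, serP, PowerSeries.coeff_mk, PowerSeries.coeff_mul, uu_newton, ite_mul,
    zero_mul]
  rw [sum_antidiag_shift (fun a b => (A ^ a).trace * uu σ A b)]

/-- The gradient of `uu`. -/
noncomputable def gu (σ : ℂ) (A : Matrix (Fin N) (Fin N) ℂ) (n : ℕ) : Matrix (Fin N) (Fin N) ℂ :=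
  σ • ∑ k ∈ Finset.range n, uu σ A (n - 1 - k) • A ^ (k + 1)

theorem gu_rec (σ : ℂ) (A : Matrix (Fin N) (Fin N) ℂ) (n : ℕ) :
    (n : ℂ) • gu σ A n = σ • ∑ k ∈ Finset.range n,
      ((A ^ (k + 1)).trace • gu σ A (n - 1 - k) +
        uu σ A (n - 1 - k) • (((k + 1 : ℕ) : ℂ) • A ^ (k + 1))) := by
  ext i j
  set B : PowerSeries ℂ := PowerSeries.mk fun k => if k = 0 then 0 else (A ^ k) i j with hB
  have hgu : ∀ m, gu σ A m i j = PowerSeries.coeff m (PowerSeries.C σ * (B * serU σ A)) := by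
    intro m
    rw [PowerSeries.coeff_C_mul]
    simp only [hB, serU, PowerSeries.coeff_mk, PowerSeries.coeff_mul, ite_mul, zero_mul]
    rw [sum_antidiag_shift (fun a b => (A ^ a) i j * uu σ A b)]
    simp only [gu, Matrix.smul_apply, Matrix.sum_apply, smul_eq_mul]
    simp only [mul_comm]
  have e : thetaOp (PowerSeries.C σ * (B * serU σ A)) =
      PowerSeries.C σ * (serP A * (PowerSeries.C σ * (B * serU σ A)) + thetaOp B * serU σ A) := by
    rw [thetaOp_C_mul, thetaOp_mul, theta_serU]
    ring
  have e2 := congrArg (PowerSeries.coeff n) e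
  rw [PowerSeries.coeff_C_mul, map_add, PowerSeries.coeff_mul, PowerSeries.coeff_mul] at e2
  simp only [← hgu] at e2
  rw [thetaOp, PowerSeries.coeff_mk, ← hgu] at e2
  simp only [thetaOp, PowerSeries.coeff_mk, serP, serU, hB, ite_mul, zero_mul, mul_ite,
    mul_zero] at e2
  rw [sum_antidiag_shift (fun a b => (A ^ a).trace * gu σ A b i j),
    sum_antidiag_shift (fun a b => (a : ℂ) * (A ^ a) i j * uu σ A b)] at e2
  simp only [Matrix.smul_apply, Matrix.sum_apply, smul_eq_mul, Matrix.add_apply,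
    Finset.sum_add_distrib]
  rw [e2]
  congr 2
  refine Finset.sum_congr rfl fun k _ => ?_
  ring

theorem hasGrad_uu (σ : ℂ) (n : ℕ) :
    HasGrad (fun g : Matrix.unitaryGroup (Fin N) ℂ => uu σ (g : Matrix (Fin N) (Fin N) ℂ) n)
      (fun g => gu σ (g : Matrix (Fin N) (Fin N) ℂ) n) := by
  induction n using Nat.strong_induction_on with
  | _ n ih =>
    rcases Nat.eq_zero_or_pos n with rfl | hn
    · simpa [uu_zero, gu] using HasGrad.const (N := N) 1
    · have hn' : (n : ℂ) ≠ 0 := by exact_mod_cast hn.ne'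
      refine ((HasGrad.sum (Finset.range n) fun k hk => (hasGrad_trace (k + 1)).mul
        (ih (n - 1 - k) (by have := Finset.mem_range.mp hk; omega))).const_mul
          ((n : ℂ)⁻¹ * σ)).congr' ?_ ?_
      · intro g
        rw [mul_assoc, ← uu_newton, inv_mul_cancel_left₀ hn']
      · intro g
        rw [mul_smul, ← gu_rec, smul_smul, inv_mul_cancel₀ hn', one_smul]


theorem sum_triangle (F : ℕ → ℂ) (n : ℕ) :
    ∑ k ∈ Finset.range n, ∑ b ∈ Finset.range (n - 1 - k), F (k + b + 1)
      = ∑ r ∈ Finset.range n, (r : ℂ) * F r := by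
  induction n with
  | zero => simp
  | succ n ih =>
    rw [Finset.sum_range_succ, Finset.sum_range_succ, ← ih]
    have h : ∀ k ∈ Finset.range n, ∑ b ∈ Finset.range (n + 1 - 1 - k), F (k + b + 1)
        = ∑ b ∈ Finset.range (n - 1 - k), F (k + b + 1) + F n := by
      intro k hk
      have hk' := Finset.mem_range.mp hk
      have e : n + 1 - 1 - k = (n - 1 - k) + 1 := by omega
      rw [e, Finset.sum_range_succ]
      congr 2
      omega
    rw [Finset.sum_congr rfl h, Finset.sum_add_distrib]
    simp

theorem trace_pow_gu (σ : ℂ) (A : Matrix (Fin N) (Fin N) ℂ) (k l : ℕ) :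
    (A ^ k * gu σ A l).trace
      = σ * ∑ b ∈ Finset.range l, uu σ A (l - 1 - b) * (A ^ (k + b + 1)).trace := by
  simp only [gu, Matrix.mul_smul, Matrix.mul_sum, Matrix.trace_smul, Matrix.trace_sum, smul_eq_mul,
    ← pow_add, add_assoc]

theorem coeff_serP_sq (A : Matrix (Fin N) (Fin N) ℂ) (k : ℕ) :
    ∑ a ∈ Finset.range (k + 1), (A ^ a).trace * (A ^ (k + 1 - a)).trace
      = PowerSeries.coeff (k + 1) (PowerSeries.C (N : ℂ) * serP A + serP A * serP A) := by
  rw [map_add, PowerSeries.coeff_C_mul, PowerSeries.coeff_mul]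
  simp only [serP, PowerSeries.coeff_mk, ite_mul, zero_mul]
  rw [sum_antidiag_shift (fun a b => (A ^ a).trace * if b = 0 then 0 else (A ^ b).trace),
    Finset.sum_range_succ', Finset.sum_range_succ]
  simp only [Nat.add_sub_cancel, Nat.sub_self, if_true, mul_zero, add_zero, pow_zero,
    Matrix.trace_one, Fintype.card_fin, Nat.sub_zero]
  rw [add_comm]
  congr 1
  refine Finset.sum_congr rfl fun a ha => ?_
  have := Finset.mem_range.mp ha
  rw [if_neg (by omega), Nat.add_sub_add_right]

theorem lap_alg (σ : ℂ) (hσ : σ * σ = 1) (A : Matrix (Fin N) (Fin N) ℂ) (n : ℕ) :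
    σ * ∑ k ∈ Finset.range n,
      ((∑ a ∈ Finset.range (k + 1), (A ^ a).trace * (A ^ (k + 1 - a)).trace) * uu σ A (n - 1 - k)
        + (A ^ (k + 1) * gu σ A (n - 1 - k)).trace)
      = (n : ℂ) * (N + σ * (n - 1)) * uu σ A n := by
  set P := serP A with hP
  set U := serU σ A with hU
  have h1 : ∑ k ∈ Finset.range n, (∑ a ∈ Finset.range (k + 1),
      (A ^ a).trace * (A ^ (k + 1 - a)).trace) * uu σ A (n - 1 - k)
      = PowerSeries.coeff n ((PowerSeries.C (N : ℂ) * P + P * P) * U) := by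
    rw [PowerSeries.coeff_mul]
    have : ∀ x ∈ Finset.HasAntidiagonal.antidiagonal n,
        PowerSeries.coeff x.1 (PowerSeries.C (N : ℂ) * P + P * P) * PowerSeries.coeff x.2 U
        = if x.1 = 0 then 0 else
          PowerSeries.coeff x.1 (PowerSeries.C (N : ℂ) * P + P * P) * PowerSeries.coeff x.2 U := by
      intro x _
      split_ifs with h
      · rw [h]
        simp [P, serP]
      · rfl
    rw [Finset.sum_congr rfl this, sum_antidiag_shift (fun a b =>
      PowerSeries.coeff a (PowerSeries.C (N : ℂ) * P + P * P) * PowerSeries.coeff b U)]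
    refine Finset.sum_congr rfl fun k _ => ?_
    rw [coeff_serP_sq]
    simp only [hU, hP, serU, PowerSeries.coeff_mk]
  have h2 : ∑ k ∈ Finset.range n, (A ^ (k + 1) * gu σ A (n - 1 - k)).trace
      = σ * PowerSeries.coeff n ((thetaOp P - P) * U) := by
    simp only [trace_pow_gu]
    rw [← Finset.mul_sum]
    congr 1
    have e := sum_triangle (fun r => uu σ A (n - 1 - r) * (A ^ (r + 1)).trace) n
    have e' : ∑ k ∈ Finset.range n, ∑ b ∈ Finset.range (n - 1 - k),
        uu σ A (n - 1 - k - 1 - b) * (A ^ (k + 1 + b + 1)).trace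
        = ∑ k ∈ Finset.range n, ∑ b ∈ Finset.range (n - 1 - k),
        uu σ A (n - 1 - (k + b + 1)) * (A ^ (k + b + 1 + 1)).trace := by
      refine Finset.sum_congr rfl fun k _ => Finset.sum_congr rfl fun b _ => ?_
      rw [show n - 1 - k - 1 - b = n - 1 - (k + b + 1) by omega,
        show k + 1 + b + 1 = k + b + 1 + 1 by omega]
    rw [e', e, PowerSeries.coeff_mul]
    simp only [P, U, serP, serU, thetaOp, PowerSeries.coeff_mk, map_sub]
    have : ∀ x ∈ Finset.HasAntidiagonal.antidiagonal n,
        ((x.1 : ℂ) * (if x.1 = 0 then 0 else (A ^ x.1).trace) -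
          if x.1 = 0 then 0 else (A ^ x.1).trace) * uu σ A x.2
        = if x.1 = 0 then 0 else ((x.1 : ℂ) - 1) * (A ^ x.1).trace * uu σ A x.2 := by
      intro x _
      split_ifs <;> ring
    rw [Finset.sum_congr rfl this,
      sum_antidiag_shift (fun a b => ((a : ℂ) - 1) * (A ^ a).trace * uu σ A b)]
    refine Finset.sum_congr rfl fun k _ => ?_
    push_cast
    ring
  rw [Finset.sum_add_distrib, h1, h2]
  have h3 : (n : ℂ) * (N + σ * (n - 1)) * uu σ A n = PowerSeries.coeff n
      (PowerSeries.C (N : ℂ) * thetaOp U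
        + PowerSeries.C σ * (thetaOp (thetaOp U) - thetaOp U)) := by
    rw [map_add, PowerSeries.coeff_C_mul, PowerSeries.coeff_C_mul]
    simp only [U, serU, thetaOp, PowerSeries.coeff_mk, map_sub]
    ring
  have hs : PowerSeries.C σ * PowerSeries.C σ = 1 := by rw [← map_mul, hσ, map_one]
  rw [h3, ← PowerSeries.coeff_C_mul, ← map_add, ← PowerSeries.coeff_C_mul]
  congr 1
  rw [hU, theta_serU, thetaOp_C_mul, thetaOp_mul, theta_serU, ← hU, ← hP]
  linear_combination (- PowerSeries.C σ * P * P * U) * hs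

theorem lap_uu (σ : ℂ) (hσ : σ * σ = 1) (n : ℕ) :
    Lap μ (fun g : Matrix.unitaryGroup (Fin N) ℂ => uu σ (g : Matrix (Fin N) (Fin N) ℂ) n)
      (fun g => gu σ (g : Matrix (Fin N) (Fin N) ℂ) n)
      (fun g => (n : ℂ) * (N + σ * (n - 1)) * uu σ (g : Matrix (Fin N) (Fin N) ℂ) n) := by
  refine ⟨hasGrad_uu σ n, continuous_const.mul (hasGrad_uu σ n).1, fun w W hw => ?_⟩
  have key : ∀ k, _ := fun k =>
    ((hasGrad_uu (N := N) σ (n - 1 - k)).mul hw.conj).schwinger_dyson μ (k + 1)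
  have hcp : ∀ k : ℕ, Continuous fun g : Matrix.unitaryGroup (Fin N) ℂ =>
      ((g : Matrix (Fin N) (Fin N) ℂ) ^ k) := fun k => by fun_prop
  have hIntg : ∀ k, Integrable (fun g : Matrix.unitaryGroup (Fin N) ℂ =>
      ((∑ a ∈ Finset.range (k + 1), ((g : Matrix (Fin N) (Fin N) ℂ) ^ a).trace *
        ((g : Matrix (Fin N) (Fin N) ℂ) ^ (k + 1 - a)).trace) *
          (uu σ (g : Matrix (Fin N) (Fin N) ℂ) (n - 1 - k) * (starRingEnd ℂ) (w g))
        + ((g : Matrix (Fin N) (Fin N) ℂ) ^ (k + 1) *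
          (uu σ (g : Matrix (Fin N) (Fin N) ℂ) (n - 1 - k) • -(W g)ᴴ + (starRingEnd ℂ) (w g) •
            gu σ (g : Matrix (Fin N) (Fin N) ℂ) (n - 1 - k))).trace)) μ := by
    intro k
    have hm := (hasGrad_uu (N := N) σ (n - 1 - k)).mul hw.conj
    refine integrable_cont μ (Continuous.add (Continuous.mul ?_ hm.1) ?_)
    · exact continuous_finsetSum _ fun a _ => (hcp a).matrix_trace.mul (hcp _).matrix_trace
    · exact ((hcp _).mul hm.2.1).matrix_trace
  have hL : Integrable (fun g : Matrix.unitaryGroup (Fin N) ℂ =>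
      (n : ℂ) * (N + σ * (n - 1)) * uu σ (g : Matrix (Fin N) (Fin N) ℂ) n *
        (starRingEnd ℂ) (w g)) μ :=
    integrable_cont μ ((continuous_const.mul (hasGrad_uu σ n).1).mul hw.conj.1)
  have hR : Integrable (fun g : Matrix.unitaryGroup (Fin N) ℂ =>
      (gu σ (g : Matrix (Fin N) (Fin N) ℂ) n * (W g)ᴴ).trace) μ :=
    integrable_cont μ ((hasGrad_uu σ n).2.1.mul hw.2.1.matrix_conjTranspose).matrix_trace
  rw [← sub_eq_zero, ← integral_sub hL hR]
  have tot : ∫ g : Matrix.unitaryGroup (Fin N) ℂ, σ * ∑ k ∈ Finset.range n,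
      ((∑ a ∈ Finset.range (k + 1), ((g : Matrix (Fin N) (Fin N) ℂ) ^ a).trace *
        ((g : Matrix (Fin N) (Fin N) ℂ) ^ (k + 1 - a)).trace) *
          (uu σ (g : Matrix (Fin N) (Fin N) ℂ) (n - 1 - k) * (starRingEnd ℂ) (w g))
        + ((g : Matrix (Fin N) (Fin N) ℂ) ^ (k + 1) *
          (uu σ (g : Matrix (Fin N) (Fin N) ℂ) (n - 1 - k) • -(W g)ᴴ + (starRingEnd ℂ) (w g) •
            gu σ (g : Matrix (Fin N) (Fin N) ℂ) (n - 1 - k))).trace) ∂μ = 0 := by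
    rw [integral_const_mul, integral_finsetSum _ fun k _ => hIntg k,
      Finset.sum_eq_zero fun k _ => key k, mul_zero]
  rw [← tot]
  congr 1
  funext g
  rw [← lap_alg σ hσ]
  set A := (g : Matrix (Fin N) (Fin N) ℂ)
  have : (gu σ A n * (W g)ᴴ).trace = σ * ∑ k ∈ Finset.range n,
      uu σ A (n - 1 - k) * (A ^ (k + 1) * (W g)ᴴ).trace := by
    rw [gu, Matrix.smul_mul, Matrix.sum_mul, Matrix.trace_smul, Matrix.trace_sum]
    simp [Matrix.trace_smul]
  rw [this, mul_assoc, ← mul_sub, Finset.sum_mul, ← Finset.sum_sub_distrib]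
  congr 1
  refine Finset.sum_congr rfl fun k _ => ?_
  rw [Matrix.mul_add, Matrix.trace_add, Matrix.mul_smul, Matrix.mul_smul, Matrix.trace_smul,
    Matrix.trace_smul, Matrix.mul_neg, Matrix.trace_neg, smul_eq_mul, smul_eq_mul]
  ring


/-- Signed hook Schur functions. -/
noncomputable def ss (A : Matrix (Fin N) (Fin N) ℂ) (d n : ℕ) : ℂ :=
  ∑ i ∈ Finset.Ico d (n + 1), uu (-1) A i * uu 1 A (n - i)

theorem ss_gt (A : Matrix (Fin N) (Fin N) ℂ) {d n : ℕ} (h : n < d) : ss A d n = 0 := by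
  rw [ss, Finset.Ico_eq_empty (by omega), Finset.sum_empty]

theorem ss_step (A : Matrix (Fin N) (Fin N) ℂ) {d n : ℕ} (h : d ≤ n) :
    ss A d n = ss A (d + 1) n + uu (-1) A d * uu 1 A (n - d) := by
  rw [ss, Finset.sum_eq_sum_Ico_succ_bot (by omega), add_comm, ss]

theorem serE_mul_serH (A : Matrix (Fin N) (Fin N) ℂ) : serU (-1) A * serU 1 A = 1 := by
  have h : thetaOp (serU (-1) A * serU 1 A) = 0 := by
    rw [thetaOp_mul, theta_serU, theta_serU, map_neg, map_one]
    ring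
  ext n
  have h2 := congrArg (PowerSeries.coeff n) h
  rw [thetaOp, PowerSeries.coeff_mk, map_zero] at h2
  rcases Nat.eq_zero_or_pos n with rfl | hn
  · simp [serU, uu_zero]
  · have hn' : (n : ℂ) ≠ 0 := by exact_mod_cast hn.ne'
    rw [(mul_eq_zero.mp h2).resolve_left hn', PowerSeries.coeff_one, if_neg hn.ne']

theorem ss_zero (A : Matrix (Fin N) (Fin N) ℂ) (n : ℕ) : ss A 0 n = if n = 0 then 1 else 0 := by
  rw [← PowerSeries.coeff_one (R := ℂ), ← serE_mul_serH A, PowerSeries.coeff_mul,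
    Finset.Nat.sum_antidiagonal_eq_sum_range_succ_mk, ss, Finset.range_eq_Ico]
  simp [serU]

noncomputable def gs (A : Matrix (Fin N) (Fin N) ℂ) (d n : ℕ) : Matrix (Fin N) (Fin N) ℂ :=
  ∑ k ∈ Finset.range n, (ss A d (n - 1 - k) - ss A (d - (k + 1)) (n - 1 - k)) • A ^ (k + 1)

theorem gs_gt (A : Matrix (Fin N) (Fin N) ℂ) {d n : ℕ} (h : n < d) : gs A d n = 0 := by
  refine Finset.sum_eq_zero fun k hk => ?_
  have := Finset.mem_range.mp hk
  rw [ss_gt A (by omega), ss_gt A (by omega), sub_zero, zero_smul]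

theorem sum_range_extend {M : Type*} [AddCommMonoid M] {m n : ℕ} (h : m ≤ n) (f : ℕ → M) :
    ∑ k ∈ Finset.range m, f k = ∑ k ∈ Finset.range n, if k < m then f k else 0 := by
  rw [← Finset.sum_filter]
  refine Finset.sum_congr ?_ fun _ _ => rfl
  ext k
  simp only [Finset.mem_range, Finset.mem_filter]
  omega

theorem gs_step (A : Matrix (Fin N) (Fin N) ℂ) {d n : ℕ} (h : d ≤ n) :
    gs A d n = gs A (d + 1) n +
      (uu (-1) A d • gu 1 A (n - d) + uu 1 A (n - d) • gu (-1) A d) := by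
  rw [gu, gu, sum_range_extend (show n - d ≤ n by omega), sum_range_extend h, gs, gs,
    one_smul, Finset.smul_sum, Finset.smul_sum, Finset.smul_sum, ← Finset.sum_add_distrib,
    ← Finset.sum_add_distrib]
  refine Finset.sum_congr rfl fun k hk => ?_
  have hk' := Finset.mem_range.mp hk
  have e : ss A d (n - 1 - k) - ss A (d - (k + 1)) (n - 1 - k)
      = (ss A (d + 1) (n - 1 - k) - ss A (d + 1 - (k + 1)) (n - 1 - k)) +
        ((if k < n - d then uu (-1) A d * uu 1 A (n - d - 1 - k) else 0)
          - (if k < d then uu 1 A (n - d) * uu (-1) A (d - 1 - k) else 0)) := by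
    have e1 : ss A d (n - 1 - k) = ss A (d + 1) (n - 1 - k) +
        (if k < n - d then uu (-1) A d * uu 1 A (n - d - 1 - k) else 0) := by
      split_ifs with h1
      · rw [ss_step A (by omega), show n - 1 - k - d = n - d - 1 - k by omega]
      · rw [ss_gt A (by omega), ss_gt A (by omega), add_zero]
    have e2 : ss A (d - (k + 1)) (n - 1 - k) = ss A (d + 1 - (k + 1)) (n - 1 - k) +
        (if k < d then uu 1 A (n - d) * uu (-1) A (d - 1 - k) else 0) := by
      split_ifs with h1
      · rw [ss_step A (show d - (k + 1) ≤ n - 1 - k by omega),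
          show d - (k + 1) + 1 = d + 1 - (k + 1) by omega,
          show n - 1 - k - (d - (k + 1)) = n - d by omega,
          show d - (k + 1) = d - 1 - k by omega]
        ring
      · rw [show d - (k + 1) = 0 by omega, show d + 1 - (k + 1) = 0 by omega, add_zero]
    rw [e1, e2]
    ring
  rw [e, add_smul]
  congr 1
  split_ifs <;> module

theorem trace_gu_gu (A : Matrix (Fin N) (Fin N) ℂ) (d m : ℕ) :
    (gu (-1) A d * gu 1 A m).trace
      = (m : ℂ) * uu (-1) A d * uu 1 A m + ((d : ℂ) + m) * ss A (d + 1) (d + m) := by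
  have hT : ∀ d m, (gu (-1) A d * gu 1 A m).trace = -∑ k ∈ Finset.range d, ∑ l ∈ Finset.range m,
      uu (-1) A (d - 1 - k) * uu 1 A (m - 1 - l) * (A ^ (k + l + 2)).trace := by
    intro d m
    rw [gu, Matrix.smul_mul, Matrix.sum_mul, Matrix.trace_smul, Matrix.trace_sum, smul_eq_mul,
      neg_one_mul]
    congr 1
    refine Finset.sum_congr rfl fun k _ => ?_
    rw [Matrix.smul_mul, Matrix.trace_smul, trace_pow_gu, one_mul, smul_eq_mul, Finset.mul_sum]
    refine Finset.sum_congr rfl fun l _ => ?_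
    rw [show k + 1 + l + 1 = k + l + 2 by omega]
    ring
  induction m generalizing d with
  | zero =>
    rw [hT, ss_gt A (by omega)]
    simp
  | succ m ih =>
    have ih' := ih (d + 1)
    rw [hT] at ih' ⊢
    rw [Finset.sum_range_succ'] at ih'
    simp only [Finset.sum_range_succ' _ m, Finset.sum_add_distrib] at ih' ⊢
    have n1 := uu_newton (-1) A (d + 1)
    have n2 := uu_newton 1 A (m + 1)
    rw [Finset.sum_range_succ'] at n1 n2
    have c1 : ∑ k ∈ Finset.range d, ∑ l ∈ Finset.range m,
        uu (-1) A (d + 1 - 1 - (k + 1)) * uu 1 A (m - 1 - l) * (A ^ (k + 1 + l + 2)).trace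
        = ∑ k ∈ Finset.range d, ∑ l ∈ Finset.range m,
        uu (-1) A (d - 1 - k) * uu 1 A (m + 1 - 1 - (l + 1)) * (A ^ (k + (l + 1) + 2)).trace := by
      refine Finset.sum_congr rfl fun k _ => Finset.sum_congr rfl fun l _ => ?_
      rw [show d + 1 - 1 - (k + 1) = d - 1 - k by omega,
        show m + 1 - 1 - (l + 1) = m - 1 - l by omega,
        show k + 1 + l + 2 = k + (l + 1) + 2 by omega]
    have c2 : ∑ k ∈ Finset.range d, uu (-1) A (d - 1 - k) * uu 1 A (m + 1 - 1 - 0) *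
        (A ^ (k + 0 + 2)).trace = uu 1 A m * ∑ k ∈ Finset.range d, (A ^ (k + 1 + 1)).trace *
          uu (-1) A (d + 1 - 1 - (k + 1)) := by
      rw [Finset.mul_sum]
      refine Finset.sum_congr rfl fun k _ => ?_
      rw [show d + 1 - 1 - (k + 1) = d - 1 - k by omega, show m + 1 - 1 - 0 = m by omega,
        show k + 0 + 2 = k + 1 + 1 by omega]
      ring
    have c3 : ∑ l ∈ Finset.range m, uu (-1) A (d + 1 - 1 - 0) * uu 1 A (m - 1 - l) *
        (A ^ (0 + l + 2)).trace = uu (-1) A d * ∑ l ∈ Finset.range m, (A ^ (l + 1 + 1)).trace *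
          uu 1 A (m + 1 - 1 - (l + 1)) := by
      rw [Finset.mul_sum]
      refine Finset.sum_congr rfl fun l _ => ?_
      rw [show m + 1 - 1 - (l + 1) = m - 1 - l by omega, show d + 1 - 1 - 0 = d by omega,
        show 0 + l + 2 = l + 1 + 1 by omega]
      ring
    have st := ss_step A (show d + 1 ≤ d + (m + 1) by omega)
    rw [show d + (m + 1) - (d + 1) = m by omega] at st
    rw [show d + 1 + m = d + (m + 1) by omega] at ih'
    rw [c1, c3] at ih'
    rw [c2, st]
    simp only [Nat.add_sub_cancel, Nat.sub_zero, zero_add] at n1 n2 ih' ⊢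
    push_cast at n1 n2 ih' ⊢
    linear_combination ih' - uu 1 A m * n1 - uu (-1) A d * n2

theorem lap_ss (n d : ℕ) :
    Lap μ (fun g : Matrix.unitaryGroup (Fin N) ℂ => ss (g : Matrix (Fin N) (Fin N) ℂ) d n)
      (fun g => gs (g : Matrix (Fin N) (Fin N) ℂ) d n)
      (fun g => (n : ℂ) * (N + n + 1 - 2 * d) * ss (g : Matrix (Fin N) (Fin N) ℂ) d n) := by
  obtain ⟨t, ht⟩ : ∃ t, n + 1 - d = t := ⟨_, rfl⟩
  induction t generalizing d with
  | zero =>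
    refine Lap.zero.congr (fun g => ?_) (fun g => ?_) (fun g => ?_)
    · rw [ss_gt _ (by omega)]
    · rw [gs_gt _ (by omega)]
    · rw [ss_gt _ (by omega), mul_zero]
  | succ t ih =>
    have hd : d ≤ n := by omega
    refine ((ih (d + 1) (by omega)).add ((lap_uu (-1) (by norm_num) d).mul
      (lap_uu 1 (by norm_num) (n - d)))).congr (fun g => ?_) (fun g => ?_) (fun g => ?_)
    · rw [ss_step _ hd]
    · rw [gs_step _ hd]
    · rw [ss_step _ hd, trace_gu_gu, Nat.add_sub_cancel' hd]
      push_cast [Nat.cast_sub hd]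
      ring

theorem coeff_theta_iter (f : PowerSeries ℂ) (j n : ℕ) :
    PowerSeries.coeff n (thetaOp^[j] f) = (n : ℂ) ^ j * PowerSeries.coeff n f := by
  induction j with
  | zero => simp
  | succ j ih =>
    rw [Function.iterate_succ_apply', thetaOp, PowerSeries.coeff_mk, ih]
    ring

theorem matH_eq_coeff (A : Matrix (Fin N) (Fin N) ℂ) (j n : ℕ) (hn : 1 ≤ n) :
    matH (j + 1) n A = PowerSeries.coeff n (thetaOp^[j + 1] (serU (-1) A) * serU 1 A) := by
  have hrec : ∀ j, thetaOp^[j + 1] (serU (-1) A) * serU 1 A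
      = thetaOp (thetaOp^[j] (serU (-1) A) * serU 1 A)
        - serP A * (thetaOp^[j] (serU (-1) A) * serU 1 A) := by
    intro j
    rw [thetaOp_mul, theta_serU, Function.iterate_succ_apply', map_one]
    ring
  induction j generalizing n with
  | zero =>
    rw [hrec, Function.iterate_zero, id, serE_mul_serH, mul_one, map_sub, thetaOp,
      PowerSeries.coeff_mk, PowerSeries.coeff_one, if_neg (by omega), serP, PowerSeries.coeff_mk,
      if_neg (by omega), matH]
    ring
  | succ j ih =>
    rw [hrec, map_sub, PowerSeries.coeff_mul, matH, ih n hn]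
    set K := thetaOp^[j + 1] (serU (-1) A) * serU 1 A with hK
    have hK0 : PowerSeries.coeff 0 K = 0 := by
      rw [hK, PowerSeries.coeff_mul, Finset.Nat.antidiagonal_zero, Finset.sum_singleton,
        coeff_theta_iter, Nat.cast_zero, zero_pow (Nat.succ_ne_zero j), zero_mul, zero_mul]
    simp only [serP, thetaOp, PowerSeries.coeff_mk, ite_mul, zero_mul]
    rw [sum_antidiag_shift (fun a b => (A ^ a).trace * PowerSeries.coeff b K),
      ← Finset.sum_range_reflect, Finset.range_eq_Ico,
      Finset.sum_eq_sum_Ico_succ_bot (show 0 < n by omega)]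
    have e : ∀ k ∈ Finset.Ico 1 n, -(A ^ (n - k)).trace * matH (j + 1) k A
        = - ((A ^ (n - 1 - k + 1)).trace * PowerSeries.coeff (n - 1 - (n - 1 - k)) K) := by
      intro k hk
      have hk' := Finset.mem_Ico.mp hk
      rw [ih k hk'.1, show n - 1 - k + 1 = n - k by omega,
        show n - 1 - (n - 1 - k) = k by omega]
      ring
    rw [Finset.sum_congr rfl e, Finset.sum_neg_distrib,
      show n - 1 - (n - 1 - 0) = 0 by omega, hK0]
    ring

theorem abel_sum (s : ℕ → ℂ) (j m : ℕ) (hj : 1 ≤ j) :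
    ∑ d ∈ Finset.range (m + 1), (d : ℂ) ^ j * (s d - s (d + 1))
      = ∑ d ∈ Finset.Icc 1 m, ((d : ℂ) ^ j - ((d : ℂ) - 1) ^ j) * s d - (m : ℂ) ^ j * s (m + 1) := by
  induction m with
  | zero => simp [show j ≠ 0 by omega]
  | succ m ih =>
    rw [Finset.sum_range_succ, ih, Finset.sum_Icc_succ_top (by omega)]
    push_cast
    ring

theorem matH_eq (A : Matrix (Fin N) (Fin N) ℂ) (j n : ℕ) (hj : 1 ≤ j) (hn : 1 ≤ n) :
    matH j n A = ∑ d ∈ Finset.Icc 1 n, ((d : ℂ) ^ j - ((d : ℂ) - 1) ^ j) * ss A d n := by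
  have h := abel_sum (fun d => ss A d n) j n hj
  simp only [ss_gt A (Nat.lt_succ_self n), mul_zero, sub_zero] at h
  rw [← h]
  obtain ⟨j, rfl⟩ : ∃ i, j = i + 1 := ⟨j - 1, by omega⟩
  rw [matH_eq_coeff A j n hn, PowerSeries.coeff_mul,
    Finset.Nat.sum_antidiagonal_eq_sum_range_succ_mk]
  refine Finset.sum_congr rfl fun d hd => ?_
  have := Finset.mem_range.mp hd
  rw [coeff_theta_iter, ss_step A (show d ≤ n by omega)]
  simp [serU]
  ring



theorem cont_ss (d n : ℕ) :
    Continuous fun g : Matrix.unitaryGroup (Fin N) ℂ => ss (g : Matrix (Fin N) (Fin N) ℂ) d n := by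
  unfold ss
  exact continuous_finsetSum _ fun i _ => (hasGrad_uu (-1) i).1.mul (hasGrad_uu 1 (n - i)).1

theorem cont_tr (n : ℕ) :
    Continuous fun g : Matrix.unitaryGroup (Fin N) ℂ =>
      ((g : Matrix (Fin N) (Fin N) ℂ) ^ n).trace := (hasGrad_trace n).1

theorem int_mul_conj {f w : Matrix.unitaryGroup (Fin N) ℂ → ℂ} (hf : Continuous f)
    (hw : Continuous w) : Integrable (fun g => f g * (starRingEnd ℂ) (w g)) μ :=
  integrable_cont μ (hf.mul (Complex.continuous_conj.comp hw))

theorem ss_orth (n d d' : ℕ) (hn : 1 ≤ n) (hd : d ≠ d') :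
    ∫ g : Matrix.unitaryGroup (Fin N) ℂ, ss (g : Matrix (Fin N) (Fin N) ℂ) d n *
      (starRingEnd ℂ) (ss (g : Matrix (Fin N) (Fin N) ℂ) d' n) ∂μ = 0 := by
  have h1 := (lap_ss (μ := μ) n d).2.2 _ _ (lap_ss (μ := μ) n d').1
  have h2 := congrArg (starRingEnd ℂ) ((lap_ss (μ := μ) n d').2.2 _ _ (lap_ss (μ := μ) n d).1)
  rw [← integral_conj, ← integral_conj] at h2
  have e1 : (fun g : Matrix.unitaryGroup (Fin N) ℂ => (starRingEnd ℂ)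
      ((gs (g : Matrix (Fin N) (Fin N) ℂ) d' n * (gs (g : Matrix (Fin N) (Fin N) ℂ) d n)ᴴ).trace))
      = fun g : Matrix.unitaryGroup (Fin N) ℂ =>
      ((gs (g : Matrix (Fin N) (Fin N) ℂ) d n * (gs (g : Matrix (Fin N) (Fin N) ℂ) d' n)ᴴ).trace) := by
    funext g
    rw [starRingEnd_apply, ← Matrix.trace_conjTranspose, Matrix.conjTranspose_mul,
      Matrix.conjTranspose_conjTranspose]
  have e2 : (fun g : Matrix.unitaryGroup (Fin N) ℂ => (starRingEnd ℂ)
      ((n : ℂ) * (N + n + 1 - 2 * d') * ss (g : Matrix (Fin N) (Fin N) ℂ) d' n *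
        (starRingEnd ℂ) (ss (g : Matrix (Fin N) (Fin N) ℂ) d n)))
      = fun g : Matrix.unitaryGroup (Fin N) ℂ =>
      ((n : ℂ) * (N + n + 1 - 2 * d')) * (ss (g : Matrix (Fin N) (Fin N) ℂ) d n *
        (starRingEnd ℂ) (ss (g : Matrix (Fin N) (Fin N) ℂ) d' n)) := by
    funext g
    simp only [map_mul, map_sub, map_add, map_one, Complex.conj_conj, map_natCast, map_ofNat]
    ring
  rw [e1, e2, ← h1, integral_const_mul] at h2
  simp only [mul_assoc, integral_const_mul] at h2
  have hn' : (n : ℂ) ≠ 0 := by exact_mod_cast (by omega : n ≠ 0)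
  have hd' : (d : ℂ) - d' ≠ 0 := sub_ne_zero.mpr (by exact_mod_cast hd)
  have h3 : ((n : ℂ) * ((d : ℂ) - d')) * ∫ g : Matrix.unitaryGroup (Fin N) ℂ,
      ss (g : Matrix (Fin N) (Fin N) ℂ) d n *
      (starRingEnd ℂ) (ss (g : Matrix (Fin N) (Fin N) ℂ) d' n) ∂μ = 0 := by
    linear_combination h2 / 2
  exact (mul_eq_zero.mp h3).resolve_left (mul_ne_zero hn' hd')

theorem pow_mul_star_pow (g : Matrix.unitaryGroup (Fin N) ℂ) (a b : ℕ) :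
    (g : Matrix (Fin N) (Fin N) ℂ) ^ a * ((g : Matrix (Fin N) (Fin N) ℂ) ^ (a + b))ᴴ
      = ((g : Matrix (Fin N) (Fin N) ℂ) ^ b)ᴴ := by
  have h : (g : Matrix (Fin N) (Fin N) ℂ) ^ a * ((g : Matrix (Fin N) (Fin N) ℂ) ^ a)ᴴ = 1 := by
    have := Matrix.mem_unitaryGroup_iff.mp (g ^ a).2
    simpa [Matrix.star_eq_conjTranspose] using this
  rw [add_comm a b, pow_add, Matrix.conjTranspose_mul, ← mul_assoc, h, one_mul]

theorem ss_trace_rec (n d : ℕ) :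
    ((n : ℂ) * (N + n + 1 - 2 * d)) * ∫ g : Matrix.unitaryGroup (Fin N) ℂ,
      ss (g : Matrix (Fin N) (Fin N) ℂ) d n *
      (starRingEnd ℂ) ((g : Matrix (Fin N) (Fin N) ℂ) ^ n).trace ∂μ
    = (n : ℂ) * ∑ k ∈ Finset.range n,
      (∫ g : Matrix.unitaryGroup (Fin N) ℂ, ss (g : Matrix (Fin N) (Fin N) ℂ) d (n - 1 - k) *
      (starRingEnd ℂ) ((g : Matrix (Fin N) (Fin N) ℂ) ^ (n - 1 - k)).trace ∂μ
      - ∫ g : Matrix.unitaryGroup (Fin N) ℂ,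
        ss (g : Matrix (Fin N) (Fin N) ℂ) (d - (k + 1)) (n - 1 - k) *
      (starRingEnd ℂ) ((g : Matrix (Fin N) (Fin N) ℂ) ^ (n - 1 - k)).trace ∂μ) := by
  have h1 := (lap_ss (μ := μ) n d).2.2 _ _ (hasGrad_trace n)
  rw [← integral_const_mul]
  simp only [mul_assoc] at h1 ⊢
  rw [h1]
  have e : (fun g : Matrix.unitaryGroup (Fin N) ℂ =>
      (gs (g : Matrix (Fin N) (Fin N) ℂ) d n * ((n : ℂ) • (g : Matrix (Fin N) (Fin N) ℂ) ^ n)ᴴ).trace)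
      = fun g : Matrix.unitaryGroup (Fin N) ℂ => (n : ℂ) * ∑ k ∈ Finset.range n,
        (ss (g : Matrix (Fin N) (Fin N) ℂ) d (n - 1 - k) *
      (starRingEnd ℂ) ((g : Matrix (Fin N) (Fin N) ℂ) ^ (n - 1 - k)).trace -
        ss (g : Matrix (Fin N) (Fin N) ℂ) (d - (k + 1)) (n - 1 - k) *
      (starRingEnd ℂ) ((g : Matrix (Fin N) (Fin N) ℂ) ^ (n - 1 - k)).trace) := by
    funext g
    rw [Matrix.conjTranspose_smul, Matrix.mul_smul, Matrix.trace_smul, gs, Matrix.sum_mul,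
      Matrix.trace_sum, smul_eq_mul, star_natCast]
    congr 1
    refine Finset.sum_congr rfl fun k hk => ?_
    have hk' := Finset.mem_range.mp hk
    have := pow_mul_star_pow g (k + 1) (n - 1 - k)
    rw [show k + 1 + (n - 1 - k) = n by omega] at this
    rw [Matrix.smul_mul, this, Matrix.trace_smul, Matrix.trace_conjTranspose, smul_eq_mul,
      starRingEnd_apply]
    ring
  rw [e, integral_const_mul, integral_finsetSum]
  · congr 1
    refine Finset.sum_congr rfl fun k _ => ?_
    exact integral_sub (int_mul_conj (cont_ss _ _) (cont_tr _))
      (int_mul_conj (cont_ss _ _) (cont_tr _))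
  · intro k _
    exact (int_mul_conj (cont_ss _ _) (cont_tr _)).sub (int_mul_conj (cont_ss _ _) (cont_tr _))

theorem count_sum (n d : ℕ) (c : ℂ) (hd : 1 ≤ d) (hdn : d ≤ n) :
    ∑ k ∈ Finset.range n, ((if k < n - d then (-1 : ℂ) else 0)
      + (if k < d - 1 then 1 else 0) - (if k = n - 1 then c else 0)) = -(c + n + 1 - 2 * d) := by
  rw [Finset.sum_sub_distrib, Finset.sum_add_distrib,
    ← sum_range_extend (show n - d ≤ n by omega), ← sum_range_extend (show d - 1 ≤ n by omega),
    Finset.sum_ite_eq' ]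
  rw [if_pos (Finset.mem_range.mpr (by omega))]
  simp only [Finset.sum_const, Finset.card_range, nsmul_eq_mul]
  push_cast [Nat.cast_sub hd, Nat.cast_sub hdn]
  ring

theorem ss_trace (n d : ℕ) (hd : 1 ≤ d) (hdn : d ≤ n) (hdN : d ≤ N) :
    ∫ g : Matrix.unitaryGroup (Fin N) ℂ, ss (g : Matrix (Fin N) (Fin N) ℂ) d n *
      (starRingEnd ℂ) ((g : Matrix (Fin N) (Fin N) ℂ) ^ n).trace ∂μ = -1 := by
  induction n using Nat.strong_induction_on generalizing d with
  | _ n ih =>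
    have h := ss_trace_rec (μ := μ) n d
    have hs : ∀ k ∈ Finset.range n, (∫ g : Matrix.unitaryGroup (Fin N) ℂ,
        ss (g : Matrix (Fin N) (Fin N) ℂ) d (n - 1 - k) *
        (starRingEnd ℂ) ((g : Matrix (Fin N) (Fin N) ℂ) ^ (n - 1 - k)).trace ∂μ
        - ∫ g : Matrix.unitaryGroup (Fin N) ℂ,
          ss (g : Matrix (Fin N) (Fin N) ℂ) (d - (k + 1)) (n - 1 - k) *
        (starRingEnd ℂ) ((g : Matrix (Fin N) (Fin N) ℂ) ^ (n - 1 - k)).trace ∂μ)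
        = (if k < n - d then (-1 : ℂ) else 0)
      + (if k < d - 1 then 1 else 0) - (if k = n - 1 then (N : ℂ) else 0) := by
      intro k hk
      have hk' := Finset.mem_range.mp hk
      have e1 : ∫ g : Matrix.unitaryGroup (Fin N) ℂ,
        ss (g : Matrix (Fin N) (Fin N) ℂ) d (n - 1 - k) *
        (starRingEnd ℂ) ((g : Matrix (Fin N) (Fin N) ℂ) ^ (n - 1 - k)).trace ∂μ
        = if k < n - d then (-1 : ℂ) else 0 := by
        split_ifs with hc
        · exact ih _ (by omega) d hd (by omega) hdN
        · simp [ss_gt _ (show n - 1 - k < d by omega)]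
      have e2 : ∫ g : Matrix.unitaryGroup (Fin N) ℂ,
          ss (g : Matrix (Fin N) (Fin N) ℂ) (d - (k + 1)) (n - 1 - k) *
        (starRingEnd ℂ) ((g : Matrix (Fin N) (Fin N) ℂ) ^ (n - 1 - k)).trace ∂μ
        = (if k < d - 1 then (-1 : ℂ) else 0) + (if k = n - 1 then (N : ℂ) else 0) := by
        by_cases hc : k < d - 1
        · rw [if_pos hc, if_neg (by omega), add_zero]
          exact ih _ (by omega) _ (by omega) (by omega) (by omega)
        · rw [if_neg hc, show d - (k + 1) = 0 by omega]
          simp only [ss_zero]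
          by_cases hc2 : k = n - 1
          · rw [if_pos hc2, if_pos (by omega), show n - 1 - k = 0 by omega]
            simp
          · rw [if_neg hc2, if_neg (by omega)]
            simp
      rw [e1, e2]
      split_ifs <;> ring
    rw [Finset.sum_congr rfl hs, count_sum n d N hd hdn] at h
    have hn' : (n : ℂ) ≠ 0 := by exact_mod_cast (by omega : n ≠ 0)
    have hl : (N + n + 1 - 2 * d : ℂ) ≠ 0 := by
      have h0 : (N + n + 1 - 2 * d : ℤ) ≠ 0 := by omega
      exact_mod_cast h0
    refine mul_left_cancel₀ (mul_ne_zero hn' hl) ?_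
    rw [h]
    ring

theorem trace_eq_ss (A : Matrix (Fin N) (Fin N) ℂ) (n : ℕ) (hn : 1 ≤ n) :
    (A ^ n).trace = -∑ d ∈ Finset.Icc 1 n, ss A d n := by
  have h := matH_eq A 1 n le_rfl hn
  rw [matH] at h
  simp only [pow_one, sub_sub_cancel, one_mul] at h
  rw [← h, neg_neg]

theorem ss_norm (n d : ℕ) (hd : 1 ≤ d) (hdn : d ≤ n) (hdN : d ≤ N) :
    ∫ g : Matrix.unitaryGroup (Fin N) ℂ, ss (g : Matrix (Fin N) (Fin N) ℂ) d n *
      (starRingEnd ℂ) (ss (g : Matrix (Fin N) (Fin N) ℂ) d n) ∂μ = 1 := by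
  have h := ss_trace (μ := μ) n d hd hdn hdN
  simp only [fun g : Matrix.unitaryGroup (Fin N) ℂ =>
    trace_eq_ss (g : Matrix (Fin N) (Fin N) ℂ) n (by omega), map_neg, map_sum, mul_neg,
    Finset.mul_sum] at h
  rw [integral_neg, integral_finsetSum _ fun i _ => int_mul_conj (cont_ss _ _) (cont_ss _ _),
    Finset.sum_eq_single d (fun b _ hb => ss_orth n d b (by omega) hb.symm)
      (fun hb => absurd (Finset.mem_Icc.mpr ⟨hd, hdn⟩) hb)] at h
  exact neg_inj.mp h

theorem trace_gu_one (A : Matrix (Fin N) (Fin N) ℂ) (d : ℕ) :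
    (gu (-1) A d).trace = (d : ℂ) * uu (-1) A d := by
  rw [uu_newton, gu, Matrix.trace_smul, Matrix.trace_sum, smul_eq_mul]
  congr 1
  refine Finset.sum_congr rfl fun k _ => ?_
  rw [Matrix.trace_smul, smul_eq_mul, mul_comm]

open scoped ComplexOrder in
theorem uu_vanish (d : ℕ) (hd : N < d) :
    ∀ᵐ g : Matrix.unitaryGroup (Fin N) ℂ ∂μ, uu (-1) (g : Matrix (Fin N) (Fin N) ℂ) d = 0 := by
  have h1 := (lap_uu (μ := μ) (-1) (by norm_num) d).2.2 _ _ (hasGrad_uu (-1) d)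
  have hce : Continuous fun g : Matrix.unitaryGroup (Fin N) ℂ =>
    uu (-1) (g : Matrix (Fin N) (Fin N) ℂ) d := (hasGrad_uu (-1) d).1
  have hcM : Continuous fun g : Matrix.unitaryGroup (Fin N) ℂ =>
    gu (-1) (g : Matrix (Fin N) (Fin N) ℂ) d := (hasGrad_uu (-1) d).2.1
  set E := ∫ g : Matrix.unitaryGroup (Fin N) ℂ, uu (-1) (g : Matrix (Fin N) (Fin N) ℂ) d *
    (starRingEnd ℂ) (uu (-1) (g : Matrix (Fin N) (Fin N) ℂ) d) ∂μ with hE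
  simp only [mul_assoc, integral_const_mul] at h1
  rw [← hE] at h1
  -- the auxiliary matrix
  have e : (fun g : Matrix.unitaryGroup (Fin N) ℂ =>
      ((uu (-1) (g : Matrix (Fin N) (Fin N) ℂ) d • (1 : Matrix (Fin N) (Fin N) ℂ)
        - gu (-1) (g : Matrix (Fin N) (Fin N) ℂ) d) *
      (uu (-1) (g : Matrix (Fin N) (Fin N) ℂ) d • (1 : Matrix (Fin N) (Fin N) ℂ)
        - gu (-1) (g : Matrix (Fin N) (Fin N) ℂ) d)ᴴ).trace)
      = fun g : Matrix.unitaryGroup (Fin N) ℂ =>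
        ((N : ℂ) - 2 * d) * (uu (-1) (g : Matrix (Fin N) (Fin N) ℂ) d *
          (starRingEnd ℂ) (uu (-1) (g : Matrix (Fin N) (Fin N) ℂ) d)) +
        (gu (-1) (g : Matrix (Fin N) (Fin N) ℂ) d *
          (gu (-1) (g : Matrix (Fin N) (Fin N) ℂ) d)ᴴ).trace := by
    funext g
    rw [Matrix.conjTranspose_sub, Matrix.conjTranspose_smul, Matrix.conjTranspose_one, sub_mul,
      mul_sub, mul_sub]
    simp only [Matrix.smul_mul, Matrix.mul_smul, one_mul, mul_one, Matrix.trace_sub,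
      Matrix.trace_smul, Matrix.trace_one, Matrix.trace_conjTranspose, trace_gu_one, smul_eq_mul,
      Fintype.card_fin, star_mul', star_natCast, starRingEnd_apply]
    ring
  have h2 : ∫ g : Matrix.unitaryGroup (Fin N) ℂ,
      ((uu (-1) (g : Matrix (Fin N) (Fin N) ℂ) d • (1 : Matrix (Fin N) (Fin N) ℂ)
        - gu (-1) (g : Matrix (Fin N) (Fin N) ℂ) d) *
      (uu (-1) (g : Matrix (Fin N) (Fin N) ℂ) d • (1 : Matrix (Fin N) (Fin N) ℂ)
        - gu (-1) (g : Matrix (Fin N) (Fin N) ℂ) d)ᴴ).trace ∂μ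
      = ((N : ℂ) - d) * (d + 1) * E := by
    rw [e, integral_add, integral_const_mul, ← hE, ← h1]
    · ring
    · exact (int_mul_conj hce hce).const_mul _
    · exact integrable_cont μ (hcM.mul hcM.matrix_conjTranspose).matrix_trace
  have hpos : ∀ B : Matrix (Fin N) (Fin N) ℂ, 0 ≤ ((B * Bᴴ).trace).re := by
    intro B
    have := (Matrix.posSemidef_self_mul_conjTranspose B).trace_nonneg
    exact (Complex.le_def.mp this).1
  have hEr : E = ((∫ g : Matrix.unitaryGroup (Fin N) ℂ,
      Complex.normSq (uu (-1) (g : Matrix (Fin N) (Fin N) ℂ) d) ∂μ : ℝ) : ℂ) := by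
    rw [hE]
    refine Eq.trans ?_ integral_complex_ofReal
    refine integral_congr_ae (Filter.Eventually.of_forall fun g => ?_)
    exact Complex.mul_conj _
  have hcn : Continuous fun g : Matrix.unitaryGroup (Fin N) ℂ =>
      Complex.normSq (uu (-1) (g : Matrix (Fin N) (Fin N) ℂ) d) :=
    Complex.continuous_normSq.comp hce
  set r := ∫ g : Matrix.unitaryGroup (Fin N) ℂ,
      Complex.normSq (uu (-1) (g : Matrix (Fin N) (Fin N) ℂ) d) ∂μ with hr
  have hr0 : 0 ≤ r := integral_nonneg fun g => Complex.normSq_nonneg _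
  have h3 : 0 ≤ ((N : ℝ) - d) * (d + 1) * r := by
    have h4 := congrArg Complex.re h2
    rw [hEr] at h4
    have h5 : (((N : ℂ) - d) * (d + 1) * (r : ℂ)).re = ((N : ℝ) - d) * (d + 1) * r := by
      rw [← Complex.ofReal_re (((N : ℝ) - d) * (d + 1) * r)]
      push_cast
      rfl
    rw [h5] at h4
    rw [← h4]
    have hcB : Continuous fun g : Matrix.unitaryGroup (Fin N) ℂ =>
        (uu (-1) (g : Matrix (Fin N) (Fin N) ℂ) d • (1 : Matrix (Fin N) (Fin N) ℂ)
        - gu (-1) (g : Matrix (Fin N) (Fin N) ℂ) d) := (hce.smul continuous_const).sub hcM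
    have hcT : Continuous fun g : Matrix.unitaryGroup (Fin N) ℂ =>
      ((uu (-1) (g : Matrix (Fin N) (Fin N) ℂ) d • (1 : Matrix (Fin N) (Fin N) ℂ)
        - gu (-1) (g : Matrix (Fin N) (Fin N) ℂ) d) *
      (uu (-1) (g : Matrix (Fin N) (Fin N) ℂ) d • (1 : Matrix (Fin N) (Fin N) ℂ)
        - gu (-1) (g : Matrix (Fin N) (Fin N) ℂ) d)ᴴ).trace :=
      (hcB.mul hcB.matrix_conjTranspose).matrix_trace
    have h6 := integral_re (𝕜 := ℂ) (integrable_cont μ hcT)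
    simp only [RCLike.re_eq_complex_re] at h6
    rw [← h6]
    exact integral_nonneg fun g => hpos _
  have hr1 : r = 0 := by
    have hd' : (N : ℝ) + 1 ≤ d := by exact_mod_cast hd
    have hd0 : (0 : ℝ) ≤ d := Nat.cast_nonneg d
    by_contra hne
    have hrp : 0 < r := lt_of_le_of_ne hr0 (Ne.symm hne)
    have : ((N : ℝ) - d) * (d + 1) * r < 0 :=
      mul_neg_of_neg_of_pos (mul_neg_of_neg_of_pos (by linarith) (by linarith)) hrp
    linarith
  have hi : Integrable (fun g : Matrix.unitaryGroup (Fin N) ℂ =>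
      Complex.normSq (uu (-1) (g : Matrix (Fin N) (Fin N) ℂ) d)) μ :=
    hcn.integrable_of_hasCompactSupport (HasCompactSupport.of_compactSpace _)
  have h7 := (integral_eq_zero_iff_of_nonneg (fun g => Complex.normSq_nonneg _) hi).mp hr1
  filter_upwards [h7] with g hg
  exact Complex.normSq_eq_zero.mp hg

theorem ss_vanish (d n : ℕ) (hd : N < d) :
    ∀ᵐ g : Matrix.unitaryGroup (Fin N) ℂ ∂μ, ss (g : Matrix (Fin N) (Fin N) ℂ) d n = 0 := by
  have h : ∀ᵐ g : Matrix.unitaryGroup (Fin N) ℂ ∂μ, ∀ i : ℕ, N < i →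
      uu (-1) (g : Matrix (Fin N) (Fin N) ℂ) i = 0 := by
    rw [ae_all_iff]
    intro i
    by_cases hi : N < i
    · filter_upwards [uu_vanish (μ := μ) i hi] with g hg _
      exact hg
    · exact Filter.Eventually.of_forall fun g h => absurd h hi
  filter_upwards [h] with g hg
  refine Finset.sum_eq_zero fun i hi => ?_
  rw [hg i (lt_of_lt_of_le hd (Finset.mem_Ico.mp hi).1), zero_mul]

theorem ss_inner (n d d' : ℕ) (hd : d ∈ Finset.Icc 1 n) (_hd' : d' ∈ Finset.Icc 1 n) :
    ∫ g : Matrix.unitaryGroup (Fin N) ℂ, ss (g : Matrix (Fin N) (Fin N) ℂ) d n *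
      (starRingEnd ℂ) (ss (g : Matrix (Fin N) (Fin N) ℂ) d' n) ∂μ
      = if d' = d then (if d ≤ N then 1 else 0) else 0 := by
  have hm := Finset.mem_Icc.mp hd
  by_cases h : d' = d
  · subst h
    rw [if_pos rfl]
    split_ifs with hN
    · exact ss_norm n d' hm.1 hm.2 hN
    · have := ss_vanish (μ := μ) d' n (by omega)
      rw [← integral_zero (Matrix.unitaryGroup (Fin N) ℂ) ℂ (μ := μ)]
      refine integral_congr_ae ?_
      filter_upwards [this] with g hg
      rw [hg, zero_mul]
  · rw [if_neg h]
    exact ss_orth n d d' (by omega) (Ne.symm h)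

theorem main_aux (j k n : ℕ) (hj : 1 ≤ j) (hk : 1 ≤ k) (hn : 1 ≤ n) :
    ∫ g : Matrix.unitaryGroup (Fin N) ℂ,
        matH j n (g : Matrix (Fin N) (Fin N) ℂ) *
          (starRingEnd ℂ) (matH k n (g : Matrix (Fin N) (Fin N) ℂ)) ∂μ
      = ∑ d ∈ Finset.Icc 1 (min n N),
          ((d : ℂ) ^ j - ((d : ℂ) - 1) ^ j) * ((d : ℂ) ^ k - ((d : ℂ) - 1) ^ k) := by
  have e : (fun g : Matrix.unitaryGroup (Fin N) ℂ =>
      matH j n (g : Matrix (Fin N) (Fin N) ℂ) *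
          (starRingEnd ℂ) (matH k n (g : Matrix (Fin N) (Fin N) ℂ)))
      = fun g : Matrix.unitaryGroup (Fin N) ℂ => ∑ d ∈ Finset.Icc 1 n, ∑ d' ∈ Finset.Icc 1 n,
        (((d : ℂ) ^ j - ((d : ℂ) - 1) ^ j) * ((d' : ℂ) ^ k - ((d' : ℂ) - 1) ^ k)) *
        (ss (g : Matrix (Fin N) (Fin N) ℂ) d n *
          (starRingEnd ℂ) (ss (g : Matrix (Fin N) (Fin N) ℂ) d' n)) := by
    funext g
    rw [matH_eq _ j n hj hn, matH_eq _ k n hk hn, map_sum, Finset.sum_mul_sum]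
    refine Finset.sum_congr rfl fun d _ => Finset.sum_congr rfl fun d' _ => ?_
    simp only [map_mul, map_sub, map_pow, map_natCast, map_one]
    ring
  have hI : ∀ d d' : ℕ, Integrable (fun g : Matrix.unitaryGroup (Fin N) ℂ =>
        (((d : ℂ) ^ j - ((d : ℂ) - 1) ^ j) * ((d' : ℂ) ^ k - ((d' : ℂ) - 1) ^ k)) *
        (ss (g : Matrix (Fin N) (Fin N) ℂ) d n *
          (starRingEnd ℂ) (ss (g : Matrix (Fin N) (Fin N) ℂ) d' n))) μ := fun d d' =>
    (int_mul_conj (cont_ss _ _) (cont_ss _ _)).const_mul _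
  rw [e, integral_finsetSum _ fun d _ => integrable_finsetSum _ fun d' _ => hI d d']
  have e2 : ∀ d ∈ Finset.Icc 1 n, ∫ g : Matrix.unitaryGroup (Fin N) ℂ, ∑ d' ∈ Finset.Icc 1 n,
        (((d : ℂ) ^ j - ((d : ℂ) - 1) ^ j) * ((d' : ℂ) ^ k - ((d' : ℂ) - 1) ^ k)) *
        (ss (g : Matrix (Fin N) (Fin N) ℂ) d n *
          (starRingEnd ℂ) (ss (g : Matrix (Fin N) (Fin N) ℂ) d' n)) ∂μ
      = if d ≤ N then
        ((d : ℂ) ^ j - ((d : ℂ) - 1) ^ j) * ((d : ℂ) ^ k - ((d : ℂ) - 1) ^ k) else 0 := by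
    intro d hd
    rw [integral_finsetSum _ fun d' _ => hI d d', Finset.sum_eq_single d]
    · rw [integral_const_mul, ss_inner n d d hd hd, if_pos rfl, mul_ite, mul_one, mul_zero]
    · intro b hb hne
      rw [integral_const_mul, ss_inner n d b hd hb, if_neg hne, mul_zero]
    · exact fun h => absurd hd h
  rw [Finset.sum_congr rfl e2, ← Finset.sum_filter]
  refine Finset.sum_congr ?_ fun _ _ => rfl
  ext d
  simp only [Finset.mem_filter, Finset.mem_Icc]
  omega


end HaarCalculus

/-- Lemma 2.2 (first part) of Rodgers, "The covariance of almost-primes in F_q[T]":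
`∫_{U(N)} H_j^{(n)}(g) conj(H_k^{(n)}(g)) dg = Σ_{d=1}^{min(n,N)} (d^j−(d−1)^j)(d^k−(d−1)^k)`. -/
theorem integral_H_mul_conj_H (N j k n : ℕ) (hN : 1 ≤ N) (hj : 1 ≤ j) (hk : 1 ≤ k) (hn : 1 ≤ n)
    (μ : Measure (Matrix.unitaryGroup (Fin N) ℂ)) [μ.IsHaarMeasure] [IsProbabilityMeasure μ] :
    ∫ g : Matrix.unitaryGroup (Fin N) ℂ,
        matH j n (g : Matrix (Fin N) (Fin N) ℂ) *
          (starRingEnd ℂ) (matH k n (g : Matrix (Fin N) (Fin N) ℂ)) ∂μ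
      = ∑ d ∈ Finset.Icc 1 (min n N),
          ((d : ℂ) ^ j - ((d : ℂ) - 1) ^ j) * ((d : ℂ) ^ k - ((d : ℂ) - 1) ^ k) := by
  exact main_aux j k n hj hk hn
end

section
/- For all integers N ≥ 1, j ≥ 1, k ≥ 1 and n, m ≥ 1 with n ≠ m: ∫_{U(N)} H_j^{(n)}(g) · conj(H_k^{(m)}(g)) dg = 0, where the integral is with respect to Haar probability measure on U(N). -/
open Matrix MeasureTheory

theorem matH_smul_aux {N : ℕ} (z : ℂ) (g : Matrix (Fin N) (Fin N) ℂ) :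
    ∀ j n : ℕ, matH j n (z • g) = z ^ n * matH j n g
  | 0, n => by simp [matH]
  | 1, n => by simp [matH, smul_pow, Matrix.trace_smul]
  | (j + 2), n => by
      simp only [matH, mul_add, Finset.mul_sum]
      congr 1
      · refine Finset.sum_congr rfl fun l hl => ?_
        have hl' : l ≤ n := (Finset.mem_Ico.mp hl).2.le
        rw [matH_smul_aux z g (j + 1) l, smul_pow, Matrix.trace_smul, smul_eq_mul]
        conv_rhs => rw [← Nat.sub_add_cancel hl', pow_add, Nat.sub_add_cancel hl']
        ring
      · rw [matH_smul_aux z g (j + 1) n]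
        ring

theorem exists_unit_phase (n m : ℕ) (hnm : n ≠ m) :
    ∃ z : ℂ, star z * z = 1 ∧ z ^ n * (starRingEnd ℂ) (z ^ m) = -1 := by
  have h : ((n : ℂ) - m) ≠ 0 := sub_ne_zero.mpr (by exact_mod_cast hnm)
  have hc : (starRingEnd ℂ) (Complex.exp (Real.pi / ((n : ℂ) - m) * Complex.I))
      = Complex.exp (-(Real.pi / ((n : ℂ) - m) * Complex.I)) := by
    rw [← Complex.exp_conj]
    simp
  refine ⟨Complex.exp (Real.pi / ((n : ℂ) - m) * Complex.I), ?_, ?_⟩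
  · rw [← starRingEnd_apply, hc, ← Complex.exp_add]
    simp
  · rw [map_pow, hc, ← Complex.exp_nat_mul, ← Complex.exp_nat_mul, ← Complex.exp_add,
      ← Complex.exp_pi_mul_I]
    congr 1
    field_simp
    ring

/-- Lemma 2.2 (second part) of Rodgers, "The covariance of almost-primes in F_q[T]":
for `n ≠ m`, `∫_{U(N)} H_j^{(n)}(g) conj(H_k^{(m)}(g)) dg = 0`. -/
theorem integral_H_mul_conj_H_ne (N j k n m : ℕ) (hN : 1 ≤ N) (hj : 1 ≤ j) (hk : 1 ≤ k)
    (hn : 1 ≤ n) (hm : 1 ≤ m) (hnm : n ≠ m)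
    (μ : Measure (Matrix.unitaryGroup (Fin N) ℂ)) [μ.IsHaarMeasure] [IsProbabilityMeasure μ] :
    ∫ g : Matrix.unitaryGroup (Fin N) ℂ,
        matH j n (g : Matrix (Fin N) (Fin N) ℂ) *
          (starRingEnd ℂ) (matH k m (g : Matrix (Fin N) (Fin N) ℂ)) ∂μ = 0 := by
  obtain ⟨z, hz, hzp⟩ := exists_unit_phase n m hnm
  let u : Matrix.unitaryGroup (Fin N) ℂ := ⟨z • (1 : Matrix (Fin N) (Fin N) ℂ), by
    rw [Matrix.mem_unitaryGroup_iff', star_smul, star_one, smul_mul_smul_comm, hz]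
    simp⟩
  have key := integral_mul_left_eq_self (μ := μ)
    (fun g : Matrix.unitaryGroup (Fin N) ℂ => matH j n (g : Matrix (Fin N) (Fin N) ℂ) *
          (starRingEnd ℂ) (matH k m (g : Matrix (Fin N) (Fin N) ℂ))) u
  have hu : ∀ g : Matrix.unitaryGroup (Fin N) ℂ,
      matH j n ((u * g : Matrix.unitaryGroup (Fin N) ℂ) : Matrix (Fin N) (Fin N) ℂ) *
          (starRingEnd ℂ) (matH k m
            ((u * g : Matrix.unitaryGroup (Fin N) ℂ) : Matrix (Fin N) (Fin N) ℂ)) =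
      -(matH j n (g : Matrix (Fin N) (Fin N) ℂ) *
          (starRingEnd ℂ) (matH k m (g : Matrix (Fin N) (Fin N) ℂ))) := by
    intro g
    have hg : ((u * g : Matrix.unitaryGroup (Fin N) ℂ) : Matrix (Fin N) (Fin N) ℂ)
        = z • (g : Matrix (Fin N) (Fin N) ℂ) := by
      rw [Submonoid.coe_mul]
      simp [u]
    rw [hg, matH_smul_aux, matH_smul_aux, map_mul]
    linear_combination (matH j n (g : Matrix (Fin N) (Fin N) ℂ) *
          (starRingEnd ℂ) (matH k m (g : Matrix (Fin N) (Fin N) ℂ))) * hzp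
  simp only [hu] at key
  rw [integral_neg] at key
  exact self_eq_neg.mp key.symm
end
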